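/- Let n∈ℕ, p∈(1,∞), s∈((p−1)/p, 1), q>1 and let Ω⊆ℝⁿ be a bounded open set. Let u:ℝⁿ→ℝ be a local weak solution of (−Δ_p)^s u = f in Ω with f∈L^{pq/(p−1)}_loc(Ω), and assume in addition that u is continuously differentiable on Ω. Then there exists a constant c = c(n,p,s,q) such that for every ball B_{2R}(x_o) whose closure is contained in Ω one has (⨍_{B_R(x_o)} |∇u|^{pq} dx)^{1/q} ≤ c R^{−(1−s)p} |B_{2R}|^{−1} ∬_{B_{2R}(x_o)×B_{2R}(x_o)} |u(x)−u(y)|^p/|x−y|^{n+sp} dx dy + c R^{−(1−s)p} (⨍_{B_{2R}(x_o)} |R^s f|^{pq/(p−1)} dx)^{1/q} + c R^{−p} Tail(u−(u)_{B_{2R}(x_o)}; B_{2R}(x_o))^p. -/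

import Mathlib

open MeasureTheory Metric Set
open scoped ENNReal

noncomputable section

/-- Double Gagliardo integral `∬_{D×D} |u(x)-u(y)|^p / |x-y|^{n+sp} dx dy` in `ℝ≥0∞`. -/
def gagliardoE (n : ℕ) (s p : ℝ) (D : Set (EuclideanSpace ℝ (Fin n)))
    (u : EuclideanSpace ℝ (Fin n) → ℝ) : ℝ≥0∞ :=
  ∫⁻ x in D, ∫⁻ y in D, ENNReal.ofReal (|u x - u y| ^ p / dist x y ^ ((n : ℝ) + s * p))

/-- Nonlocal tail `Tail(u; B_R(x₀))` in `ℝ≥0∞`. -/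
def tailE (n : ℕ) (s p : ℝ) (u : EuclideanSpace ℝ (Fin n) → ℝ)
    (x₀ : EuclideanSpace ℝ (Fin n)) (R : ℝ) : ℝ≥0∞ :=
  (ENNReal.ofReal (R ^ (s * p)) *
      ∫⁻ x in (ball x₀ R)ᶜ,
        ENNReal.ofReal (|u x| ^ (p - 1) / dist x x₀ ^ ((n : ℝ) + s * p))) ^ (1 / (p - 1))

/-- `f ∈ L^q_loc(D)`. -/
def MemLploc (n : ℕ) (q : ℝ) (D : Set (EuclideanSpace ℝ (Fin n)))
    (f : EuclideanSpace ℝ (Fin n) → ℝ) : Prop :=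
  Measurable f ∧
    ∀ K : Set (EuclideanSpace ℝ (Fin n)), K ⊆ D → IsCompact K →
      (∫⁻ x in K, ENNReal.ofReal (|f x| ^ q)) < ⊤

/-- `u` is a local weak solution of `(-Δ_p)^s u = f` in `D`. -/
def IsLocalWeakSolution (n : ℕ) (p s : ℝ) (D : Set (EuclideanSpace ℝ (Fin n)))
    (f u : EuclideanSpace ℝ (Fin n) → ℝ) : Prop :=
  Measurable u ∧
  (∀ K : Set (EuclideanSpace ℝ (Fin n)), K ⊆ D → IsCompact K →
      (∫⁻ x in K, ENNReal.ofReal (|u x| ^ p)) < ⊤ ∧ gagliardoE n s p K u < ⊤) ∧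
  (∫⁻ x, ENNReal.ofReal (|u x| ^ (p - 1) / (1 + ‖x‖) ^ ((n : ℝ) + s * p))) < ⊤ ∧
  ∀ φ : EuclideanSpace ℝ (Fin n) → ℝ, Measurable φ →
    (∃ K : Set (EuclideanSpace ℝ (Fin n)), IsCompact K ∧ K ⊆ D ∧
      ∀ᵐ x, x ∉ K → φ x = 0) →
    (∫⁻ x, ENNReal.ofReal (|φ x| ^ p)) < ⊤ →
    gagliardoE n s p Set.univ φ < ⊤ →
    (∫ x, ∫ y,
        |u x - u y| ^ (p - 2) * (u x - u y) * (φ x - φ y) / dist x y ^ ((n : ℝ) + s * p)) =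
      ∫ x in D, f x * φ x

/-- The signed `γ`-power `𝐚^γ = |a|^{γ-1} a`. -/
def sgnPow (γ a : ℝ) : ℝ := |a| ^ (γ - 1) * a

lemma sgnPow_of_nonneg {θ a : ℝ} (hθ : 0 < θ) (ha : 0 ≤ a) : sgnPow θ a = a ^ θ := by
  unfold sgnPow
  rcases ha.eq_or_lt with rfl | h
  · simp [Real.zero_rpow hθ.ne']
  · rw [abs_of_pos h]
    nth_rewrite 2 [← Real.rpow_one a]
    rw [← Real.rpow_add h]; congr 1; ring

lemma sgnPow_neg (θ a : ℝ) : sgnPow θ (-a) = - sgnPow θ a := by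
  unfold sgnPow; rw [abs_neg]; ring

lemma abs_sgnPow {θ : ℝ} (hθ : 0 < θ) (a : ℝ) : |sgnPow θ a| = |a| ^ θ := by
  rcases le_total 0 a with h | h
  · rw [sgnPow_of_nonneg hθ h, abs_of_nonneg h, abs_of_nonneg (Real.rpow_nonneg h _)]
  · have h' : 0 ≤ -a := by linarith
    have : sgnPow θ a = - (-a) ^ θ := by
      rw [← sgnPow_of_nonneg hθ h', sgnPow_neg]; ring
    rw [this, abs_neg, abs_of_nonpos h, abs_of_nonneg (Real.rpow_nonneg h' _)]

/-- A two-case principle for the signed power. -/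
lemma sgnPow_cases {Q : ℝ → ℝ → Prop} (symm : ∀ a b, Q a b → Q b a)
    (neg : ∀ a b, Q a b → Q (-a) (-b))
    (h1 : ∀ a b, 0 ≤ b → b ≤ a → Q a b) (h2 : ∀ a b, 0 ≤ a → 0 ≤ b → Q a (-b)) (a b : ℝ) :
    Q a b := by
  have key : ∀ a b, b ≤ a → Q a b := by
    intro a b hab
    rcases le_total 0 b with hb | hb
    · exact h1 a b hb hab
    · rcases le_total 0 a with ha | ha
      · have := h2 a (-b) ha (by linarith); simpa using this
      · have := neg _ _ (symm _ _ (h1 (-b) (-a) (by linarith) (by linarith)))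
        simpa using this
  rcases le_total b a with h | h
  · exact key a b h
  · exact symm _ _ (key b a h)

lemma sgnPow_mono {θ : ℝ} (hθ : 0 < θ) : Monotone (sgnPow θ) := by
  intro a b hab
  rcases le_total 0 a with ha | ha
  · rw [sgnPow_of_nonneg hθ ha, sgnPow_of_nonneg hθ (ha.trans hab)]
    exact Real.rpow_le_rpow ha hab hθ.le
  · have e : sgnPow θ a = - (-a) ^ θ := by
      rw [← sgnPow_of_nonneg hθ (by linarith : 0 ≤ -a), sgnPow_neg]; ring
    rcases le_total 0 b with hb | hb
    · rw [e, sgnPow_of_nonneg hθ hb]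
      have := Real.rpow_nonneg (by linarith : 0 ≤ -a) θ
      have := Real.rpow_nonneg hb θ
      linarith
    · have e' : sgnPow θ b = - (-b) ^ θ := by
        rw [← sgnPow_of_nonneg hθ (by linarith : 0 ≤ -b), sgnPow_neg]; ring
      rw [e, e']
      have := Real.rpow_le_rpow (by linarith : 0 ≤ -b) (by linarith : -b ≤ -a) hθ.le
      linarith

lemma sgnPow_mul_nonneg {θ β : ℝ} (hθ : 0 < θ) (hβ : 0 < β) {a b c d : ℝ} (h : a - b = c - d) :
    (sgnPow θ a - sgnPow θ b) * (sgnPow β c - sgnPow β d) =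
      |sgnPow θ a - sgnPow θ b| * |sgnPow β c - sgnPow β d| := by
  rcases le_total b a with hab | hab
  · have h1 := sgnPow_mono hθ hab
    have h2 := sgnPow_mono hβ (by linarith : d ≤ c)
    rw [abs_of_nonneg (by linarith), abs_of_nonneg (by linarith)]
  · have h1 := sgnPow_mono hθ hab
    have h2 := sgnPow_mono hβ (by linarith : c ≤ d)
    rw [abs_of_nonpos (by linarith), abs_of_nonpos (by linarith)]; ring

lemma two_rpow_bound {θ a b : ℝ} (hθ : 0 < θ) (ha : 0 ≤ a) (hb : 0 ≤ b) :
    (a + b) ^ θ ≤ 2 ^ θ * (a ^ θ + b ^ θ) := by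
  have h1 : (a + b) ^ θ ≤ (2 * max a b) ^ θ :=
    Real.rpow_le_rpow (by positivity)
      (by have := le_max_left a b; have := le_max_right a b; linarith) hθ.le
  rw [Real.mul_rpow (by norm_num) (le_max_of_le_left ha)] at h1
  refine h1.trans (mul_le_mul_of_nonneg_left ?_ (by positivity))
  have := Real.rpow_nonneg ha θ
  have := Real.rpow_nonneg hb θ
  rcases max_choice a b with h | h <;> rw [h] <;> linarith

lemma young_pm {θ β x y : ℝ} (hθ : 0 < θ) (hβ : 0 < β) (hx : 0 ≤ x) (hy : 0 ≤ y) :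
    x ^ θ * y ^ β ≤ x ^ (θ + β) + y ^ (θ + β) := by
  have hx' := Real.rpow_nonneg hx (θ + β)
  have hy' := Real.rpow_nonneg hy (θ + β)
  rcases le_total x y with h | h
  · calc x ^ θ * y ^ β ≤ y ^ θ * y ^ β := by gcongr
      _ = y ^ (θ + β) := by rw [Real.rpow_add_of_nonneg hy hθ.le hβ.le]
      _ ≤ _ := by linarith
  · calc x ^ θ * y ^ β ≤ x ^ θ * x ^ β := by gcongr
      _ = x ^ (θ + β) := by rw [Real.rpow_add_of_nonneg hx hθ.le hβ.le]
      _ ≤ _ := by linarith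

lemma one_sub_rpow_bound {θ ε : ℝ} (hθ : 0 < θ) (h0 : 0 ≤ ε) (h1 : ε ≤ 1) :
    min 1 θ * ε ≤ 1 - (1 - ε) ^ θ := by
  rcases le_total 1 θ with h | h
  · rw [min_eq_left h]
    have := Real.rpow_le_rpow_of_exponent_ge' (by linarith : 0 ≤ 1 - ε) (by linarith)
      zero_le_one h
    rw [Real.rpow_one] at this; linarith
  · rw [min_eq_right h]
    have := rpow_one_add_le_one_add_mul_self (s := -ε) (by linarith) hθ.le h
    rw [← sub_eq_add_neg] at this; linarith

lemma sgnPow_low {θ : ℝ} (hθ : 0 < θ) : ∃ c : ℝ, 0 < c ∧ ∀ ε : ℝ, 0 < ε → ε ≤ 1 → ∀ a b : ℝ,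
    ε * (|a| + |b|) ≤ |a - b| → c * ε * |a - b| ^ θ ≤ |sgnPow θ a - sgnPow θ b| := by
  refine ⟨min (min 1 θ) (2 ^ (-θ)), by positivity, ?_⟩
  intro ε h0 h1
  set c := min (min 1 θ) ((2 : ℝ) ^ (-θ)) with hc
  have hcpos : 0 < c := by positivity
  refine sgnPow_cases ?_ ?_ ?_ ?_
  · intro a b h h'
    rw [abs_sub_comm b a, abs_sub_comm (sgnPow θ b)]
    rw [abs_sub_comm b a, add_comm] at h'
    exact h h'
  · intro a b h h'
    have e : -a - -b = -(a - b) := by ring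
    rw [sgnPow_neg, sgnPow_neg, e, abs_neg]
    have e : -sgnPow θ a - -sgnPow θ b = -(sgnPow θ a - sgnPow θ b) := by ring
    rw [e, abs_neg]
    apply h
    have e2 : -a - -b = -(a - b) := by ring
    rwa [abs_neg, abs_neg, e2, abs_neg] at h'
  · intro a b hb hab h
    have ha := hb.trans hab
    rw [abs_of_nonneg ha, abs_of_nonneg hb, abs_of_nonneg (by linarith)] at h
    rw [abs_of_nonneg (by linarith : 0 ≤ a - b), abs_of_nonneg (by linarith [sgnPow_mono hθ hab]),
      sgnPow_of_nonneg hθ ha, sgnPow_of_nonneg hθ hb]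
    have hb2 : b ≤ (1 - ε) * a := by nlinarith
    have h3 : b ^ θ ≤ (1 - ε) ^ θ * a ^ θ := by
      rw [← Real.mul_rpow (by linarith) ha]
      exact Real.rpow_le_rpow hb hb2 hθ.le
    have h4 := one_sub_rpow_bound hθ h0.le h1
    have h5 : (a - b) ^ θ ≤ a ^ θ := Real.rpow_le_rpow (by linarith) (by linarith) hθ.le
    have h6 : 0 ≤ a ^ θ := Real.rpow_nonneg ha _
    calc c * ε * (a - b) ^ θ ≤ min 1 θ * ε * a ^ θ := by
          gcongr; exact min_le_left _ _
      _ ≤ (1 - (1 - ε) ^ θ) * a ^ θ := by gcongr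
      _ ≤ _ := by nlinarith
  · intro a b ha hb _
    rw [sgnPow_neg, sgnPow_of_nonneg hθ ha, sgnPow_of_nonneg hθ hb]
    have hA := Real.rpow_nonneg ha θ
    have hB := Real.rpow_nonneg hb θ
    rw [sub_neg_eq_add, sub_neg_eq_add, abs_of_nonneg (by linarith), abs_of_nonneg (by linarith)]
    have := two_rpow_bound hθ ha hb
    calc c * ε * (a + b) ^ θ ≤ 2 ^ (-θ) * 1 * (2 ^ θ * (a ^ θ + b ^ θ)) := by
          gcongr; exact min_le_right _ _
      _ = _ := by
        rw [Real.rpow_neg (by norm_num)]; field_simp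

lemma sgnPow_low_one {β : ℝ} (hβ : 1 ≤ β) (a b : ℝ) :
    |a - b| ^ β ≤ 2 ^ β * |sgnPow β a - sgnPow β b| := by
  have hβ0 : 0 < β := by linarith
  have h2 : (1 : ℝ) ≤ 2 ^ β := Real.one_le_rpow (by norm_num) hβ0.le
  revert a b
  refine sgnPow_cases ?_ ?_ ?_ ?_
  · intro a b h
    rwa [abs_sub_comm b a, abs_sub_comm (sgnPow β b)]
  · intro a b h
    have e : -a - -b = -(a - b) := by ring
    rw [sgnPow_neg, sgnPow_neg, e, abs_neg]
    have e : -sgnPow β a - -sgnPow β b = -(sgnPow β a - sgnPow β b) := by ring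
    rwa [e, abs_neg]
  · intro a b hb hab
    have ha := hb.trans hab
    rw [abs_of_nonneg (by linarith : 0 ≤ a - b),
      abs_of_nonneg (by linarith [sgnPow_mono hβ0 hab]),
      sgnPow_of_nonneg hβ0 ha, sgnPow_of_nonneg hβ0 hb]
    have := Real.add_rpow_le_rpow_add (by linarith : 0 ≤ a - b) hb hβ
    rw [sub_add_cancel] at this
    have h3 := Real.rpow_nonneg (by linarith : 0 ≤ a - b) β
    nlinarith
  · intro a b ha hb
    rw [sgnPow_neg, sgnPow_of_nonneg hβ0 ha, sgnPow_of_nonneg hβ0 hb]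
    have hA := Real.rpow_nonneg ha β
    have hB := Real.rpow_nonneg hb β
    rw [sub_neg_eq_add, sub_neg_eq_add, abs_of_nonneg (by linarith), abs_of_nonneg (by linarith)]
    exact two_rpow_bound hβ0 ha hb

/-- The key algebraic inequality. -/
lemma key_algebra {θ β : ℝ} (hθ : 0 < θ) (hβ : 1 ≤ β) : ∃ C : ℝ, 0 < C ∧
    ∀ ε : ℝ, 0 < ε → ε ≤ 1 → ∀ a b c d : ℝ, a - b = c - d →
    |a - b| ^ (θ + β) ≤ ε ^ (θ + β) * (|a| + |b|) ^ (θ + β) +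
      C / ε * ((sgnPow θ a - sgnPow θ b) * (sgnPow β c - sgnPow β d)) := by
  obtain ⟨c0, hc0, hlow⟩ := sgnPow_low hθ
  have hβ0 : 0 < β := by linarith
  refine ⟨2 ^ β / c0, by positivity, ?_⟩
  intro ε h0 h1 a b c d h
  rw [sgnPow_mul_nonneg hθ hβ0 h]
  have hm : 0 < θ + β := by linarith
  rcases le_total (|a - b|) (ε * (|a| + |b|)) with hle | hle
  · have := Real.rpow_le_rpow (abs_nonneg _) hle hm.le
    rw [Real.mul_rpow h0.le (by positivity)] at this
    have h3 : 0 ≤ 2 ^ β / c0 / ε * (|sgnPow θ a - sgnPow θ b| * |sgnPow β c - sgnPow β d|) := by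
      positivity
    linarith
  · have h2 := hlow ε h0 h1 a b hle
    have h3 := sgnPow_low_one hβ c d
    rw [← h] at h3
    have h4 : 0 ≤ ε ^ (θ + β) * (|a| + |b|) ^ (θ + β) := by positivity
    have h5 : |a - b| ^ (θ + β) ≤
        2 ^ β / c0 / ε * (|sgnPow θ a - sgnPow θ b| * |sgnPow β c - sgnPow β d|) := by
      rw [Real.rpow_add_of_nonneg (abs_nonneg _) hθ.le hβ0.le]
      calc |a - b| ^ θ * |a - b| ^ β
          ≤ (|sgnPow θ a - sgnPow θ b| / (c0 * ε)) * (2 ^ β * |sgnPow β c - sgnPow β d|) := by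
            gcongr
            rw [le_div_iff₀ (by positivity)]; linarith
        _ = _ := by field_simp
    linarith

/-- Euclidean space. -/
abbrev Eu (n : ℕ) := EuclideanSpace ℝ (Fin n)

lemma ofReal_abs_rpow {m : ℝ} (hm : 0 ≤ m) (a : ℝ) : ENNReal.ofReal (|a| ^ m) = ‖a‖ₑ ^ m := by
  rw [← ENNReal.ofReal_rpow_of_nonneg (abs_nonneg a) hm, Real.enorm_eq_ofReal_abs]

lemma ofReal_norm_rpow {F : Type*} [NormedAddCommGroup F] {m : ℝ} (hm : 0 ≤ m) (a : F) :
    ENNReal.ofReal (‖a‖ ^ m) = ‖a‖ₑ ^ m := by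
  rw [← ENNReal.ofReal_rpow_of_nonneg (norm_nonneg a) hm, ofReal_norm]

/-- The Jensen inequality for powers. -/
lemma jensen_pow {α : Type*} [MeasurableSpace α] {μ : Measure α} {f : α → ℝ≥0∞}
    (hf : AEMeasurable f μ) {q : ℝ} (hq : 1 ≤ q) :
    (∫⁻ x, f x ∂μ) ^ q ≤ μ univ ^ (q - 1) * ∫⁻ x, f x ^ q ∂μ := by
  have h := eLpNorm'_le_eLpNorm'_mul_rpow_measure_univ (μ := μ) (f := f) one_pos hq
    hf.aestronglyMeasurable
  have hq0 : 0 < q := by linarith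
  simp only [eLpNorm'_eq_lintegral_enorm, enorm_eq_self, ENNReal.rpow_one, div_one] at h
  calc (∫⁻ x, f x ∂μ) ^ q ≤ ((∫⁻ a, f a ^ q ∂μ) ^ (1 / q) * μ univ ^ (1 - 1 / q)) ^ q := by
        gcongr
    _ = μ univ ^ (q - 1) * ∫⁻ x, f x ^ q ∂μ := by
        rw [ENNReal.mul_rpow_of_nonneg _ _ hq0.le, ← ENNReal.rpow_mul, ← ENNReal.rpow_mul, mul_comm]
        congr 2
        · field_simp
        · rw [one_div, inv_mul_cancel₀ hq0.ne', ENNReal.rpow_one]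

lemma pointwise_ftc {n : ℕ} {v : Eu n → ℝ} {Ω B : Set (Eu n)} (hΩ : IsOpen Ω)
    (hv : ContDiffOn ℝ 1 v Ω) (hB : Convex ℝ B) (hBΩ : B ⊆ Ω) {x z : Eu n} (hx : x ∈ B)
    (hxz : x + z ∈ B) {m : ℝ} (hm : 1 ≤ m) :
    ‖v (x + z) - v x‖ₑ ^ m ≤ ‖z‖ₑ ^ m * ∫⁻ t in Icc (0:ℝ) 1,
      B.indicator (fun y => ‖fderiv ℝ v y‖ₑ ^ m) (x + t • z) := by
  have hseg : ∀ t ∈ Icc (0:ℝ) 1, x + t • z ∈ B := by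
    intro t ht
    have := hB hx hxz (by linarith [ht.2] : 0 ≤ 1 - t) ht.1 (by ring)
    convert this using 1
    module
  have hcont : ContinuousOn (fderiv ℝ v) Ω := hv.continuousOn_fderiv_of_isOpen hΩ le_rfl
  have hd : ∀ t ∈ Icc (0:ℝ) 1, HasDerivAt (fun t : ℝ => v (x + t • z))
      (fderiv ℝ v (x + t • z) z) t := by
    intro t ht
    have h1 : DifferentiableAt ℝ v (x + t • z) :=
      (hv.differentiableOn (by norm_num)).differentiableAt (hΩ.mem_nhds (hBΩ (hseg t ht)))
    have h2 : HasDerivAt (fun t : ℝ => x + t • z) z t := by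
      simpa using ((hasDerivAt_id t).smul_const z).const_add x
    exact h1.hasFDerivAt.comp_hasDerivAt t h2
  have hcd : ContinuousOn (fun t : ℝ => fderiv ℝ v (x + t • z) z) (Icc 0 1) := by
    have : ContinuousOn (fun t : ℝ => fderiv ℝ v (x + t • z)) (Icc 0 1) :=
      hcont.comp (by fun_prop) (fun t ht => hBΩ (hseg t ht))
    exact this.clm_apply continuousOn_const
  have hftc : v (x + z) - v x = ∫ t in (0:ℝ)..1, fderiv ℝ v (x + t • z) z := by
    rw [intervalIntegral.integral_eq_sub_of_hasDerivAt (f := fun t : ℝ => v (x + t • z))]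
    · simp
    · intro t ht
      rw [uIcc_of_le zero_le_one] at ht
      exact hd t ht
    · apply ContinuousOn.intervalIntegrable
      rwa [uIcc_of_le zero_le_one]
  have hm0 : 0 ≤ m := by linarith
  have hmeas : AEMeasurable (fun t : ℝ => ‖fderiv ℝ v (x + t • z)‖ₑ)
      (volume.restrict (Icc (0:ℝ) 1)) := by
    have := (measurable_fderiv ℝ v).enorm.comp
      (by fun_prop : Measurable (fun t : ℝ => x + t • z))
    exact this.aemeasurable
  have h1 : ‖v (x + z) - v x‖ₑ ≤ (∫⁻ t in Icc (0:ℝ) 1, ‖fderiv ℝ v (x + t • z)‖ₑ) * ‖z‖ₑ := by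
    rw [hftc, intervalIntegral.integral_of_le zero_le_one, ← integral_Icc_eq_integral_Ioc]
    refine (enorm_integral_le_lintegral_enorm _).trans ?_
    rw [← lintegral_mul_const'' _ hmeas]
    refine lintegral_mono fun t => ?_
    exact (fderiv ℝ v (x + t • z)).le_opENorm z
  calc ‖v (x + z) - v x‖ₑ ^ m ≤ ((∫⁻ t in Icc (0:ℝ) 1, ‖fderiv ℝ v (x + t • z)‖ₑ) * ‖z‖ₑ) ^ m := by
        gcongr
    _ = ‖z‖ₑ ^ m * (∫⁻ t in Icc (0:ℝ) 1, ‖fderiv ℝ v (x + t • z)‖ₑ) ^ m := by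
        rw [ENNReal.mul_rpow_of_nonneg _ _ hm0, mul_comm]
    _ ≤ ‖z‖ₑ ^ m * ∫⁻ t in Icc (0:ℝ) 1, ‖fderiv ℝ v (x + t • z)‖ₑ ^ m := by
        gcongr
        have := jensen_pow hmeas hm
        simpa using this
    _ = _ := by
        congr 1
        refine setLIntegral_congr_fun measurableSet_Icc fun t ht => ?_
        rw [indicator_of_mem (hseg t ht)]

/-- Translation estimate on convex sets. -/
lemma trans_est {n : ℕ} {v : Eu n → ℝ} {Ω B : Set (Eu n)} (hΩ : IsOpen Ω)
    (hv : ContDiffOn ℝ 1 v Ω) (hB : Convex ℝ B) (hBm : MeasurableSet B) (hBΩ : B ⊆ Ω)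
    (z : Eu n) {m : ℝ} (hm : 1 ≤ m) :
    ∫⁻ x in {x | x ∈ B ∧ x + z ∈ B}, ENNReal.ofReal (|v (x + z) - v x| ^ m) ≤
      ENNReal.ofReal (‖z‖ ^ m) * ∫⁻ x in B, ENNReal.ofReal (‖fderiv ℝ v x‖ ^ m) := by
  have hm0 : 0 ≤ m := by linarith
  simp only [ofReal_abs_rpow hm0, ofReal_norm_rpow hm0]
  have hS : MeasurableSet {x | x ∈ B ∧ x + z ∈ B} :=
    hBm.inter ((measurable_add_const z) hBm)
  have hG : Measurable (B.indicator (fun y => ‖fderiv ℝ v y‖ₑ ^ m)) :=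
    ((measurable_fderiv ℝ v).enorm.pow_const m).indicator hBm
  calc ∫⁻ x in {x | x ∈ B ∧ x + z ∈ B}, ‖v (x + z) - v x‖ₑ ^ m
      ≤ ∫⁻ x in {x | x ∈ B ∧ x + z ∈ B}, ‖z‖ₑ ^ m * ∫⁻ t in Icc (0:ℝ) 1,
      B.indicator (fun y => ‖fderiv ℝ v y‖ₑ ^ m) (x + t • z) := by
        refine setLIntegral_mono' hS fun x hx => ?_
        exact pointwise_ftc hΩ hv hB hBΩ hx.1 hx.2 hm
    _ ≤ ∫⁻ x, ‖z‖ₑ ^ m * ∫⁻ t in Icc (0:ℝ) 1,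
      B.indicator (fun y => ‖fderiv ℝ v y‖ₑ ^ m) (x + t • z) := setLIntegral_le_lintegral _ _
    _ = ‖z‖ₑ ^ m * ∫⁻ x, ∫⁻ t in Icc (0:ℝ) 1,
      B.indicator (fun y => ‖fderiv ℝ v y‖ₑ ^ m) (x + t • z) := by
        rw [lintegral_const_mul']
        exact ENNReal.rpow_ne_top_of_nonneg hm0 (by simp)
    _ = ‖z‖ₑ ^ m * ∫⁻ t in Icc (0:ℝ) 1, ∫⁻ x,
      B.indicator (fun y => ‖fderiv ℝ v y‖ₑ ^ m) (x + t • z) := by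
        congr 1
        apply lintegral_lintegral_swap
        apply Measurable.aemeasurable
        exact hG.comp (by fun_prop : Measurable (fun p : Eu n × ℝ => p.1 + p.2 • z))
    _ = ‖z‖ₑ ^ m * ∫⁻ x in B, ‖fderiv ℝ v x‖ₑ ^ m := by
        congr 1
        simp_rw [lintegral_add_right_eq_self
          (fun x => B.indicator (fun y => ‖fderiv ℝ v y‖ₑ ^ m) x)]
        rw [lintegral_indicator hBm]
        simp

/-- Fubini in difference variables. -/
lemma lintegral_pairs {n : ℕ} {f : Eu n × Eu n → ℝ≥0∞} (hf : Measurable f) :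
    ∫⁻ p, f p = ∫⁻ z, ∫⁻ x, f (x, x + z) := by
  rw [Measure.volume_eq_prod, lintegral_prod _ hf.aemeasurable]
  have : ∀ x : Eu n, ∫⁻ y, f (x, y) = ∫⁻ z, f (x, x + z) := fun x =>
    (lintegral_add_left_eq_self (fun y => f (x, y)) x).symm
  simp_rw [this]
  apply lintegral_lintegral_swap
  exact (hf.comp (by fun_prop : Measurable (fun p : Eu n × Eu n => (p.1, p.1 + p.2)))).aemeasurable

lemma pairs_est {n : ℕ} {v : Eu n → ℝ} {Ω B : Set (Eu n)} (hvm : Measurable v) (hΩ : IsOpen Ω)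
    (hv : ContDiffOn ℝ 1 v Ω) (hB : Convex ℝ B) (hBm : MeasurableSet B) (hBΩ : B ⊆ Ω)
    {m : ℝ} (hm : 1 ≤ m) {k : Eu n → ℝ≥0∞} (hk : Measurable k) :
    ∫⁻ p in B ×ˢ B, k (p.2 - p.1) * ENNReal.ofReal (|v p.2 - v p.1| ^ m) ≤
      (∫⁻ z, k z * ENNReal.ofReal (‖z‖ ^ m)) * ∫⁻ x in B, ENNReal.ofReal (‖fderiv ℝ v x‖ ^ m) := by
  have hmeas : Measurable (fun p : Eu n × Eu n =>
      k (p.2 - p.1) * ENNReal.ofReal (|v p.2 - v p.1| ^ m)) := by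
    have h1 : Measurable (fun p : Eu n × Eu n => k (p.2 - p.1)) :=
      hk.comp (by fun_prop)
    have h2 : Measurable (fun p : Eu n × Eu n => |v p.2 - v p.1|) := by
      have := (hvm.comp measurable_snd).sub (hvm.comp (measurable_fst (β := Eu n)))
      exact this.abs
    exact h1.mul (h2.pow_const m).ennreal_ofReal
  rw [← lintegral_indicator (hBm.prod hBm), lintegral_pairs (hmeas.indicator (hBm.prod hBm)),
    ← lintegral_mul_const _ (by fun_prop)]
  refine lintegral_mono fun z => ?_
  have hS : MeasurableSet {x | x ∈ B ∧ x + z ∈ B} :=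
    hBm.inter ((measurable_add_const z) hBm)
  calc _ = ∫⁻ x, {x | x ∈ B ∧ x + z ∈ B}.indicator
        (fun x => k z * ENNReal.ofReal (|v (x + z) - v x| ^ m)) x := by
        refine lintegral_congr fun x => ?_
        by_cases h : x ∈ B ∧ x + z ∈ B
        · rw [indicator_of_mem (by exact h), indicator_of_mem (by exact ⟨h.1, h.2⟩)]
          simp
        · rw [indicator_of_notMem (by exact h), indicator_of_notMem (by exact fun h' => h ⟨h'.1, h'.2⟩)]
    _ = k z * ∫⁻ x in {x | x ∈ B ∧ x + z ∈ B}, ENNReal.ofReal (|v (x + z) - v x| ^ m) := by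
        rw [lintegral_indicator hS, lintegral_const_mul]
        have := (hvm.comp (measurable_add_const z)).sub hvm
        exact (this.abs.pow_const m).ennreal_ofReal
    _ ≤ _ := by
        rw [mul_assoc]
        gcongr
        exact trans_est hΩ hv hB hBm hBΩ z hm

lemma kernel_finite {n : ℕ} (hn : 1 ≤ n) {a : ℝ} (ha : -(n:ℝ) < a) (r : ℝ) :
    ∫⁻ z in ball (0 : Eu n) r, ENNReal.ofReal (‖z‖ ^ a) < ⊤ := by
  have h : IntegrableOn (fun z : Eu n => ‖z‖ ^ a) (ball 0 r) := by
    refine integrableOn_ball_of_norm_le_rpow (α := -a) (C := 1) (by simpa using hn)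
      (by simp; linarith) (ae_of_all _ fun x => ?_) ?_
    · rw [neg_neg, one_mul, Real.norm_of_nonneg (by positivity)]
    · exact (measurable_norm.pow_const a).aestronglyMeasurable
  have := h.2
  rw [HasFiniteIntegral] at this
  convert this using 2 with z
  ext z
  rw [Real.enorm_of_nonneg (by positivity)]

lemma ofReal_mul4 {a b : ℝ} (ha : 0 ≤ a) : ENNReal.ofReal (a * b) =
    ENNReal.ofReal a * ENNReal.ofReal b := ENNReal.ofReal_mul ha

lemma tail_shift {n : ℕ} {θ p N : ℝ} (hθ : 0 < θ) (hθp : θ ≤ p) (hN : 0 < N) :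
    ∃ C : ℝ≥0∞, C ≠ ⊤ ∧ ∀ v : Eu n → ℝ, Measurable v →
      (∫⁻ x in ball 0 2, ENNReal.ofReal (|v x| ^ p)) ≤ 1 →
      (∫⁻ x in (ball 0 2)ᶜ, ENNReal.ofReal (|v x| ^ θ / ‖x‖ ^ N)) ≤ 1 →
      ∀ h : Eu n, ‖h‖ ≤ 1 →
      ∫⁻ y, ENNReal.ofReal (|v (y + h)| ^ θ * (1 + ‖y‖) ^ (-N)) ≤ C := by
  refine ⟨ENNReal.ofReal (2 ^ N) * ((volume (ball (0 : Eu n) 2) + 1) + 1), ?_, ?_⟩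
  · have : volume (ball (0 : Eu n) 2) ≠ ⊤ := measure_ball_lt_top.ne
    finiteness
  intro v hv hU hT h hh
  have hstep : ∀ y : Eu n, ENNReal.ofReal (|v (y + h)| ^ θ * (1 + ‖y‖) ^ (-N)) ≤
      ENNReal.ofReal (2 ^ N) * ENNReal.ofReal (|v (y + h)| ^ θ * (1 + ‖y + h‖) ^ (-N)) := by
    intro y
    rw [← ENNReal.ofReal_mul (by positivity)]
    apply ENNReal.ofReal_le_ofReal
    have h1 : (1 + ‖y + h‖) / 2 ≤ 1 + ‖y‖ := by
      have := norm_add_le y h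
      have := norm_nonneg y
      linarith
    have h2 : (1 + ‖y‖) ^ (-N) ≤ ((1 + ‖y + h‖) / 2) ^ (-N) :=
      Real.rpow_le_rpow_of_nonpos (by positivity) h1 (by linarith)
    rw [Real.div_rpow (by positivity) (by norm_num), Real.rpow_neg (by norm_num : (0:ℝ) ≤ 2),
      div_inv_eq_mul] at h2
    calc |v (y + h)| ^ θ * (1 + ‖y‖) ^ (-N)
        ≤ |v (y + h)| ^ θ * ((1 + ‖y + h‖) ^ (-N) * 2 ^ N) := by gcongr
      _ = _ := by ring
  refine (lintegral_mono hstep).trans ?_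
  rw [lintegral_const_mul' _ _ (by finiteness)]
  gcongr
  rw [lintegral_add_right_eq_self (fun y => ENNReal.ofReal (|v y| ^ θ * (1 + ‖y‖) ^ (-N))) h,
    ← lintegral_add_compl _ (measurableSet_ball (x := (0 : Eu n)) (ε := 2))]
  refine add_le_add ?_ ?_
  · calc ∫⁻ y in ball (0 : Eu n) 2, ENNReal.ofReal (|v y| ^ θ * (1 + ‖y‖) ^ (-N))
        ≤ ∫⁻ y in ball (0 : Eu n) 2, (1 + ENNReal.ofReal (|v y| ^ p)) := by
          refine lintegral_mono fun y => ?_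
          rw [← ENNReal.ofReal_one, ← ENNReal.ofReal_add (by norm_num) (by positivity)]
          apply ENNReal.ofReal_le_ofReal
          have h1 : (1 + ‖y‖) ^ (-N) ≤ 1 :=
            Real.rpow_le_one_of_one_le_of_nonpos (by linarith [norm_nonneg y]) (by linarith)
          have h2 : |v y| ^ θ ≤ 1 + |v y| ^ p := by
            rcases le_total (|v y|) 1 with h | h
            · have := Real.rpow_le_one (abs_nonneg (v y)) h hθ.le
              have := Real.rpow_nonneg (abs_nonneg (v y)) p
              linarith
            · have := Real.rpow_le_rpow_of_exponent_le h hθp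
              linarith
          calc _ ≤ |v y| ^ θ * 1 := by gcongr
            _ ≤ _ := by linarith
      _ ≤ _ := by
          rw [lintegral_add_left measurable_const]
          simp only [lintegral_const, Measure.restrict_apply MeasurableSet.univ, univ_inter, one_mul]
          gcongr
  · refine le_trans ?_ hT
    refine setLIntegral_mono' measurableSet_ball.compl fun y hy => ?_
    apply ENNReal.ofReal_le_ofReal
    have hy2 : 2 ≤ ‖y‖ := by simpa using hy
    rw [div_eq_mul_inv, ← Real.rpow_neg (norm_nonneg y)]
    gcongr ?_ * ?_
    exact Real.rpow_le_rpow_of_nonpos (by linarith) (by linarith) (by linarith)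

lemma far_pt {n : ℕ} {θ N a d : ℝ} (hθ : 0 < θ) (hN : 0 < N) (hd : 0 < d)
    (hd1 : d ≤ 1) (ha : a ≤ 2) {V ψ : Eu n → ℝ} (hψ : ∀ x, a ≤ ‖x‖ → ψ x = 0) (x y : Eu n)
    (hx : ‖x‖ < a) (hy : a + d ≤ ‖y‖) :
    |V x - V y| ^ θ * |ψ x - ψ y| / dist x y ^ N ≤ 2 ^ θ * (4 / d) ^ N *
      ((|V x| ^ θ * |ψ x|) * (1 + ‖y‖) ^ (-N) + |ψ x| * (|V y| ^ θ * (1 + ‖y‖) ^ (-N))) := by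
  rw [hψ y (by linarith), sub_zero]
  have h1 : d ≤ dist x y := by
    rw [dist_eq_norm]
    have := norm_sub_norm_le y x
    rw [norm_sub_rev] at this; linarith
  have h2 : (1 + ‖y‖) / (4 / d) ≤ dist x y := by
    have h3 : ‖y‖ ≤ 2 + dist x y := by
      have := norm_sub_norm_le y x
      rw [norm_sub_rev, ← dist_eq_norm] at this; linarith
    rw [div_div_eq_mul_div, div_le_iff₀ (by norm_num)]
    nlinarith
  have h3 : (dist x y ^ N)⁻¹ ≤ (4 / d) ^ N * (1 + ‖y‖) ^ (-N) := by
    have h4 : ((1 + ‖y‖) / (4 / d)) ^ N ≤ dist x y ^ N :=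
      Real.rpow_le_rpow (by positivity) h2 hN.le
    rw [Real.div_rpow (by positivity) (by positivity)] at h4
    rw [Real.rpow_neg (by positivity)]
    calc (dist x y ^ N)⁻¹ ≤ ((1 + ‖y‖) ^ N / (4 / d) ^ N)⁻¹ := by
          gcongr
      _ = _ := by rw [inv_div, div_eq_mul_inv]
  have h5 : |V x - V y| ^ θ ≤ 2 ^ θ * (|V x| ^ θ + |V y| ^ θ) :=
    (Real.rpow_le_rpow (abs_nonneg _) (abs_sub _ _) hθ.le).trans
      (two_rpow_bound hθ (abs_nonneg _) (abs_nonneg _))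
  calc |V x - V y| ^ θ * |ψ x| / dist x y ^ N
      = |V x - V y| ^ θ * |ψ x| * (dist x y ^ N)⁻¹ := by rw [div_eq_mul_inv]
    _ ≤ (2 ^ θ * (|V x| ^ θ + |V y| ^ θ)) * |ψ x| * ((4 / d) ^ N * (1 + ‖y‖) ^ (-N)) := by
        gcongr
    _ = _ := by ring

/-- Estimate for the far part of the nonlocal form. -/
lemma far_est {n : ℕ} {θ N a d : ℝ} (hθ : 0 < θ) (hN : 0 < N) (hd : 0 < d)
    (hd1 : d ≤ 1) (ha : a ≤ 2) {V ψ : Eu n → ℝ} (hV : Measurable V) (hψm : Measurable ψ)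
    (hψ : ∀ x, a ≤ ‖x‖ → ψ x = 0) :
    ∫⁻ p in (ball (0 : Eu n) (a + d) ×ˢ ball (0 : Eu n) (a + d))ᶜ,
      ENNReal.ofReal (|V p.1 - V p.2| ^ θ * |ψ p.1 - ψ p.2| / dist p.1 p.2 ^ N) ≤
    2 * (ENNReal.ofReal (2 ^ θ * (4 / d) ^ N) *
      ((∫⁻ x, ENNReal.ofReal (|V x| ^ θ * |ψ x|)) *
          (∫⁻ y : Eu n, ENNReal.ofReal ((1 + ‖y‖) ^ (-N))) +
        (∫⁻ x, ENNReal.ofReal |ψ x|) *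
          ∫⁻ y, ENNReal.ofReal (|V y| ^ θ * (1 + ‖y‖) ^ (-N)))) := by
  set A : Eu n × Eu n → ℝ≥0∞ := fun p => ENNReal.ofReal (2 ^ θ * (4 / d) ^ N) *
      (ENNReal.ofReal (|V p.1| ^ θ * |ψ p.1|) * ENNReal.ofReal ((1 + ‖p.2‖) ^ (-N)) +
       ENNReal.ofReal |ψ p.1| * ENNReal.ofReal (|V p.2| ^ θ * (1 + ‖p.2‖) ^ (-N))) with hA
  have m1 : Measurable fun x => ENNReal.ofReal (|V x| ^ θ * |ψ x|) := by fun_prop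
  have m2 : Measurable fun y : Eu n => ENNReal.ofReal ((1 + ‖y‖) ^ (-N)) := by fun_prop
  have m3 : Measurable fun x => ENNReal.ofReal |ψ x| := by fun_prop
  have m4 : Measurable fun y => ENNReal.ofReal (|V y| ^ θ * (1 + ‖y‖) ^ (-N)) := by fun_prop
  have hAm : Measurable A := by fun_prop
  have hAint : ∫⁻ p, A p = ENNReal.ofReal (2 ^ θ * (4 / d) ^ N) *
      ((∫⁻ x, ENNReal.ofReal (|V x| ^ θ * |ψ x|)) *
          (∫⁻ y : Eu n, ENNReal.ofReal ((1 + ‖y‖) ^ (-N))) +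
        (∫⁻ x, ENNReal.ofReal |ψ x|) *
          ∫⁻ y, ENNReal.ofReal (|V y| ^ θ * (1 + ‖y‖) ^ (-N))) := by
    rw [hA, lintegral_const_mul _ (by fun_prop), lintegral_add_left (by fun_prop),
      Measure.volume_eq_prod, lintegral_prod_mul m1.aemeasurable m2.aemeasurable,
      lintegral_prod_mul m3.aemeasurable m4.aemeasurable]
  have hAswap : ∫⁻ p : Eu n × Eu n, A p.swap = ∫⁻ p, A p := by
    rw [Measure.volume_eq_prod]
    exact lintegral_prod_swap A
  have hb : ∀ x y : Eu n, ‖x‖ < a → a + d ≤ ‖y‖ →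
      ENNReal.ofReal (|V x - V y| ^ θ * |ψ x - ψ y| / dist x y ^ N) ≤ A (x, y) := by
    intro x y hx hy
    rw [hA]
    simp only
    rw [← ENNReal.ofReal_mul (by positivity), ← ENNReal.ofReal_mul (by positivity),
      ← ENNReal.ofReal_add (by positivity) (by positivity), ← ENNReal.ofReal_mul (by positivity)]
    exact ENNReal.ofReal_le_ofReal (far_pt hθ hN hd hd1 ha hψ x y hx hy)
  calc _ ≤ ∫⁻ p in (ball (0 : Eu n) (a + d) ×ˢ ball (0 : Eu n) (a + d))ᶜ, (A p + A p.swap) := by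
        refine setLIntegral_mono' (measurableSet_ball.prod measurableSet_ball).compl ?_
        rintro ⟨x, y⟩ hp
        simp only [mem_compl_iff, mem_prod, mem_ball_zero_iff, not_and_or, not_lt] at hp
        simp only [Prod.swap_prod_mk]
        by_cases hx : ‖x‖ < a
        · have hy : a + d ≤ ‖y‖ := by
            rcases hp with h | h
            · linarith
            · exact h
          exact (hb x y hx hy).trans le_self_add
        · by_cases hy : ‖y‖ < a
          · have hx' : a + d ≤ ‖x‖ := by
              rcases hp with h | h
              · exact h
              · linarith
            have := hb y x hy hx'
            rw [abs_sub_comm (V y), abs_sub_comm (ψ y), dist_comm] at this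
            exact this.trans le_add_self
          · rw [hψ x (not_lt.1 hx), hψ y (not_lt.1 hy)]
            simp
    _ ≤ ∫⁻ p, (A p + A p.swap) := setLIntegral_le_lintegral _ _
    _ = _ := by
        rw [lintegral_add_left hAm, hAswap, hAint, two_mul]

lemma swap_set_lintegral {n : ℕ} (B : Set (Eu n)) (hB : MeasurableSet B)
    (f : Eu n × Eu n → ℝ≥0∞) :
    ∫⁻ p in B ×ˢ B, f p.swap = ∫⁻ p in B ×ˢ B, f p := by
  rw [← lintegral_indicator (hB.prod hB), ← lintegral_indicator (hB.prod hB),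
    Measure.volume_eq_prod, ← lintegral_prod_swap ((B ×ˢ B).indicator f)]
  refine lintegral_congr fun p => ?_
  by_cases h : p ∈ B ×ˢ B
  · rw [indicator_of_mem h, indicator_of_mem]
    exact ⟨h.2, h.1⟩
  · rw [indicator_of_notMem h, indicator_of_notMem]
    exact fun h' => h ⟨h'.2, h'.1⟩

/-- Convolution-type estimate on a ball of radius at most two. -/
lemma conv_est {n : ℕ} {b : ℝ} (hb : b ≤ 2) {g : Eu n → ℝ≥0∞} (hg : Measurable g) (e : ℝ) :
    ∫⁻ p in ball (0 : Eu n) b ×ˢ ball (0 : Eu n) b, ENNReal.ofReal (dist p.1 p.2 ^ e) * g p.1 ≤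
      (∫⁻ z in ball (0 : Eu n) 4, ENNReal.ofReal (‖z‖ ^ e)) * ∫⁻ x in ball 0 b, g x := by
  have hBm : MeasurableSet (ball (0 : Eu n) b) := measurableSet_ball
  have hmeas : Measurable (fun p : Eu n × Eu n => ENNReal.ofReal (dist p.1 p.2 ^ e) * g p.1) := by
    fun_prop
  rw [← lintegral_indicator (hBm.prod hBm), lintegral_pairs (hmeas.indicator (hBm.prod hBm)),
    ← lintegral_mul_const _ (by fun_prop), ← lintegral_indicator measurableSet_ball]
  refine lintegral_mono fun z => ?_
  by_cases hz : z ∈ ball (0 : Eu n) 4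
  · rw [indicator_of_mem hz, ← lintegral_const_mul _ hg, ← lintegral_indicator hBm]
    refine lintegral_mono fun x => ?_
    by_cases h : x ∈ ball (0 : Eu n) b ∧ x + z ∈ ball (0 : Eu n) b
    · rw [indicator_of_mem (by exact ⟨h.1, h.2⟩), indicator_of_mem h.1]
      simp
    · rw [indicator_of_notMem (by exact fun h' => h ⟨h'.1, h'.2⟩)]
      exact zero_le
  · rw [indicator_of_notMem hz]
    simp only [nonpos_iff_eq_zero]
    rw [lintegral_eq_zero_iff' (by
      apply Measurable.aemeasurable
      exact (hmeas.indicator (hBm.prod hBm)).comp (by fun_prop : Measurable fun x : Eu n => (x, x + z)))]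
    refine ae_of_all _ fun x => ?_
    show (ball (0 : Eu n) b ×ˢ ball (0 : Eu n) b).indicator _ (x, x + z) = 0
    rw [indicator_of_notMem]
    rintro ⟨h1, h2⟩
    apply hz
    simp only [mem_ball_zero_iff] at h1 h2 ⊢
    have : ‖z‖ ≤ ‖x + z‖ + ‖x‖ := by
      have := norm_sub_le (x + z) x; simpa using this
    linarith

lemma near_est {n : ℕ} {θ β N b t : ℝ} (hθ : 0 < θ) (hβ : 1 ≤ β) (hb : b ≤ 2) (ht : 0 < t)
    {V w : Eu n → ℝ} (hV : Measurable V) (hw : Measurable w) {Ω : Set (Eu n)} (hΩ : IsOpen Ω)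
    (hBΩ : ball 0 b ⊆ Ω) (hC : ContDiffOn ℝ 1 V Ω) :
    ∫⁻ p in ball (0 : Eu n) b ×ˢ ball (0 : Eu n) b,
      ENNReal.ofReal (|V p.1 - V p.2| ^ θ * |w p.1| ^ β * dist p.1 p.2 / dist p.1 p.2 ^ N) ≤
    ENNReal.ofReal (t ^ β) * ((∫⁻ z in ball (0 : Eu n) 4, ENNReal.ofReal (‖z‖ ^ (1 + θ - N))) *
      ((∫⁻ x in ball 0 b, ENNReal.ofReal (‖fderiv ℝ V x‖ ^ (θ + β))) +
        ENNReal.ofReal (t ^ (-(θ + β))) * ∫⁻ x in ball 0 b, ENNReal.ofReal (|w x| ^ (θ + β)))) := by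
  have hβ0 : 0 < β := by linarith
  set m := θ + β with hm
  have hm1 : 1 ≤ m := by linarith
  have hBm : MeasurableSet (ball (0 : Eu n) b) := measurableSet_ball
  set k : Eu n → ℝ≥0∞ := (ball (0 : Eu n) 4).indicator (fun z => ENNReal.ofReal (‖z‖ ^ (1 + θ - N - m))) with hk
  have hkm : Measurable k := Measurable.indicator (by fun_prop) measurableSet_ball
  have hpt : ∀ p ∈ ball (0 : Eu n) b ×ˢ ball (0 : Eu n) b,
      ENNReal.ofReal (|V p.1 - V p.2| ^ θ * |w p.1| ^ β * dist p.1 p.2 / dist p.1 p.2 ^ N) ≤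
      ENNReal.ofReal (t ^ β) * (k (p.2 - p.1) * ENNReal.ofReal (|V p.2 - V p.1| ^ m) +
        ENNReal.ofReal (dist p.1 p.2 ^ (1 + θ - N)) *
          (ENNReal.ofReal (t ^ (-m)) * ENNReal.ofReal (|w p.1| ^ m))) := by
    rintro ⟨x, y⟩ ⟨hx, hy⟩
    simp only [mem_ball_zero_iff] at hx hy
    simp only
    rcases eq_or_ne x y with rfl | hxy
    · simp [Real.zero_rpow hθ.ne']
    have hr : 0 < dist x y := dist_pos.2 hxy
    have hz : y - x ∈ ball (0 : Eu n) 4 := by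
      rw [mem_ball_zero_iff]
      have := norm_sub_le y x; linarith
    rw [hk, indicator_of_mem hz, ← ENNReal.ofReal_mul (by positivity),
      ← ENNReal.ofReal_mul (by positivity), ← ENNReal.ofReal_mul (by positivity),
      ← ENNReal.ofReal_add (by positivity) (by positivity), ← ENNReal.ofReal_mul (by positivity)]
    apply ENNReal.ofReal_le_ofReal
    rw [← dist_eq_norm, dist_comm y x, abs_sub_comm (V y)]
    set r := dist x y
    have hy := young_pm hθ hβ0 (x := |V x - V y| / r) (y := |w x| / t) (by positivity)
      (by positivity)
    rw [Real.div_rpow (abs_nonneg _) hr.le, Real.div_rpow (abs_nonneg _) ht.le,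
      Real.div_rpow (abs_nonneg _) hr.le, Real.div_rpow (abs_nonneg _) ht.le, ← hm] at hy
    have hmul := mul_le_mul_of_nonneg_left hy (by positivity : 0 ≤ t ^ β * r ^ (1 + θ - N))
    have e1 : t ^ β * r ^ (1 + θ - N) * (|V x - V y| ^ θ / r ^ θ * (|w x| ^ β / t ^ β)) =
        |V x - V y| ^ θ * |w x| ^ β * r / r ^ N := by
      rw [Real.rpow_sub hr, Real.rpow_add hr, Real.rpow_one]
      have := Real.rpow_pos_of_pos hr N
      have := Real.rpow_pos_of_pos hr θ
      have := Real.rpow_pos_of_pos ht β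
      field_simp
    have e2 : t ^ β * r ^ (1 + θ - N) * (|V x - V y| ^ m / r ^ m + |w x| ^ m / t ^ m) =
        t ^ β * (r ^ (1 + θ - N - m) * |V x - V y| ^ m +
          r ^ (1 + θ - N) * (t ^ (-m) * |w x| ^ m)) := by
      rw [Real.rpow_sub hr _ m, Real.rpow_neg ht.le]
      have := Real.rpow_pos_of_pos hr m
      have := Real.rpow_pos_of_pos ht m
      field_simp
    linarith
  refine (setLIntegral_mono' (hBm.prod hBm) hpt).trans ?_
  have hfm : Measurable (fun p : Eu n × Eu n =>
      k (p.2 - p.1) * ENNReal.ofReal (|V p.2 - V p.1| ^ m)) := by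
    have h1 : Measurable (fun p : Eu n × Eu n => k (p.2 - p.1)) := hkm.comp (by fun_prop)
    fun_prop
  rw [lintegral_const_mul _ (by fun_prop), lintegral_add_left hfm]
  gcongr ENNReal.ofReal (t ^ β) * ?_
  rw [mul_add]
  refine add_le_add ?_ ?_
  · refine (pairs_est hV hΩ hC (convex_ball 0 b) hBm hBΩ hm1 hkm).trans ?_
    gcongr ?_ * _
    rw [← lintegral_indicator measurableSet_ball]
    refine lintegral_mono fun z => ?_
    by_cases hz : z ∈ ball (0 : Eu n) 4
    · rw [hk, indicator_of_mem hz, indicator_of_mem hz, ← ENNReal.ofReal_mul (by positivity)]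
      apply ENNReal.ofReal_le_ofReal
      rcases eq_or_ne z 0 with rfl | h0
      · rw [norm_zero, Real.zero_rpow (by linarith : m ≠ 0), mul_zero]
        positivity
      · rw [← Real.rpow_add (norm_pos_iff.2 h0), sub_add_cancel]
    · rw [hk, indicator_of_notMem hz, indicator_of_notMem hz, zero_mul]
  · refine (conv_est hb (g := fun x => ENNReal.ofReal (t ^ (-m)) * ENNReal.ofReal (|w x| ^ m))
      (by fun_prop) (1 + θ - N)).trans ?_
    rw [lintegral_const_mul _ (by fun_prop)]

lemma measurable_sgnPow (θ : ℝ) : Measurable (sgnPow θ) := by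
  unfold sgnPow
  fun_prop

/-- Integrability of the nonlocal form. -/
lemma form_integrable {n : ℕ} (hn : 1 ≤ n) {θ N a d : ℝ} (hθ : 0 < θ) (hN : (n : ℝ) < N)
    (hN2 : N < n + (1 + θ))
    (hd : 0 < d) (hd1 : d ≤ 1) (ha : a + d ≤ 2) {V ψ : Eu n → ℝ} (hV : Measurable V)
    {LV Lψ : NNReal} (hVL : LipschitzOnWith LV V (ball 0 (a + d))) (hψL : LipschitzWith Lψ ψ)
    (hψ : ∀ x, a ≤ ‖x‖ → ψ x = 0)
    (hT : ∫⁻ y, ENNReal.ofReal (|V y| ^ θ * (1 + ‖y‖) ^ (-N)) ≠ ⊤) :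
    Integrable (fun p : Eu n × Eu n =>
      sgnPow θ (V p.1 - V p.2) * (ψ p.1 - ψ p.2) / dist p.1 p.2 ^ N) := by
  have hN0 : 0 < N := lt_of_le_of_lt (Nat.cast_nonneg n) hN
  have hψm : Measurable ψ := hψL.continuous.measurable
  have hBm : MeasurableSet (ball (0 : Eu n) (a + d)) := measurableSet_ball
  have hsm := measurable_sgnPow θ
  refine ⟨Measurable.aestronglyMeasurable (by fun_prop), ?_⟩
  rw [HasFiniteIntegral]
  have habs : ∀ p : Eu n × Eu n,
      ‖sgnPow θ (V p.1 - V p.2) * (ψ p.1 - ψ p.2) / dist p.1 p.2 ^ N‖ₑ =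
      ENNReal.ofReal (|V p.1 - V p.2| ^ θ * |ψ p.1 - ψ p.2| / dist p.1 p.2 ^ N) := by
    intro p
    rw [Real.enorm_eq_ofReal_abs, abs_div, abs_mul, abs_sgnPow hθ,
      abs_of_nonneg (by positivity : 0 ≤ dist p.1 p.2 ^ N)]
  simp_rw [habs]
  rw [← lintegral_add_compl _ (hBm.prod hBm)]
  refine ENNReal.add_lt_top.2 ⟨?_, ?_⟩
  · have : ∀ p ∈ ball (0 : Eu n) (a + d) ×ˢ ball (0 : Eu n) (a + d),
        ENNReal.ofReal (|V p.1 - V p.2| ^ θ * |ψ p.1 - ψ p.2| / dist p.1 p.2 ^ N) ≤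
        ENNReal.ofReal (dist p.1 p.2 ^ (1 + θ - N)) * ENNReal.ofReal ((LV : ℝ) ^ θ * Lψ) := by
      rintro ⟨x, y⟩ ⟨hx, hy⟩
      simp only at hx hy ⊢
      rw [← ENNReal.ofReal_mul (by positivity)]
      apply ENNReal.ofReal_le_ofReal
      rcases eq_or_ne x y with rfl | hxy
      · simp only [sub_self, abs_zero, mul_zero, zero_div]; positivity
      have hr : 0 < dist x y := dist_pos.2 hxy
      have h1 : |V x - V y| ≤ LV * dist x y := by
        have := hVL.dist_le_mul x hx y hy; rwa [Real.dist_eq] at this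
      have h2 : |ψ x - ψ y| ≤ Lψ * dist x y := by
        have := hψL.dist_le_mul x y; rwa [Real.dist_eq] at this
      calc |V x - V y| ^ θ * |ψ x - ψ y| / dist x y ^ N
          ≤ (LV * dist x y) ^ θ * (Lψ * dist x y) / dist x y ^ N := by gcongr
        _ = _ := by
          rw [Real.mul_rpow (by positivity) hr.le, Real.rpow_sub hr, Real.rpow_add hr, Real.rpow_one]
          ring
    refine (setLIntegral_mono' (hBm.prod hBm) this).trans_lt ?_
    refine (conv_est ha (g := fun _ => ENNReal.ofReal ((LV : ℝ) ^ θ * Lψ)) measurable_const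
      (1 + θ - N)).trans_lt ?_
    refine ENNReal.mul_lt_top (kernel_finite hn (by linarith) 4) ?_
    rw [setLIntegral_const]
    exact ENNReal.mul_lt_top (by simp) measure_ball_lt_top
  · refine (far_est hθ hN0 hd hd1 (by linarith) hV hψm hψ).trans_lt ?_
    have hc2 : (∫⁻ y : Eu n, ENNReal.ofReal ((1 + ‖y‖) ^ (-N))) ≠ ⊤ :=
      (finite_integral_one_add_norm (by simpa using hN)).ne
    -- bounds
    obtain ⟨M, hM⟩ : ∃ M : ℝ, ∀ x ∈ ball (0 : Eu n) (a + d), |V x| ≤ M := by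
      by_cases hne : 0 < a + d
      · refine ⟨|V 0| + LV * 2, fun x hx => ?_⟩
        have h1 := hVL.dist_le_mul x hx 0 (mem_ball_self hne)
        rw [Real.dist_eq, dist_zero_right] at h1
        have h2 : |V x| ≤ |V 0| + |V x - V 0| := by
          have := abs_add_le (V 0) (V x - V 0); simpa using this
        have h3 : (LV : ℝ) * ‖x‖ ≤ LV * 2 := by
          have : ‖x‖ < a + d := by simpa using hx
          gcongr; linarith
        linarith
      · refine ⟨0, fun x hx => ?_⟩
        rw [ball_eq_empty.2 (not_lt.1 hne)] at hx
        exact absurd hx (notMem_empty x)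
    obtain ⟨M', hM'⟩ : ∃ M' : ℝ, ∀ x ∈ ball (0 : Eu n) (a + d), |ψ x| ≤ M' := by
      refine ⟨|ψ 0| + Lψ * 2, fun x hx => ?_⟩
      have h1 := hψL.dist_le_mul x 0
      rw [Real.dist_eq, dist_zero_right] at h1
      have h2 : |ψ x| ≤ |ψ 0| + |ψ x - ψ 0| := by
        have := abs_add_le (ψ 0) (ψ x - ψ 0); simpa using this
      have h3 : (Lψ : ℝ) * ‖x‖ ≤ Lψ * 2 := by
        have : ‖x‖ < a + d := by simpa using hx
        gcongr; linarith
      linarith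
    have hψ0 : ∀ x ∉ ball (0 : Eu n) (a + d), ψ x = 0 := fun x hx => hψ x (by
      simp only [mem_ball_zero_iff, not_lt] at hx; linarith)
    have f1 : ∫⁻ x, ENNReal.ofReal |ψ x| ≠ ⊤ := by
      have : ∀ x, ENNReal.ofReal |ψ x| ≤
          (ball (0 : Eu n) (a + d)).indicator (fun _ => ENNReal.ofReal M') x := by
        intro x
        by_cases hx : x ∈ ball (0 : Eu n) (a + d)
        · rw [indicator_of_mem hx]; exact ENNReal.ofReal_le_ofReal (hM' x hx)
        · simp [hψ0 x hx]
      refine ((lintegral_mono this).trans_lt ?_).ne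
      rw [lintegral_indicator hBm, setLIntegral_const]
      exact ENNReal.mul_lt_top (by simp) measure_ball_lt_top
    have f2 : ∫⁻ x, ENNReal.ofReal (|V x| ^ θ * |ψ x|) ≠ ⊤ := by
      have : ∀ x, ENNReal.ofReal (|V x| ^ θ * |ψ x|) ≤
          (ball (0 : Eu n) (a + d)).indicator (fun _ => ENNReal.ofReal (M ^ θ * M')) x := by
        intro x
        by_cases hx : x ∈ ball (0 : Eu n) (a + d)
        · rw [indicator_of_mem hx]
          apply ENNReal.ofReal_le_ofReal
          have hM0 := (abs_nonneg _).trans (hM x hx)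
          have := hM x hx
          have := hM' x hx
          gcongr
        · simp [hψ0 x hx]
      refine ((lintegral_mono this).trans_lt ?_).ne
      rw [lintegral_indicator hBm, setLIntegral_const]
      exact ENNReal.mul_lt_top (by simp) measure_ball_lt_top
    finiteness

/-- The normalised data for the core estimate. -/
structure Core (n : ℕ) (θ β N : ℝ) (Ω : Set (Eu n)) (v f : Eu n → ℝ) : Prop where
  isOpen : IsOpen Ω
  sub : closedBall 0 2 ⊆ Ω
  hv : Measurable v
  hf : Measurable f
  cd : ContDiffOn ℝ 1 v Ω
  hfr : ∫⁻ x in ball (0 : Eu n) 2, ENNReal.ofReal (|f x| ^ ((θ + β) / θ)) ≤ 1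
  hU : ∫⁻ x in ball (0 : Eu n) 2, ENNReal.ofReal (|v x| ^ (θ + 1)) ≤ 1
  hT : ∫⁻ x in (ball (0 : Eu n) 2)ᶜ, ENNReal.ofReal (|v x| ^ θ / ‖x‖ ^ N) ≤ 1
  weak : ∀ (φ : Eu n → ℝ) (L : NNReal) (b : ℝ), LipschitzWith L φ → b < 2 →
    (∀ x, b ≤ ‖x‖ → φ x = 0) →
    (∫ x, ∫ y, sgnPow θ (v x - v y) * (φ x - φ y) / dist x y ^ N) =
      ∫ x in ball (0 : Eu n) 2, f x * φ x

lemma lip_of_cd {n : ℕ} {v : Eu n → ℝ} {Ω : Set (Eu n)} (hΩ : IsOpen Ω)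
    (hv : ContDiffOn ℝ 1 v Ω) (hB : closedBall 0 2 ⊆ Ω) :
    ∃ L : NNReal, (∀ x ∈ closedBall (0 : Eu n) 2, ‖fderiv ℝ v x‖₊ ≤ L) ∧
      LipschitzOnWith L v (closedBall 0 2) := by
  have hc : ContinuousOn (fderiv ℝ v) (closedBall 0 2) :=
    (hv.continuousOn_fderiv_of_isOpen hΩ le_rfl).mono hB
  obtain ⟨C, hC⟩ := (isCompact_closedBall (0 : Eu n) 2).exists_bound_of_continuousOn hc
  have h1 : ∀ x ∈ closedBall (0 : Eu n) 2, ‖fderiv ℝ v x‖₊ ≤ C.toNNReal := by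
    intro x hx
    rw [← NNReal.coe_le_coe, coe_nnnorm]
    exact (hC x hx).trans (Real.le_coe_toNNReal C)
  refine ⟨C.toNNReal, h1, ?_⟩
  refine (convex_closedBall 0 2).lipschitzOnWith_of_nnnorm_fderiv_le (𝕜 := ℝ) (fun x hx => ?_) h1
  exact (hv.differentiableOn one_ne_zero).differentiableAt (hΩ.mem_nhds (hB hx))

lemma sgnPow_eq_max {β : ℝ} (hβ : 0 < β) (a : ℝ) :
    sgnPow β a = (max a 0) ^ β - (max (-a) 0) ^ β := by
  rcases le_total 0 a with h | h
  · rw [sgnPow_of_nonneg hβ h, max_eq_left h, max_eq_right (by linarith), Real.zero_rpow hβ.ne',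
      sub_zero]
  · have := sgnPow_of_nonneg hβ (by linarith : 0 ≤ -a)
    rw [sgnPow_neg] at this
    rw [max_eq_right h, max_eq_left (by linarith), Real.zero_rpow hβ.ne']
    linarith

lemma sgnPow_lip {β : ℝ} (hβ : 1 ≤ β) (M : ℝ) :
    ∃ K : ℝ, 0 ≤ K ∧ ∀ a b, |a| ≤ M → |b| ≤ M → |sgnPow β a - sgnPow β b| ≤ K * |a - b| := by
  have h1 : ContDiff ℝ 1 (fun x : ℝ => x ^ β) := by
    have := Real.contDiff_rpow_const_of_le (p := β) (n := 1) (by simpa using hβ)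
    simpa using this
  obtain ⟨C, hC⟩ := (isCompact_Icc (a := (0 : ℝ)) (b := M)).exists_bound_of_continuousOn
    (h1.continuous_deriv le_rfl).continuousOn
  have h2 : ∀ x ∈ Icc (0 : ℝ) M, ∀ y ∈ Icc (0 : ℝ) M, |x ^ β - y ^ β| ≤ |C| * |x - y| := by
    intro x hx y hy
    have := (convex_Icc (0 : ℝ) M).norm_image_sub_le_of_norm_deriv_le (𝕜 := ℝ)
      (f := fun x : ℝ => x ^ β) (C := |C|)
      (fun z _ => (h1.differentiable one_ne_zero).differentiableAt)
      (fun z hz => (hC z hz).trans (le_abs_self C)) hy hx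
    simpa using this
  refine ⟨2 * |C|, by positivity, fun a b ha hb => ?_⟩
  have hM : 0 ≤ M := (abs_nonneg a).trans ha
  rw [sgnPow_eq_max (by linarith), sgnPow_eq_max (by linarith)]
  have m1 : ∀ c, |c| ≤ M → max c 0 ∈ Icc 0 M := fun c hc =>
    ⟨le_max_right _ _, max_le ((le_abs_self c).trans hc) hM⟩
  have e1 := h2 _ (m1 a ha) _ (m1 b hb)
  have e2 := h2 _ (m1 (-a) (by rwa [abs_neg])) _ (m1 (-b) (by rwa [abs_neg]))
  have e3 : |max a 0 - max b 0| ≤ |a - b| := abs_max_sub_max_le_abs a b 0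
  have e4 : |max (-a) 0 - max (-b) 0| ≤ |a - b| := by
    have := abs_max_sub_max_le_abs (-a) (-b) 0
    rwa [show -a - -b = -(a - b) by ring, abs_neg] at this
  have e5 := mul_le_mul_of_nonneg_left e3 (abs_nonneg C)
  have e6 := mul_le_mul_of_nonneg_left e4 (abs_nonneg C)
  have e7 := abs_sub (max a 0 ^ β - max b 0 ^ β) (max (-a) 0 ^ β - max (-b) 0 ^ β)
  rw [show max a 0 ^ β - max (-a) 0 ^ β - (max b 0 ^ β - max (-b) 0 ^ β) =
    max a 0 ^ β - max b 0 ^ β - (max (-a) 0 ^ β - max (-b) 0 ^ β) by ring]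
  linarith

/-- Extension by zero of a function Lipschitz near its support. -/
lemma lip_ext {n : ℕ} {ψ : Eu n → ℝ} {a d K M : ℝ} (hd : 0 < d) (hM : 0 ≤ M)
    (hK : 0 ≤ K) (h1 : ∀ x ∈ ball (0 : Eu n) (a + d), ∀ y ∈ ball (0 : Eu n) (a + d),
      |ψ x - ψ y| ≤ K * dist x y) (h2 : ∀ x ∈ ball (0 : Eu n) (a + d), |ψ x| ≤ M)
    (h3 : ∀ x, a ≤ ‖x‖ → ψ x = 0) :
    ∃ L : NNReal, LipschitzWith L ψ := by
  refine ⟨⟨K + M / d, by positivity⟩, LipschitzWith.of_dist_le_mul fun x y => ?_⟩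
  rw [Real.dist_eq]
  show |ψ x - ψ y| ≤ (K + M / d) * dist x y
  have key : ∀ x y : Eu n, x ∈ ball (0 : Eu n) (a + d) → y ∉ ball (0 : Eu n) (a + d) →
      |ψ x - ψ y| ≤ (K + M / d) * dist x y := by
    intro x y hx hy
    have hy0 : a + d ≤ ‖y‖ := by simpa using hy
    rw [h3 y (by linarith), sub_zero]
    by_cases hxa : a ≤ ‖x‖
    · rw [h3 x hxa, abs_zero]; positivity
    · have hdist : d ≤ dist x y := by
        rw [dist_comm, dist_eq_norm]
        have := norm_sub_norm_le y x
        linarith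
      calc |ψ x| ≤ M := h2 x hx
        _ = M / d * d := by field_simp
        _ ≤ M / d * dist x y := by gcongr
        _ ≤ _ := by
          have : 0 ≤ K * dist x y := by positivity
          linarith
  by_cases hx : x ∈ ball (0 : Eu n) (a + d) <;> by_cases hy : y ∈ ball (0 : Eu n) (a + d)
  · have : 0 ≤ M / d * dist x y := by positivity
    have := h1 x hx y hy
    linarith
  · exact key x y hx hy
  · rw [abs_sub_comm, dist_comm]; exact key y x hy hx
  · have hx0 : a + d ≤ ‖x‖ := by simpa using hx
    have hy0 : a + d ≤ ‖y‖ := by simpa using hy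
    rw [h3 x (by linarith), h3 y (by linarith)]
    simp; positivity

/-- Cutoff function. -/
def cutoff {n : ℕ} (ρ d : ℝ) (x : Eu n) : ℝ := max 0 (min 1 ((ρ + 3 * d - ‖x‖) / d))

lemma cutoff_nonneg {n : ℕ} {ρ d : ℝ} (x : Eu n) : 0 ≤ cutoff ρ d x := le_max_left _ _

lemma cutoff_le_one {n : ℕ} {ρ d : ℝ} (x : Eu n) : cutoff ρ d x ≤ 1 :=
  max_le zero_le_one (min_le_left _ _)

lemma cutoff_eq_one {n : ℕ} {ρ d : ℝ} (hd : 0 < d) {x : Eu n} (hx : ‖x‖ ≤ ρ + 2 * d) :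
    cutoff ρ d x = 1 := by
  unfold cutoff
  rw [min_eq_left, max_eq_right zero_le_one]
  rw [le_div_iff₀ hd]; linarith

lemma cutoff_eq_zero {n : ℕ} {ρ d : ℝ} (hd : 0 < d) {x : Eu n} (hx : ρ + 3 * d ≤ ‖x‖) :
    cutoff ρ d x = 0 := by
  unfold cutoff
  apply max_eq_left
  refine (min_le_right _ _).trans ?_
  rw [div_le_iff₀ hd]; linarith

lemma cutoff_lip {n : ℕ} {ρ d : ℝ} (hd : 0 < d) (x y : Eu n) :
    |cutoff ρ d x - cutoff ρ d y| ≤ dist x y / d := by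
  unfold cutoff
  calc _ ≤ |min 1 ((ρ + 3 * d - ‖x‖) / d) - min 1 ((ρ + 3 * d - ‖y‖) / d)| := by
        rw [max_comm, max_comm 0]; exact abs_max_sub_max_le_abs _ _ _
    _ ≤ |(ρ + 3 * d - ‖x‖) / d - (ρ + 3 * d - ‖y‖) / d| := by
        have := abs_min_sub_min_le_max 1 ((ρ + 3 * d - ‖x‖) / d) 1 ((ρ + 3 * d - ‖y‖) / d)
        simpa using this
    _ = |‖y‖ - ‖x‖| / d := by
        rw [← sub_div, abs_div, abs_of_pos hd]; ring_nf
    _ ≤ _ := by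
        gcongr
        rw [dist_comm, dist_eq_norm]
        exact abs_norm_sub_norm_le y x

@[fun_prop]
lemma cutoff_meas {n : ℕ} {ρ d : ℝ} : Measurable (cutoff (n := n) ρ d) := by
  unfold cutoff; fun_prop

lemma lint_le_of_le_add {α : Type*} [MeasurableSpace α] {μ : Measure α} {P F Q : α → ℝ}
    (hF : Integrable F μ) (hQ : AEStronglyMeasurable Q μ) (hQ0 : ∀ x, 0 ≤ Q x)
    (h : ∀ x, P x ≤ F x + Q x) (h0 : ∀ x, 0 ≤ F x + Q x) :
    ∫⁻ x, ENNReal.ofReal (P x) ∂μ ≤ ENNReal.ofReal (∫ x, F x ∂μ) + ∫⁻ x, ENNReal.ofReal (Q x) ∂μ := by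
  by_cases hfin : ∫⁻ x, ENNReal.ofReal (Q x) ∂μ = ⊤
  · rw [hfin]; simp
  have hQi : Integrable Q μ := by
    refine ⟨hQ, ?_⟩
    rw [HasFiniteIntegral]
    simp_rw [fun x => Real.enorm_of_nonneg (hQ0 x)]
    exact lt_top_iff_ne_top.2 hfin
  calc ∫⁻ x, ENNReal.ofReal (P x) ∂μ ≤ ∫⁻ x, ENNReal.ofReal (F x + Q x) ∂μ :=
        lintegral_mono fun x => ENNReal.ofReal_le_ofReal (h x)
    _ = ENNReal.ofReal (∫ x, (F x + Q x) ∂μ) :=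
        (ofReal_integral_eq_lintegral_ofReal (hF.add hQi) (ae_of_all _ h0)).symm
    _ = ENNReal.ofReal ((∫ x, F x ∂μ) + ∫ x, Q x ∂μ) := by rw [integral_add hF hQi]
    _ ≤ _ := by
      refine ENNReal.ofReal_add_le.trans ?_
      rw [ofReal_integral_eq_lintegral_ofReal hQi (ae_of_all _ hQ0)]

/-- Energy of the gradient on a centred ball. -/
def Phi {n : ℕ} (v : Eu n → ℝ) (m ρ : ℝ) : ℝ≥0∞ :=
  ∫⁻ x in ball (0 : Eu n) ρ, ENNReal.ofReal (‖fderiv ℝ v x‖ ^ m)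

/-- Power integral on a centred ball. -/
def Wf {n : ℕ} (v : Eu n → ℝ) (m ρ : ℝ) : ℝ≥0∞ :=
  ∫⁻ x in ball (0 : Eu n) ρ, ENNReal.ofReal (|v x| ^ m)

lemma Phi_mono {n : ℕ} (v : Eu n → ℝ) (m : ℝ) {a b : ℝ} (h : a ≤ b) : Phi v m a ≤ Phi v m b :=
  lintegral_mono_set (ball_subset_ball h)

lemma Wf_mono {n : ℕ} (v : Eu n → ℝ) (m : ℝ) {a b : ℝ} (h : a ≤ b) : Wf v m a ≤ Wf v m b :=
  lintegral_mono_set (ball_subset_ball h)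

lemma shift_ball {n : ℕ} (g : Eu n → ℝ≥0∞) (h : Eu n) {a b : ℝ} (hab : a + ‖h‖ ≤ b) :
    ∫⁻ x in ball (0 : Eu n) a, g (x + h) ≤ ∫⁻ x in ball (0 : Eu n) b, g x := by
  rw [← lintegral_indicator measurableSet_ball, ← lintegral_indicator measurableSet_ball,
    ← lintegral_add_right_eq_self ((ball (0 : Eu n) b).indicator g) h]
  refine lintegral_mono fun x => ?_
  by_cases hx : x ∈ ball (0 : Eu n) a
  · rw [indicator_of_mem hx, indicator_of_mem]
    rw [mem_ball_zero_iff] at hx ⊢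
    have := norm_add_le x h
    linarith
  · rw [indicator_of_notMem hx]; exact zero_le

lemma diff_est {n : ℕ} {v : Eu n → ℝ} {Ω : Set (Eu n)} (hΩ : IsOpen Ω)
    (hv : ContDiffOn ℝ 1 v Ω) (h : Eu n) {a b m : ℝ} (hm : 1 ≤ m)
    (hab : a + ‖h‖ ≤ b) (hb : ball 0 b ⊆ Ω) :
    ∫⁻ x in ball (0 : Eu n) a, ENNReal.ofReal (|v (x + h) - v x| ^ m) ≤
      ENNReal.ofReal (‖h‖ ^ m) * Phi v m b := by
  refine le_trans ?_ (trans_est hΩ hv (convex_ball 0 b) measurableSet_ball hb h hm)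
  apply lintegral_mono_set
  intro x hx
  rw [mem_ball_zero_iff] at hx
  have := norm_add_le x h
  have := norm_nonneg h
  exact ⟨by rw [mem_ball_zero_iff]; linarith, by rw [mem_ball_zero_iff]; linarith⟩

lemma fderiv_shift {n : ℕ} (v : Eu n → ℝ) (h x : Eu n) :
    fderiv ℝ (fun y => v (y + h)) x = fderiv ℝ v (x + h) := by
  exact fderiv_comp_add_right h

lemma Phi_shift {n : ℕ} (v : Eu n → ℝ) (h : Eu n) {m a b : ℝ} (hab : a + ‖h‖ ≤ b) :
    Phi (fun y => v (y + h)) m a ≤ Phi v m b := by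
  unfold Phi
  simp_rw [fderiv_shift]
  exact shift_ball (fun x => ENNReal.ofReal (‖fderiv ℝ v x‖ ^ m)) h hab

lemma Wf_shift {n : ℕ} (v : Eu n → ℝ) (h : Eu n) {m a b : ℝ} (hab : a + ‖h‖ ≤ b) :
    Wf (fun y => v (y + h)) m a ≤ Wf v m b :=
  shift_ball (fun x => ENNReal.ofReal (|v x| ^ m)) h hab

/-- The test function. -/
def psi {n : ℕ} (β ρ d : ℝ) (v : Eu n → ℝ) (h x : Eu n) : ℝ :=
  cutoff ρ d x * sgnPow β (v (x + h) - v x)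

lemma psi_zero {n : ℕ} {β ρ d : ℝ} (hd : 0 < d) (v : Eu n → ℝ) (h x : Eu n)
    (hx : ρ + 3 * d ≤ ‖x‖) : psi β ρ d v h x = 0 := by
  rw [psi, cutoff_eq_zero hd hx, zero_mul]

lemma psi_abs_le {n : ℕ} {β ρ d : ℝ} (hβ : 0 < β) (v : Eu n → ℝ) (h x : Eu n) :
    |psi β ρ d v h x| ≤ |v (x + h) - v x| ^ β := by
  rw [psi, abs_mul, abs_sgnPow hβ, abs_of_nonneg (cutoff_nonneg x)]
  exact mul_le_of_le_one_left (by positivity) (cutoff_le_one x)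

lemma psi_lip {n : ℕ} {β ρ d : ℝ} {v : Eu n → ℝ} {Ω : Set (Eu n)} (hΩ : IsOpen Ω)
    (hv : ContDiffOn ℝ 1 v Ω) (hB : closedBall 0 2 ⊆ Ω) (hβ : 1 ≤ β) (hd : 0 < d)
    (hρ : 0 ≤ ρ) (hρd : ρ + 8 * d ≤ 2) {h : Eu n} (hh : ‖h‖ ≤ d) :
    ∃ L : NNReal, LipschitzWith L (psi β ρ d v h) := by
  obtain ⟨L, -, hL⟩ := lip_of_cd hΩ hv hB
  have hw : ∀ x ∈ ball (0 : Eu n) (ρ + 3 * d + d), |v (x + h) - v x| ≤ L * d := by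
    intro x hx
    rw [mem_ball_zero_iff] at hx
    have h2 := norm_add_le x h
    have := hL.dist_le_mul (x + h) (by rw [mem_closedBall_zero_iff]; linarith) x
      (by rw [mem_closedBall_zero_iff]; linarith)
    rw [Real.dist_eq, dist_eq_norm, add_sub_cancel_left] at this
    exact this.trans (by gcongr)
  have hwl : ∀ x ∈ ball (0 : Eu n) (ρ + 3 * d + d), ∀ y ∈ ball (0 : Eu n) (ρ + 3 * d + d),
      |(v (x + h) - v x) - (v (y + h) - v y)| ≤ 2 * L * dist x y := by
    intro x hx y hy
    rw [mem_ball_zero_iff] at hx hy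
    have h2 := norm_add_le x h
    have h3 := norm_add_le y h
    have e1 := hL.dist_le_mul (x + h) (by rw [mem_closedBall_zero_iff]; linarith) (y + h)
      (by rw [mem_closedBall_zero_iff]; linarith)
    have e2 := hL.dist_le_mul x (by rw [mem_closedBall_zero_iff]; linarith) y
      (by rw [mem_closedBall_zero_iff]; linarith)
    rw [Real.dist_eq] at e1 e2
    rw [dist_add_right] at e1
    have e3 := abs_sub (v (x + h) - v (y + h)) (v x - v y)
    rw [show (v (x + h) - v x) - (v (y + h) - v y) = v (x + h) - v (y + h) - (v x - v y) by ring]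
    linarith
  obtain ⟨K, hK0, hK⟩ := sgnPow_lip hβ (L * d)
  have hbd : ∀ x ∈ ball (0 : Eu n) (ρ + 3 * d + d),
      |sgnPow β (v (x + h) - v x)| ≤ (L * d) ^ β := by
    intro x hx
    rw [abs_sgnPow (by linarith)]
    have := hw x hx
    gcongr
  refine lip_ext (a := ρ + 3 * d) (d := d) (K := K * (2 * L) + (L * d) ^ β / d)
    (M := (L * d) ^ β) hd (by positivity) (by positivity) ?_ ?_ (fun x hx => psi_zero hd v h x hx)
  · intro x hx y hy
    have h1 := hK _ _ (hw x hx) (hw y hy)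
    have h2 := mul_le_mul_of_nonneg_left (hwl x hx y hy) hK0
    have h3 := cutoff_lip (ρ := ρ) hd x y
    have h4 := hbd y hy
    unfold psi
    set gx := sgnPow β (v (x + h) - v x)
    set gy := sgnPow β (v (y + h) - v y)
    have e : cutoff ρ d x * gx - cutoff ρ d y * gy =
      cutoff ρ d x * (gx - gy) + (cutoff ρ d x - cutoff ρ d y) * gy := by ring
    rw [e]
    refine (abs_add_le _ _).trans ?_
    rw [abs_mul, abs_mul, abs_of_nonneg (cutoff_nonneg x)]
    have h5 : cutoff ρ d x * |gx - gy| ≤ |gx - gy| :=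
      mul_le_of_le_one_left (abs_nonneg _) (cutoff_le_one x)
    have h6 : |cutoff ρ d x - cutoff ρ d y| * |gy| ≤ dist x y / d * (L * d) ^ β := by gcongr
    have h7 : dist x y / d * (L * d) ^ β = (L * d) ^ β / d * dist x y := by ring
    nlinarith
  · intro x hx
    refine (psi_abs_le (by linarith) v h x).trans ?_
    have := hw x hx
    gcongr

lemma psi_est {n : ℕ} {θ β ρ d : ℝ} {v A : Eu n → ℝ} {Ω : Set (Eu n)} (hΩ : IsOpen Ω)
    (hvm : Measurable v) (hA : Measurable A)
    (hv : ContDiffOn ℝ 1 v Ω) (hB : closedBall 0 2 ⊆ Ω) (hθ : 0 < θ) (hβ : 1 ≤ β) (hd : 0 < d)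
    (hρd : ρ + 8 * d ≤ 2) {h : Eu n} (hh : ‖h‖ ≤ d) (hh0 : 0 < ‖h‖) :
    ∫⁻ x, ENNReal.ofReal (|A x| ^ θ * |psi β ρ d v h x|) ≤
      ENNReal.ofReal (‖h‖ ^ β) * ((∫⁻ x in ball (0 : Eu n) (ρ + 3 * d),
        ENNReal.ofReal (|A x| ^ (θ + β))) + Phi v (θ + β) (ρ + 5 * d)) := by
  set t := ‖h‖
  have hpt : ∀ x, ENNReal.ofReal (|A x| ^ θ * |psi β ρ d v h x|) ≤
      (ball (0 : Eu n) (ρ + 3 * d)).indicator (fun x => ENNReal.ofReal (t ^ β) *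
        (ENNReal.ofReal (|A x| ^ (θ + β)) + ENNReal.ofReal (t ^ (-(θ + β))) *
          ENNReal.ofReal (|v (x + h) - v x| ^ (θ + β)))) x := by
    intro x
    by_cases hx : x ∈ ball (0 : Eu n) (ρ + 3 * d)
    · rw [indicator_of_mem hx, ← ENNReal.ofReal_mul (by positivity),
        ← ENNReal.ofReal_add (by positivity) (by positivity), ← ENNReal.ofReal_mul (by positivity)]
      apply ENNReal.ofReal_le_ofReal
      have h1 := psi_abs_le (ρ := ρ) (d := d) (by linarith : 0 < β) v h x
      set w := v (x + h) - v x
      have hy := young_pm hθ (by linarith : 0 < β) (x := |A x|) (y := |w| / t) (by positivity)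
        (by positivity)
      rw [Real.div_rpow (abs_nonneg _) hh0.le, Real.div_rpow (abs_nonneg _) hh0.le] at hy
      have hmul := mul_le_mul_of_nonneg_left hy (by positivity : 0 ≤ t ^ β)
      have e1 : t ^ β * (|A x| ^ θ * (|w| ^ β / t ^ β)) = |A x| ^ θ * |w| ^ β := by
        have := Real.rpow_pos_of_pos hh0 β
        field_simp
      rw [e1] at hmul
      have h2 : |A x| ^ θ * |psi β ρ d v h x| ≤ |A x| ^ θ * |w| ^ β := by gcongr
      refine h2.trans (hmul.trans (le_of_eq ?_))
      rw [Real.rpow_neg hh0.le]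
      ring
    · rw [psi_zero hd v h x (by simpa using hx)]; simp
  refine (lintegral_mono hpt).trans ?_
  rw [lintegral_indicator measurableSet_ball, lintegral_const_mul _ (by fun_prop),
    lintegral_add_left (by fun_prop), lintegral_const_mul _ (by fun_prop)]
  gcongr
  calc _ ≤ ENNReal.ofReal (t ^ (-(θ + β))) *
        (ENNReal.ofReal (t ^ (θ + β)) * Phi v (θ + β) (ρ + 5 * d)) := by
        gcongr
        exact diff_est hΩ hv h (by linarith) (by linarith)
          ((ball_subset_closedBall.trans (closedBall_subset_closedBall (by linarith))).trans hB)
    _ = _ := by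
      rw [← mul_assoc, ← ENNReal.ofReal_mul (by positivity), ← Real.rpow_add hh0]
      simp

lemma form_identity {n : ℕ} (hn : 1 ≤ n) {θ β N : ℝ} (hθ : 0 < θ) (hβ : 1 < β)
    (hN1 : n + θ < N) (hN2 : N < n + θ + 1) {Ω : Set (Eu n)} {v f : Eu n → ℝ}
    (H : Core n θ β N Ω v f) {ρ d : ℝ} (hρ : 0 ≤ ρ) (hd : 0 < d) (hd1 : d ≤ 1)
    (hρd : ρ + 8 * d ≤ 2) {h : Eu n} (hh : ‖h‖ ≤ d) :
    Integrable (fun p : Eu n × Eu n =>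
      (sgnPow θ (v (p.1 + h) - v (p.2 + h)) - sgnPow θ (v p.1 - v p.2)) *
        (psi β ρ d v h p.1 - psi β ρ d v h p.2) / dist p.1 p.2 ^ N) ∧
    ∫ p : Eu n × Eu n, (sgnPow θ (v (p.1 + h) - v (p.2 + h)) - sgnPow θ (v p.1 - v p.2)) *
        (psi β ρ d v h p.1 - psi β ρ d v h p.2) / dist p.1 p.2 ^ N =
      ∫ x in ball (0 : Eu n) 2, f x * (psi β ρ d v h (x - h) - psi β ρ d v h x) := by
  have hv := H.hv
  obtain ⟨L, hL⟩ := psi_lip H.isOpen H.cd H.sub hβ.le hd hρ hρd hh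
  obtain ⟨LV, -, hLV⟩ := lip_of_cd H.isOpen H.cd H.sub
  obtain ⟨C, hC, hCt⟩ := tail_shift (n := n) (p := θ + 1) hθ (by linarith)
    (by have : (0:ℝ) ≤ n := Nat.cast_nonneg n
        linarith : 0 < N)
  have hCt := hCt v H.hv H.hU H.hT
  set ψ := psi β ρ d v h with hψ
  have hψ0 : ∀ x, ρ + 3 * d ≤ ‖x‖ → ψ x = 0 := fun x hx => psi_zero hd v h x hx
  set vh : Eu n → ℝ := fun x => v (x + h) with hvh
  have hvhm : Measurable vh := hv.comp (by fun_prop)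
  have i2 : Integrable (fun p : Eu n × Eu n =>
      sgnPow θ (v p.1 - v p.2) * (ψ p.1 - ψ p.2) / dist p.1 p.2 ^ N) := by
    refine form_integrable hn hθ (by linarith) (by linarith) hd hd1 (a := ρ + 3 * d) (by linarith)
      hv (LV := LV) (Lψ := L) ?_ hL hψ0 ?_
    · exact hLV.mono (ball_subset_closedBall.trans (closedBall_subset_closedBall (by linarith)))
    · have := hCt 0 (by simp)
      simp only [add_zero] at this
      exact (this.trans_lt (lt_top_iff_ne_top.2 hC)).ne
  have i1 : Integrable (fun p : Eu n × Eu n =>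
      sgnPow θ (vh p.1 - vh p.2) * (ψ p.1 - ψ p.2) / dist p.1 p.2 ^ N) := by
    refine form_integrable hn hθ (by linarith) (by linarith) hd hd1 (a := ρ + 3 * d) (by linarith)
      hvhm (LV := LV) (Lψ := L) ?_ hL hψ0 ?_
    · intro x hx y hy
      rw [mem_ball_zero_iff] at hx hy
      have h1 := norm_add_le x h
      have h2 := norm_add_le y h
      have := hLV (x := x + h) (by rw [mem_closedBall_zero_iff]; linarith) (y := y + h)
        (by rw [mem_closedBall_zero_iff]; linarith)
      rwa [edist_add_right] at this
    · exact ((hCt h (by linarith)).trans_lt (lt_top_iff_ne_top.2 hC)).ne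
  have inst : (volume : Measure (Eu n × Eu n)).IsAddRightInvariant := by
    rw [Measure.volume_eq_prod]; infer_instance
  set F1 : Eu n × Eu n → ℝ := fun p =>
      sgnPow θ (v p.1 - v p.2) * (ψ (p.1 - h) - ψ (p.2 - h)) / dist p.1 p.2 ^ N with hF1
  have hsh : (fun p : Eu n × Eu n =>
      sgnPow θ (vh p.1 - vh p.2) * (ψ p.1 - ψ p.2) / dist p.1 p.2 ^ N) =
      fun p => F1 (p + (h, h)) := by
    funext p
    simp [hF1, hvh]
  have i3 : Integrable F1 := by
    rw [hsh] at i1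
    have := i1.comp_add_right (-(h, h) : Eu n × Eu n)
    simpa [add_assoc, Prod.mk_zero_zero] using this
  have e3 : ∫ p, F1 p = ∫ p : Eu n × Eu n,
      sgnPow θ (vh p.1 - vh p.2) * (ψ p.1 - ψ p.2) / dist p.1 p.2 ^ N := by
    rw [hsh, integral_add_right_eq_self]
  have hsplit : (fun p : Eu n × Eu n =>
      (sgnPow θ (v (p.1 + h) - v (p.2 + h)) - sgnPow θ (v p.1 - v p.2)) *
        (ψ p.1 - ψ p.2) / dist p.1 p.2 ^ N) = fun p =>
      sgnPow θ (vh p.1 - vh p.2) * (ψ p.1 - ψ p.2) / dist p.1 p.2 ^ N -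
      sgnPow θ (v p.1 - v p.2) * (ψ p.1 - ψ p.2) / dist p.1 p.2 ^ N := by
    funext p
    simp only [hvh]; ring
  refine ⟨by rw [hsplit]; exact i1.sub i2, ?_⟩
  rw [hsplit, integral_sub i1 i2, ← e3, ← integral_sub i3 i2]
  have hφL : LipschitzWith (L + L) (fun x => ψ (x - h) - ψ x) := by
    refine LipschitzWith.sub ?_ hL
    intro x y
    have := hL (x - h) (y - h)
    rwa [edist_sub_right] at this
  have hw := H.weak _ _ (ρ + 4 * d) hφL (by linarith) (fun x hx => by
    have := norm_sub_norm_le x h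
    have hxx : ρ + 3 * d ≤ ‖x - h‖ := by linarith
    simp only [hψ0 _ hxx, hψ0 x (by linarith), sub_zero])
  rw [← hw, Measure.volume_eq_prod, integral_prod _ (by
    have := i3.sub i2
    rw [Measure.volume_eq_prod] at this
    exact this)]
  refine integral_congr_ae (ae_of_all _ fun x => integral_congr_ae (ae_of_all _ fun y => ?_))
  simp only [hF1]
  ring

lemma rhs_est {n : ℕ} {θ β N : ℝ} (hθ : 0 < θ) (hβ : 1 < β)
    {Ω : Set (Eu n)} {v f : Eu n → ℝ}
    (H : Core n θ β N Ω v f) {ρ d : ℝ} (hρ : 0 ≤ ρ) (hd : 0 < d)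
    (hρd : ρ + 8 * d ≤ 2) {h : Eu n} (hh : ‖h‖ ≤ d) (hh0 : 0 < ‖h‖) :
    ENNReal.ofReal (∫ x in ball (0 : Eu n) 2, f x * (psi β ρ d v h (x - h) - psi β ρ d v h x)) ≤
      2 * (ENNReal.ofReal (‖h‖ ^ β) * (1 + Phi v (θ + β) (ρ + 5 * d))) := by
  have hv := H.hv
  have hf := H.hf
  obtain ⟨L, hL⟩ := psi_lip H.isOpen H.cd H.sub hβ.le hd hρ hρd hh
  set ψ := psi β ρ d v h with hψ
  have hψm : Measurable ψ := hL.continuous.measurable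
  have key : ∀ k : Eu n, ‖k‖ ≤ d → ∫⁻ x, ENNReal.ofReal (|f (x + k)| * |ψ x|) ≤
      ENNReal.ofReal (‖h‖ ^ β) * (1 + Phi v (θ + β) (ρ + 5 * d)) := by
    intro k hk
    have := psi_est (θ := θ) (A := fun x => |f (x + k)| ^ (1 / θ)) H.isOpen hv (by fun_prop) H.cd
      H.sub hθ hβ.le hd hρd hh hh0
    have e : ∀ x (r : ℝ), abs (|f (x + k)| ^ (1 / θ)) ^ r = |f (x + k)| ^ (r / θ) := by
      intro x r
      rw [abs_of_nonneg (by positivity), ← Real.rpow_mul (abs_nonneg _)]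
      congr 1; ring
    simp only [e, div_self hθ.ne', Real.rpow_one] at this
    refine this.trans ?_
    gcongr
    exact (shift_ball (fun x => ENNReal.ofReal (|f x| ^ ((θ + β) / θ))) k (by linarith)).trans H.hfr
  calc _ ≤ ∫⁻ x in ball (0 : Eu n) 2, ENNReal.ofReal |f x * (ψ (x - h) - ψ x)| := by
        simp_rw [← Real.enorm_eq_ofReal_abs]
        refine le_trans ?_ (enorm_integral_le_lintegral_enorm _)
        rw [Real.enorm_eq_ofReal_abs]
        exact ENNReal.ofReal_le_ofReal (le_abs_self _)
    _ ≤ ∫⁻ x, ENNReal.ofReal |f x * (ψ (x - h) - ψ x)| := setLIntegral_le_lintegral _ _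
    _ ≤ ∫⁻ x, (ENNReal.ofReal (|f x| * |ψ (x - h)|) + ENNReal.ofReal (|f x| * |ψ x|)) := by
        refine lintegral_mono fun x => ?_
        rw [← ENNReal.ofReal_add (by positivity) (by positivity), ← mul_add, abs_mul]
        apply ENNReal.ofReal_le_ofReal
        gcongr
        exact abs_sub _ _
    _ = (∫⁻ x, ENNReal.ofReal (|f x| * |ψ (x - h)|)) + ∫⁻ x, ENNReal.ofReal (|f x| * |ψ x|) := by
        rw [lintegral_add_right _ (by fun_prop)]
    _ ≤ _ := by
        rw [two_mul]
        refine add_le_add ?_ ?_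
        · rw [← lintegral_add_right_eq_self _ h]
          simpa using key h hh
        · simpa using key 0 (by simpa using hd.le)

lemma near_bound {n : ℕ} {θ β N : ℝ} (hθ : 0 < θ) (hβ : 1 < β)
    {Ω : Set (Eu n)} {v f : Eu n → ℝ}
    (H : Core n θ β N Ω v f) {ρ d : ℝ} (hd : 0 < d)
    (hρd : ρ + 8 * d ≤ 2) {h : Eu n} (hh : ‖h‖ ≤ d) (hh0 : 0 < ‖h‖) {k : Eu n} (hk : ‖k‖ ≤ d) :
    ∫⁻ p in ball (0 : Eu n) (ρ + 4 * d) ×ˢ ball (0 : Eu n) (ρ + 4 * d),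
      ENNReal.ofReal (|v (p.1 + k) - v (p.2 + k)| ^ θ * |v (p.1 + h) - v p.1| ^ β *
        dist p.1 p.2 / dist p.1 p.2 ^ N) ≤
    ENNReal.ofReal (‖h‖ ^ β) * ((∫⁻ z in ball (0 : Eu n) 4, ENNReal.ofReal (‖z‖ ^ (1 + θ - N))) *
      (Phi v (θ + β) (ρ + 5 * d) + Phi v (θ + β) (ρ + 5 * d))) := by
  have hv := H.hv
  have hsub : ball (0 : Eu n) (ρ + 5 * d) ⊆ Ω :=
    (ball_subset_closedBall.trans (closedBall_subset_closedBall (by linarith))).trans H.sub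
  have hO : IsOpen {x : Eu n | x + k ∈ Ω} := H.isOpen.preimage (continuous_add_const k)
  refine (near_est (V := fun x => v (x + k)) (w := fun x => v (x + h) - v x)
    (Ω := {x | x + k ∈ Ω}) (b := ρ + 4 * d) hθ hβ.le (by linarith) hh0 (by fun_prop)
    (by fun_prop) hO ?_ ?_).trans ?_
  · intro x hx
    apply hsub
    rw [mem_ball_zero_iff] at hx ⊢
    have := norm_add_le x k
    linarith
  · refine H.cd.comp (by fun_prop) (fun x hx => hx)
  · gcongr
    · exact Phi_shift v k (by linarith)
    · calc _ ≤ ENNReal.ofReal (‖h‖ ^ (-(θ + β))) *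
        (ENNReal.ofReal (‖h‖ ^ (θ + β)) * Phi v (θ + β) (ρ + 5 * d)) := by
            gcongr
            exact diff_est H.isOpen H.cd h (by linarith) (by linarith) hsub
        _ = _ := by
          rw [← mul_assoc, ← ENNReal.ofReal_mul (by positivity), ← Real.rpow_add hh0]
          simp

lemma far_bound {n : ℕ} {θ β N : ℝ} (hθ : 0 < θ) (hβ : 1 < β) (hN : 0 < N) {C : ℝ≥0∞}
    {Ω : Set (Eu n)} {v f : Eu n → ℝ}
    (H : Core n θ β N Ω v f) {ρ d : ℝ} (hρ : 0 ≤ ρ) (hd : 0 < d) (hd1 : d ≤ 1)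
    (hC : ∀ h : Eu n, ‖h‖ ≤ 1 → ∫⁻ y, ENNReal.ofReal (|v (y + h)| ^ θ * (1 + ‖y‖) ^ (-N)) ≤ C)
    (hρd : ρ + 8 * d ≤ 2) {h : Eu n} (hh : ‖h‖ ≤ d) (hh0 : 0 < ‖h‖) {k : Eu n} (hk : ‖k‖ ≤ d) :
    ∫⁻ p in (ball (0 : Eu n) (ρ + 4 * d) ×ˢ ball (0 : Eu n) (ρ + 4 * d))ᶜ,
      ENNReal.ofReal (|v (p.1 + k) - v (p.2 + k)| ^ θ *
        |psi β ρ d v h p.1 - psi β ρ d v h p.2| / dist p.1 p.2 ^ N) ≤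
    2 * (ENNReal.ofReal (2 ^ θ * 4 ^ N) * ENNReal.ofReal (d ^ (-N)) *
      (ENNReal.ofReal (‖h‖ ^ β) * (Wf v (θ + β) (ρ + 5 * d) + Phi v (θ + β) (ρ + 5 * d)) *
        (∫⁻ y : Eu n, ENNReal.ofReal ((1 + ‖y‖) ^ (-N))) +
      ENNReal.ofReal (‖h‖ ^ β) * (volume (ball (0 : Eu n) 2) + Phi v (θ + β) (ρ + 5 * d)) * C)) := by
  have hv := H.hv
  obtain ⟨L, hL⟩ := psi_lip H.isOpen H.cd H.sub hβ.le hd hρ hρd hh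
  have := far_est (V := fun x => v (x + k)) (ψ := psi β ρ d v h) (a := ρ + 3 * d) hθ hN hd hd1
    (by linarith) (by fun_prop) hL.continuous.measurable (fun x hx => psi_zero hd v h x hx)
  rw [show ρ + 3 * d + d = ρ + 4 * d by ring] at this
  refine this.trans ?_
  have e1 : ENNReal.ofReal (2 ^ θ * (4 / d) ^ N) =
      ENNReal.ofReal (2 ^ θ * 4 ^ N) * ENNReal.ofReal (d ^ (-N)) := by
    rw [← ENNReal.ofReal_mul (by positivity), Real.div_rpow (by norm_num) hd.le,
      Real.rpow_neg hd.le]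
    congr 1; ring
  rw [e1]
  gcongr
  · refine (psi_est (A := fun x => v (x + k)) H.isOpen hv (by fun_prop) H.cd H.sub hθ hβ.le hd hρd
      hh hh0).trans ?_
    gcongr
    exact Wf_shift v k (by linarith)
  · have := psi_est (A := fun _ => (1 : ℝ)) H.isOpen hv (by fun_prop) H.cd H.sub hθ hβ.le hd hρd
      hh hh0
    simp only [abs_one, Real.one_rpow, one_mul, ENNReal.ofReal_one, lintegral_const, Measure.restrict_apply,
      MeasurableSet.univ, univ_inter] at this
    refine this.trans ?_
    gcongr
    linarith
  · exact hC k (by linarith)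

set_option maxHeartbeats 1600000 in
lemma energy {n : ℕ} (hn : 1 ≤ n) {θ β N : ℝ} (hθ : 0 < θ) (hβ : 1 < β)
    (hN1 : n + θ < N) (hN2 : N < n + θ + 1) : ∃ C : ℝ≥0∞, C ≠ ⊤ ∧
    ∀ (Ω : Set (Eu n)) (v f : Eu n → ℝ), Core n θ β N Ω v f → ∀ (ρ d : ℝ), 0 ≤ ρ → 0 < d → d ≤ 1 →
    ρ + 8 * d ≤ 2 → ∀ h : Eu n, ‖h‖ ≤ d → 0 < ‖h‖ →
    ∫⁻ p in ball (0 : Eu n) (ρ + 2 * d) ×ˢ ball (0 : Eu n) (ρ + 4 * d),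
      ENNReal.ofReal ((sgnPow θ (v (p.1 + h) - v (p.2 + h)) - sgnPow θ (v p.1 - v p.2)) *
        (sgnPow β (v (p.1 + h) - v p.1) - sgnPow β (v (p.2 + h) - v p.2)) / dist p.1 p.2 ^ N) ≤
    C * (ENNReal.ofReal (d ^ (-N)) * (ENNReal.ofReal (‖h‖ ^ β) *
      (1 + Phi v (θ + β) (ρ + 5 * d) + Wf v (θ + β) (ρ + 5 * d)))) := by
  have hn0 : (1:ℝ) ≤ n := by exact_mod_cast hn
  have hN : 0 < N := by linarith
  obtain ⟨C3, hC3, hCt⟩ := tail_shift (n := n) (p := θ + 1) hθ (by linarith) hN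
  have hK1 : ∫⁻ z in ball (0 : Eu n) 4, ENNReal.ofReal (‖z‖ ^ (1 + θ - N)) ≠ ⊤ :=
    (kernel_finite hn (by linarith) 4).ne
  have hK2 : (∫⁻ y : Eu n, ENNReal.ofReal ((1 + ‖y‖) ^ (-N))) ≠ ⊤ :=
      (finite_integral_one_add_norm (by simp; linarith)).ne
  have hω : volume (ball (0 : Eu n) 2) ≠ ⊤ := measure_ball_lt_top.ne
  set K1 := ∫⁻ z in ball (0 : Eu n) 4, ENNReal.ofReal (‖z‖ ^ (1 + θ - N)) with hK1d
  set K2 := ∫⁻ y : Eu n, ENNReal.ofReal ((1 + ‖y‖) ^ (-N)) with hK2d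
  set ω := volume (ball (0 : Eu n) 2) with hωd
  set c0 := ENNReal.ofReal (2 ^ θ * 4 ^ N) with hc0d
  have hc0 : c0 ≠ ⊤ := by simp [hc0d]
  refine ⟨2 * (2 + 8 * K1 + 4 * (c0 * (K2 + (ω + 1) * C3))), by finiteness, ?_⟩
  intro Ω v f H ρ d hρ hd hd1 hρd h hh hh0
  have hv := H.hv
  have hCt := hCt v H.hv H.hU H.hT
  obtain ⟨hFi, hFe⟩ := form_identity hn hθ hβ hN1 hN2 H hρ hd hd1 hρd hh
  obtain ⟨L, hL⟩ := psi_lip H.isOpen H.cd H.sub hβ.le hd hρ hρd hh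
  have hψm := hL.continuous.measurable
  have hrhs := rhs_est hθ hβ H hρ hd hρd hh hh0
  rw [← hFe] at hrhs
  set B := ball (0 : Eu n) (ρ + 4 * d) with hB
  have hBm : MeasurableSet (B ×ˢ B) := measurableSet_ball.prod measurableSet_ball
  set w : Eu n → ℝ := fun x => v (x + h) - v x with hw
  have hwm : Measurable w := by fun_prop
  set J : Eu n × Eu n → ℝ := fun p => sgnPow θ (v (p.1 + h) - v (p.2 + h)) - sgnPow θ (v p.1 - v p.2)
    with hJ
  set ψ := psi β ρ d v h with hψ
  set F : Eu n × Eu n → ℝ := fun p => J p * (ψ p.1 - ψ p.2) / dist p.1 p.2 ^ N with hF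
  set G : Eu n × Eu n → ℝ := fun p => J p * (sgnPow β (w p.1) - sgnPow β (w p.2)) / dist p.1 p.2 ^ N
    with hG
  have hG0 : ∀ p, 0 ≤ G p := by
    intro p
    simp only [hG, hJ]
    rw [sgnPow_mul_nonneg hθ (by linarith : 0 < β) (by simp only [hw]; ring)]
    positivity
  set S : Eu n × Eu n → ℝ := fun p => |v (p.1 + h) - v (p.2 + h)| ^ θ + |v p.1 - v p.2| ^ θ with hS
  have hJS : ∀ p, |J p| ≤ S p := by
    intro p
    simp only [hJ, hS]
    refine (abs_sub _ _).trans ?_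
    rw [abs_sgnPow hθ, abs_sgnPow hθ]
  have hS0 : ∀ p, 0 ≤ S p := fun p => by simp only [hS]; positivity
  set P : Eu n × Eu n → ℝ := (B ×ˢ B).indicator
    (fun p => G p * ((cutoff ρ d p.1 + cutoff ρ d p.2) / 2)) with hP
  set Q1 : Eu n × Eu n → ℝ := fun p =>
    S p * (|w p.1| ^ β + |w p.2| ^ β) * (dist p.1 p.2 / d) / dist p.1 p.2 ^ N with hQ1
  set Q2 : Eu n × Eu n → ℝ := fun p => S p * |ψ p.1 - ψ p.2| / dist p.1 p.2 ^ N with hQ2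
  have hQ10 : ∀ p, 0 ≤ Q1 p := fun p => by
    simp only [hQ1]; have := hS0 p; positivity
  have hQ20 : ∀ p, 0 ≤ Q2 p := fun p => by
    simp only [hQ2]; have := hS0 p; positivity
  set Q : Eu n × Eu n → ℝ := fun p => (B ×ˢ B).indicator Q1 p + ((B ×ˢ B)ᶜ).indicator Q2 p with hQ
  have hSm : Measurable S := by simp only [hS]; fun_prop
  have hQ1m : Measurable Q1 := by simp only [hQ1]; fun_prop
  have hQ2m : Measurable Q2 := by simp only [hQ2]; fun_prop
  have hQm : Measurable Q := (hQ1m.indicator hBm).add (hQ2m.indicator hBm.compl)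
  have hQ0 : ∀ p, 0 ≤ Q p := fun p => add_nonneg (indicator_nonneg (fun p _ => hQ10 p) p)
    (indicator_nonneg (fun p _ => hQ20 p) p)
  have hP0 : ∀ p, 0 ≤ P p := fun p => indicator_nonneg (fun p _ => mul_nonneg (hG0 p) (by
    have := cutoff_nonneg (ρ := ρ) (d := d) p.1
    have := cutoff_nonneg (ρ := ρ) (d := d) p.2
    positivity)) p
  have hmain : ∀ p, P p ≤ F p + Q p := by
    intro p
    by_cases hp : p ∈ B ×ˢ B
    · simp only [hP, hQ, indicator_of_mem hp, indicator_of_notMem (show p ∉ (B ×ˢ B)ᶜ by simpa using hp),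
        add_zero]
      have hD : 0 ≤ dist p.1 p.2 ^ N := by positivity
      have e : F p = G p * ((cutoff ρ d p.1 + cutoff ρ d p.2) / 2) +
          J p * ((sgnPow β (w p.1) + sgnPow β (w p.2)) / 2) * (cutoff ρ d p.1 - cutoff ρ d p.2) /
            dist p.1 p.2 ^ N := by
        simp only [hF, hG, hψ, psi, hw]; ring
      have e2 : |J p * ((sgnPow β (w p.1) + sgnPow β (w p.2)) / 2) *
          (cutoff ρ d p.1 - cutoff ρ d p.2) / dist p.1 p.2 ^ N| ≤ Q1 p := by
        simp only [hQ1]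
        rw [abs_div, abs_mul, abs_mul, abs_of_nonneg hD]
        have a1 := hJS p
        have a2 : |(sgnPow β (w p.1) + sgnPow β (w p.2)) / 2| ≤ |w p.1| ^ β + |w p.2| ^ β := by
          rw [abs_div, abs_two, ← abs_sgnPow (by linarith : 0 < β), ← abs_sgnPow (by linarith : 0 < β)]
          have := abs_add_le (sgnPow β (w p.1)) (sgnPow β (w p.2))
          have := abs_nonneg (sgnPow β (w p.1) + sgnPow β (w p.2))
          linarith
        have a3 := cutoff_lip (ρ := ρ) hd p.1 p.2
        have := hS0 p
        gcongr
      have := (abs_le.1 e2).1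
      linarith
    · simp only [hP, hQ, indicator_of_notMem hp, indicator_of_mem (show p ∈ (B ×ˢ B)ᶜ from hp),
        zero_add]
      have e2 : |F p| ≤ Q2 p := by
        simp only [hF, hQ2]
        rw [abs_div, abs_mul, abs_of_nonneg (by positivity : 0 ≤ dist p.1 p.2 ^ N)]
        have := hJS p
        gcongr
      have := (abs_le.1 e2).1
      linarith
  have hkey := lint_le_of_le_add hFi hQm.aestronglyMeasurable hQ0 hmain
    (fun p => (hP0 p).trans (hmain p))
  have hlow : ∫⁻ p in ball (0 : Eu n) (ρ + 2 * d) ×ˢ B, ENNReal.ofReal (G p) ≤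
      2 * ∫⁻ p, ENNReal.ofReal (P p) := by
    have hAm : MeasurableSet (ball (0 : Eu n) (ρ + 2 * d) ×ˢ B) :=
      measurableSet_ball.prod measurableSet_ball
    rw [← lintegral_const_mul' _ _ (by norm_num), ← lintegral_indicator hAm]
    refine lintegral_mono fun p => ?_
    by_cases hp : p ∈ ball (0 : Eu n) (ρ + 2 * d) ×ˢ B
    · have hp1 : ‖p.1‖ < ρ + 2 * d := by simpa using hp.1
      have hpB : p ∈ B ×ˢ B := ⟨by rw [hB, mem_ball_zero_iff]; linarith, hp.2⟩
      rw [indicator_of_mem hp]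
      simp only [hP, indicator_of_mem hpB]
      rw [show (2 : ℝ≥0∞) = ENNReal.ofReal 2 by simp, ← ENNReal.ofReal_mul (by norm_num)]
      apply ENNReal.ofReal_le_ofReal
      rw [cutoff_eq_one hd hp1.le]
      have := mul_nonneg (hG0 p) (cutoff_nonneg (ρ := ρ) (d := d) p.2)
      linarith
    · rw [indicator_of_notMem hp]; exact zero_le
  have hQint : ∫⁻ p, ENNReal.ofReal (Q p) ≤ (∫⁻ p in B ×ˢ B, ENNReal.ofReal (Q1 p)) +
      ∫⁻ p in (B ×ˢ B)ᶜ, ENNReal.ofReal (Q2 p) := by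
    rw [← lintegral_add_compl (fun p => ENNReal.ofReal (Q p)) hBm]
    refine add_le_add (setLIntegral_mono' hBm fun p hp => ?_)
      (setLIntegral_mono' hBm.compl fun p hp => ?_)
    · simp only [hQ, indicator_of_mem hp, indicator_of_notMem (show p ∉ (B ×ˢ B)ᶜ by simpa using hp),
        add_zero, le_refl]
    · simp only [hQ, indicator_of_mem hp, indicator_of_notMem (show p ∉ (B ×ˢ B) from hp),
        zero_add, le_refl]
  set Tb := ENNReal.ofReal (‖h‖ ^ β) with hTb
  set Φ := Phi v (θ + β) (ρ + 5 * d) with hΦ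
  set W := Wf v (θ + β) (ρ + 5 * d) with hW
  have hnear : ∫⁻ p in B ×ˢ B, ENNReal.ofReal (Q1 p) ≤
      ENNReal.ofReal (1 / d) * (4 * (Tb * (K1 * (Φ + Φ)))) := by
    set T : Eu n → Eu n × Eu n → ℝ≥0∞ := fun k p =>
      ENNReal.ofReal (|v (p.1 + k) - v (p.2 + k)| ^ θ * |v (p.1 + h) - v p.1| ^ β *
        dist p.1 p.2 / dist p.1 p.2 ^ N) with hTd
    have hTm : ∀ k, Measurable (T k) := fun k => by simp only [hTd]; fun_prop
    have hT1 : ∀ k, ‖k‖ ≤ d → ∫⁻ p in B ×ˢ B, T k p ≤ Tb * (K1 * (Φ + Φ)) := fun k hk =>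
      near_bound hθ hβ H hd hρd hh hh0 hk
    have hT2 : ∀ k, ‖k‖ ≤ d → ∫⁻ p in B ×ˢ B, T k p.swap ≤ Tb * (K1 * (Φ + Φ)) := fun k hk => by
      rw [swap_set_lintegral B measurableSet_ball]; exact hT1 k hk
    have hpt : ∀ p, ENNReal.ofReal (Q1 p) = ENNReal.ofReal (1 / d) *
        (T h p + T h p.swap + T 0 p + T 0 p.swap) := by
      intro p
      simp only [hTd, Prod.fst_swap, Prod.snd_swap]
      rw [← ENNReal.ofReal_add (by positivity) (by positivity),
        ← ENNReal.ofReal_add (by positivity) (by positivity),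
        ← ENNReal.ofReal_add (by positivity) (by positivity), ← ENNReal.ofReal_mul (by positivity)]
      congr 1
      simp only [hQ1, hS, hw, add_zero]
      rw [dist_comm p.2 p.1, abs_sub_comm (v (p.2 + h)) (v (p.1 + h)), abs_sub_comm (v p.2) (v p.1)]
      ring
    simp_rw [hpt]
    rw [lintegral_const_mul _ (by fun_prop), lintegral_add_right _ (by fun_prop),
      lintegral_add_right _ (by fun_prop), lintegral_add_right _ (by fun_prop)]
    gcongr
    have a1 := hT1 h hh
    have a2 := hT2 h hh
    have a3 := hT1 0 (by simpa using hd.le)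
    have a4 := hT2 0 (by simpa using hd.le)
    refine (add_le_add (add_le_add (add_le_add a1 a2) a3) a4).trans (le_of_eq ?_)
    ring
  set D := ENNReal.ofReal (d ^ (-N)) with hDd
  set X := 2 * (c0 * D * (Tb * (W + Φ) * K2 + Tb * (ω + Φ) * C3)) with hX
  have hfar : ∫⁻ p in (B ×ˢ B)ᶜ, ENNReal.ofReal (Q2 p) ≤ X + X := by
    have f1 := far_bound hθ hβ hN H hρ hd hd1 hCt hρd hh hh0 hh
    have f2 := far_bound hθ hβ hN H hρ hd hd1 hCt hρd hh hh0 (k := 0) (by simpa using hd.le)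
    rw [← hψ] at f1 f2
    refine le_trans (le_of_eq ?_) (add_le_add f1 f2)
    rw [← lintegral_add_right _ (by fun_prop)]
    refine lintegral_congr fun p => ?_
    rw [← ENNReal.ofReal_add (by positivity) (by positivity)]
    congr 1
    simp only [hQ2, hS, add_zero]
    ring
  have hD1 : 1 ≤ D := by
    rw [hDd, ← ENNReal.ofReal_one]
    apply ENNReal.ofReal_le_ofReal
    exact Real.one_le_rpow_of_pos_of_le_one_of_nonpos hd hd1 (by linarith)
  have hD2 : ENNReal.ofReal (1 / d) ≤ D := by
    rw [hDd]
    apply ENNReal.ofReal_le_ofReal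
    rw [one_div, ← Real.rpow_neg_one]
    exact Real.rpow_le_rpow_of_exponent_ge hd hd1 (by linarith)
  set Z := 1 + Φ + W with hZ
  have hZ1 : 1 ≤ Z := by rw [hZ, add_assoc]; exact le_self_add
  have hZ2 : Φ ≤ Z := by rw [hZ, add_comm 1, add_assoc]; exact le_self_add
  have hZ3 : 1 + Φ ≤ Z := le_self_add
  have hZ4 : W + Φ ≤ Z := by rw [hZ, add_assoc, add_comm Φ]; exact le_add_self
  have hZ5 : ω + Φ ≤ (ω + 1) * Z := by
    rw [add_mul, one_mul]
    exact add_le_add (le_mul_of_one_le_right' hZ1) hZ2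
  calc _ ≤ 2 * ∫⁻ p, ENNReal.ofReal (P p) := hlow
    _ ≤ 2 * (2 * (Tb * (1 + Φ)) + (ENNReal.ofReal (1 / d) * (4 * (Tb * (K1 * (Φ + Φ)))) + (X + X))) := by
        gcongr
        exact hkey.trans (add_le_add hrhs (hQint.trans (add_le_add hnear hfar)))
    _ ≤ 2 * (2 * (D * (Tb * Z)) + (D * (4 * (Tb * (K1 * (Z + Z)))) +
          (2 * (c0 * D * (Tb * Z * K2 + Tb * ((ω + 1) * Z) * C3)) +
            2 * (c0 * D * (Tb * Z * K2 + Tb * ((ω + 1) * Z) * C3))))) := by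
        have : Tb * (1 + Φ) ≤ D * (Tb * Z) :=
          (mul_le_mul' le_rfl hZ3).trans (le_mul_of_one_le_left' hD1)
        rw [hX]
        gcongr
    _ = _ := by ring

lemma vol_ball {n : ℕ} (x : Eu n) {τ : ℝ} (hτ : 0 < τ) :
    volume (ball x τ) = ENNReal.ofReal (τ ^ (n : ℝ)) * volume (ball (0 : Eu n) 1) := by
  rw [Measure.addHaar_ball_of_pos volume x hτ]
  simp

lemma interp {n : ℕ} {θ β N : ℝ} (hθ : 0 < θ) (hβ : 1 < β) :
    ∃ C : ℝ≥0∞, C ≠ ⊤ ∧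
    ∀ (Ω : Set (Eu n)) (v f : Eu n → ℝ), Core n θ β N Ω v f → ∀ (ρ τ : ℝ), 0 < τ → ρ + τ ≤ 2 →
    Wf v (θ + β) ρ ≤ C * (ENNReal.ofReal (τ ^ (θ + β)) * Phi v (θ + β) (ρ + τ) +
      ENNReal.ofReal (τ ^ (-(n * ((θ + β) / (θ + 1)))))) := by
  set m := θ + β with hm
  set p := θ + 1 with hp
  set q := m / p with hq
  have hp0 : 0 < p := by linarith
  have hq1 : 1 < q := by rw [hq, one_lt_div hp0]; linarith
  have hpq : p * q = m := by rw [hq]; field_simp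
  set ω := volume (ball (0 : Eu n) 1) with hω
  have hω0 : ω ≠ 0 := (measure_ball_pos volume _ one_pos).ne'
  have hωt : ω ≠ ⊤ := measure_ball_lt_top.ne
  set ω2 := volume (ball (0 : Eu n) 2) with hω2
  have hω2t : ω2 ≠ ⊤ := measure_ball_lt_top.ne
  set c := ENNReal.ofReal (2 ^ p) with hc
  have hct : c ≠ ⊤ := by simp [hc]
  set c2 := c ^ q * 2 ^ (q - 1) with hc2
  have hc2t : c2 ≠ ⊤ := by
    rw [hc2]
    refine ENNReal.mul_ne_top (ENNReal.rpow_ne_top_of_nonneg (by linarith) hct)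
      (ENNReal.rpow_ne_top_of_nonneg (by linarith) (by norm_num))
  have hωq : ω ^ (-q) ≠ ⊤ := by
    rw [ENNReal.rpow_neg]
    simp only [ne_eq, ENNReal.inv_eq_top]
    exact (ENNReal.rpow_pos (pos_iff_ne_zero.2 hω0) hωt).ne'
  refine ⟨c2 * (1 + ω2 * ω ^ (-q)), by finiteness, ?_⟩
  intro Ω v f H ρ τ hτ hρ
  have hv := H.hv
  set A := volume (ball (0 : Eu n) τ) with hA
  have hA0 : A ≠ 0 := (measure_ball_pos volume _ hτ).ne'
  have hAt : A ≠ ⊤ := measure_ball_lt_top.ne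
  have hpt : ∀ x ∈ ball (0 : Eu n) ρ, A ^ q * ENNReal.ofReal (|v x| ^ m) ≤
      c2 * (A ^ (q - 1) * (∫⁻ z in ball (0 : Eu n) τ, ENNReal.ofReal (|v (x + z) - v x| ^ m)) + 1) := by
    intro x hx
    have h1 : A * ENNReal.ofReal (|v x| ^ p) ≤
        c * ((∫⁻ z in ball (0 : Eu n) τ, ENNReal.ofReal (|v (x + z) - v x| ^ p)) + 1) := by
      have h2 : ∫⁻ z in ball (0 : Eu n) τ, ENNReal.ofReal (|v (x + z)| ^ p) ≤ 1 := by
        refine le_trans ?_ H.hU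
        have e : ∀ z, v (x + z) = v (z + x) := fun z => by rw [add_comm]
        simp_rw [e]
        refine shift_ball (fun y => ENNReal.ofReal (|v y| ^ p)) x ?_
        rw [mem_ball_zero_iff] at hx; linarith
      have e1 : A * ENNReal.ofReal (|v x| ^ p) =
          ∫⁻ z in ball (0 : Eu n) τ, ENNReal.ofReal (|v x| ^ p) := by
        rw [setLIntegral_const, mul_comm]
      rw [e1]
      calc _ ≤ ∫⁻ z in ball (0 : Eu n) τ, c * (ENNReal.ofReal (|v (x + z) - v x| ^ p) +
            ENNReal.ofReal (|v (x + z)| ^ p)) := by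
            refine lintegral_mono fun z => ?_
            rw [← ENNReal.ofReal_add (by positivity) (by positivity), hc,
              ← ENNReal.ofReal_mul (by positivity)]
            apply ENNReal.ofReal_le_ofReal
            refine le_trans ?_ (two_rpow_bound hp0 (abs_nonneg _) (abs_nonneg _))
            gcongr
            have := abs_sub (v (x + z)) (v (x + z) - v x)
            rw [sub_sub_cancel] at this
            linarith
        _ = c * ((∫⁻ z in ball (0 : Eu n) τ, ENNReal.ofReal (|v (x + z) - v x| ^ p)) +
            ∫⁻ z in ball (0 : Eu n) τ, ENNReal.ofReal (|v (x + z)| ^ p)) := by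
            rw [lintegral_const_mul _ (by fun_prop), lintegral_add_left (by fun_prop)]
        _ ≤ _ := by gcongr
    have h3 := ENNReal.rpow_le_rpow h1 (by linarith : 0 ≤ q)
    rw [ENNReal.mul_rpow_of_nonneg _ _ (by linarith), ENNReal.mul_rpow_of_nonneg _ _ (by linarith),
      ENNReal.ofReal_rpow_of_nonneg (by positivity) (by linarith), ← Real.rpow_mul (abs_nonneg _),
      hpq] at h3
    refine h3.trans ?_
    rw [hc2, mul_assoc]
    gcongr
    refine (ENNReal.rpow_add_le_mul_rpow_add_rpow _ _ hq1.le).trans ?_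
    gcongr
    · refine (jensen_pow (by fun_prop) hq1.le).trans ?_
      rw [Measure.restrict_apply_univ]
      gcongr with z
      rw [ENNReal.ofReal_rpow_of_nonneg (by positivity) (by linarith), ← Real.rpow_mul (abs_nonneg _),
        hpq]
    · simp
  have hItp : A ^ q * Wf v m ρ ≤
      c2 * (A ^ q * (ENNReal.ofReal (τ ^ m) * Phi v m (ρ + τ)) + ω2) := by
    unfold Wf
    rw [← lintegral_const_mul _ (by fun_prop)]
    refine (setLIntegral_mono' measurableSet_ball hpt).trans ?_
    have hmm : Measurable (fun p : Eu n × Eu n => ENNReal.ofReal (|v (p.1 + p.2) - v p.1| ^ m)) := by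
      fun_prop
    have hmm2 : Measurable (fun x : Eu n => ∫⁻ z in ball (0 : Eu n) τ,
        ENNReal.ofReal (|v (x + z) - v x| ^ m)) := hmm.lintegral_prod_right'
    rw [lintegral_const_mul _ (by fun_prop), lintegral_add_left (by fun_prop),
      lintegral_const_mul _ (by fun_prop), setLIntegral_const, one_mul]
    gcongr c2 * ?_
    refine add_le_add ?_ (measure_mono (ball_subset_ball (by linarith)))
    · calc _ = A ^ (q - 1) * ∫⁻ z in ball (0 : Eu n) τ, ∫⁻ x in ball (0 : Eu n) ρ,
              ENNReal.ofReal (|v (x + z) - v x| ^ m) := by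
            rw [lintegral_lintegral_swap]
            exact hmm.aemeasurable
        _ ≤ A ^ (q - 1) * ∫⁻ z in ball (0 : Eu n) τ, ENNReal.ofReal (τ ^ m) * Phi v m (ρ + τ) := by
            gcongr A ^ (q - 1) * ?_
            refine setLIntegral_mono' measurableSet_ball fun z hz => ?_
            rw [mem_ball_zero_iff] at hz
            refine (diff_est H.isOpen H.cd z (b := ρ + τ) (by linarith) (by linarith)
              ((ball_subset_closedBall.trans (closedBall_subset_closedBall (by linarith))).trans
                H.sub)).trans ?_
            gcongr
        _ = A ^ q * _ := by
            rw [setLIntegral_const, ← hA, mul_comm _ A, ← mul_assoc]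
            congr 1
            nth_rewrite 2 [← ENNReal.rpow_one A]
            rw [← ENNReal.rpow_add _ _ hA0 hAt, sub_add_cancel]
  have hAq0 : A ^ q ≠ 0 := (ENNReal.rpow_pos (pos_iff_ne_zero.2 hA0) hAt).ne'
  have hAqt : A ^ q ≠ ⊤ := ENNReal.rpow_ne_top_of_nonneg (by linarith) hAt
  have hAinv : (A ^ q)⁻¹ = ENNReal.ofReal (τ ^ (-(n * q))) * ω ^ (-q) := by
    rw [← ENNReal.rpow_neg, hA, vol_ball 0 hτ, ENNReal.mul_rpow_of_ne_top (by simp) hωt,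
      ENNReal.ofReal_rpow_of_pos (by positivity), ← Real.rpow_mul hτ.le]
    congr 3; ring
  calc Wf v m ρ = (A ^ q)⁻¹ * (A ^ q * Wf v m ρ) := by
        rw [← mul_assoc, ENNReal.inv_mul_cancel hAq0 hAqt, one_mul]
    _ ≤ (A ^ q)⁻¹ * (c2 * (A ^ q * (ENNReal.ofReal (τ ^ m) * Phi v m (ρ + τ)) + ω2)) := by gcongr
    _ = c2 * (((A ^ q)⁻¹ * A ^ q) * (ENNReal.ofReal (τ ^ m) * Phi v m (ρ + τ)) + (A ^ q)⁻¹ * ω2) := by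
        ring
    _ = c2 * (ENNReal.ofReal (τ ^ m) * Phi v m (ρ + τ) +
          ω2 * ω ^ (-q) * ENNReal.ofReal (τ ^ (-(n * q)))) := by
        rw [ENNReal.inv_mul_cancel hAq0 hAqt, one_mul, hAinv]; ring
    _ ≤ c2 * ((1 + ω2 * ω ^ (-q)) * (ENNReal.ofReal (τ ^ m) * Phi v m (ρ + τ)) +
          (1 + ω2 * ω ^ (-q)) * ENNReal.ofReal (τ ^ (-(n * q)))) := by
        gcongr c2 * ?_
        refine add_le_add (le_mul_of_one_le_left' le_self_add) ?_
        gcongr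
        exact le_add_self
    _ = _ := by ring

lemma band_meas {n : ℕ} (a t : ℝ) :
    MeasurableSet {p : Eu n × Eu n | p.1 ∈ ball (0 : Eu n) a ∧ dist p.2 p.1 < t} := by
  refine MeasurableSet.inter (measurable_fst measurableSet_ball) ?_
  exact measurableSet_lt (f := fun p : Eu n × Eu n => dist p.2 p.1) (g := fun _ => t)
    (by fun_prop) measurable_const

lemma iter_set {n : ℕ} {a t : ℝ} {g : Eu n × Eu n → ℝ≥0∞} (hg : Measurable g) :
    ∫⁻ x in ball (0 : Eu n) a, ∫⁻ y in ball x t, g (x, y) =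
      ∫⁻ p in {p : Eu n × Eu n | p.1 ∈ ball (0 : Eu n) a ∧ dist p.2 p.1 < t}, g p := by
  have hS : MeasurableSet {p : Eu n × Eu n | p.1 ∈ ball (0 : Eu n) a ∧ dist p.2 p.1 < t} := band_meas _ _
  rw [← lintegral_indicator hS, Measure.volume_eq_prod,
    lintegral_prod _ (hg.indicator hS).aemeasurable, ← lintegral_indicator measurableSet_ball]
  refine lintegral_congr fun x => ?_
  by_cases hx : x ∈ ball (0 : Eu n) a
  · rw [indicator_of_mem hx, ← lintegral_indicator measurableSet_ball]
    refine lintegral_congr fun y => ?_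
    by_cases hy : y ∈ ball x t
    · rw [indicator_of_mem hy, indicator_of_mem (by exact ⟨hx, hy⟩)]
    · rw [indicator_of_notMem hy, indicator_of_notMem (by exact fun h => hy h.2)]
  · rw [indicator_of_notMem hx]
    symm
    rw [lintegral_eq_zero_iff' (by apply Measurable.aemeasurable; exact (hg.indicator hS).comp (by fun_prop : Measurable fun y : Eu n => (x, y)))]
    refine ae_of_all _ fun y => ?_
    show indicator _ g (x, y) = 0
    rw [indicator_of_notMem (by exact fun h => hx h.1)]

lemma band_est {n : ℕ} {θ β N : ℝ} (hθ : 0 < θ) (hβ : 1 < β)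
    {Ω : Set (Eu n)} {v f : Eu n → ℝ}
    (H : Core n θ β N Ω v f) {ρ d t : ℝ} (hd : 0 < d) (ht : t ≤ d) (ht0 : 0 < t)
    (hρd : ρ + 8 * d ≤ 2) {k : Eu n} (hk : ‖k‖ ≤ d) :
    ∫⁻ p in {p : Eu n × Eu n | p.1 ∈ ball (0 : Eu n) (ρ + 2 * d) ∧ dist p.2 p.1 < t},
      ENNReal.ofReal (|v (p.1 + k) - v (p.2 + k)| ^ (θ + β)) ≤
    ENNReal.ofReal (t ^ (n + (θ + β))) * volume (ball (0 : Eu n) 1) * Phi v (θ + β) (ρ + 5 * d) := by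
  have hv := H.hv
  set m := θ + β with hm
  have hsub : ball (0 : Eu n) (ρ + 5 * d) ⊆ Ω :=
    (ball_subset_closedBall.trans (closedBall_subset_closedBall (by linarith))).trans H.sub
  have hO : IsOpen {x : Eu n | x + k ∈ Ω} := H.isOpen.preimage (continuous_add_const k)
  set B := ball (0 : Eu n) (ρ + 4 * d) with hB
  set K : Eu n → ℝ≥0∞ := (ball (0 : Eu n) t).indicator (fun _ => 1) with hK
  have hKm : Measurable K := Measurable.indicator measurable_const measurableSet_ball
  have hS : MeasurableSet {p : Eu n × Eu n | p.1 ∈ ball (0 : Eu n) (ρ + 2 * d) ∧ dist p.2 p.1 < t} := band_meas _ _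
  have hpair := pairs_est (v := fun x => v (x + k)) (Ω := {x | x + k ∈ Ω}) (B := B) (m := m) (by fun_prop) hO
    (H.cd.comp (by fun_prop) (fun x hx => hx)) (convex_ball 0 _) measurableSet_ball
    (fun x hx => by
      apply hsub
      rw [hB, mem_ball_zero_iff] at hx
      rw [mem_ball_zero_iff]
      have := norm_add_le x k
      linarith) (by linarith) hKm
  calc _ ≤ ∫⁻ p in B ×ˢ B, K (p.2 - p.1) * ENNReal.ofReal (|v (p.2 + k) - v (p.1 + k)| ^ m) := by
        rw [← lintegral_indicator hS, ← lintegral_indicator (measurableSet_ball.prod measurableSet_ball)]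
        refine lintegral_mono fun p => ?_
        by_cases hp : p ∈ {p : Eu n × Eu n | p.1 ∈ ball (0 : Eu n) (ρ + 2 * d) ∧ dist p.2 p.1 < t}
        · have hp1 : ‖p.1‖ < ρ + 2 * d := by simpa using hp.1
          have hp2 : ‖p.2 - p.1‖ < t := by rw [← dist_eq_norm]; exact hp.2
          have hp3 : ‖p.2‖ ≤ ‖p.1‖ + ‖p.2 - p.1‖ := by
            have := norm_add_le p.1 (p.2 - p.1); simpa using this
          rw [indicator_of_mem hp, indicator_of_mem (by
            exact ⟨by rw [mem_ball_zero_iff]; linarith, by rw [mem_ball_zero_iff]; linarith⟩),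
            hK, indicator_of_mem (by simpa using hp2), one_mul, abs_sub_comm]
        · rw [indicator_of_notMem hp]; exact zero_le
    _ ≤ _ := hpair
    _ ≤ _ := by
      gcongr
      · calc _ ≤ ∫⁻ z in ball (0 : Eu n) t, ENNReal.ofReal (t ^ m) := by
              rw [← lintegral_indicator measurableSet_ball]
              refine lintegral_mono fun z => ?_
              by_cases hz : z ∈ ball (0 : Eu n) t
              · rw [hK, indicator_of_mem hz, indicator_of_mem hz, one_mul]
                apply ENNReal.ofReal_le_ofReal
                rw [mem_ball_zero_iff] at hz
                gcongr
              · rw [hK, indicator_of_notMem hz, zero_mul]; exact zero_le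
          _ = _ := by
              rw [setLIntegral_const, vol_ball 0 ht0, ← mul_assoc, ← ENNReal.ofReal_mul (by positivity),
                ← Real.rpow_add ht0, add_comm m]
      · exact Phi_shift v k (by linarith)

set_option maxHeartbeats 1000000 in
lemma second_diff_a {n : ℕ} (hn : 1 ≤ n) {θ β N : ℝ} (hθ : 0 < θ) (hβ : 1 < β)
    (hN1 : n + θ < N) (hN2 : N < n + θ + 1) : ∃ C : ℝ≥0∞, C ≠ ⊤ ∧
    ∀ (Ω : Set (Eu n)) (v f : Eu n → ℝ), Core n θ β N Ω v f → ∀ (ρ d : ℝ), 0 ≤ ρ → 0 < d → d ≤ 1 →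
    ρ + 8 * d ≤ 2 → ∀ h : Eu n, ‖h‖ ≤ d → 0 < ‖h‖ →
    ∫⁻ x in ball (0 : Eu n) (ρ + 2 * d), ∫⁻ y in ball x ‖h‖,
      ENNReal.ofReal (|(v (x + h) - v x) - (v (y + h) - v y)| ^ (θ + β)) ≤
    C * (ENNReal.ofReal (d ^ (-(N + n * ((θ + β) / (θ + 1))))) *
      (ENNReal.ofReal (‖h‖ ^ (n + (θ + β) + (N - n - θ) / 2)) *
      (1 + Phi v (θ + β) (ρ + 6 * d)))) := by
  have hn0 : (1:ℝ) ≤ n := by exact_mod_cast hn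
  obtain ⟨C1, hC1, hen⟩ := energy hn hθ hβ hN1 hN2
  obtain ⟨C2, hC2, hItp⟩ := interp (n := n) (N := N) hθ hβ
  obtain ⟨C3, hC3, hka⟩ := key_algebra hθ hβ.le
  set ω := volume (ball (0 : Eu n) 1) with hω
  have hωt : ω ≠ ⊤ := measure_ball_lt_top.ne
  set m := θ + β with hm
  set q := m / (θ + 1) with hq
  have hq0 : 0 < q := by positivity
  refine ⟨ENNReal.ofReal (2 ^ m) * (ω + ω) + ENNReal.ofReal C3 * (C1 * (1 + C2 * 2)), by finiteness, ?_⟩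
  intro Ω v f H ρ d hρ hd hd1 hρd h hh hh0
  have hv := H.hv
  set t := ‖h‖ with ht
  set γ := N - n - θ with hγ
  have ht1 : t ≤ 1 := hh.trans hd1
  set ε := t ^ (γ / 2) with hε
  have hε0 : 0 < ε := by positivity
  have hε1 : ε ≤ 1 := Real.rpow_le_one hh0.le ht1 (by linarith)
  set Φ := Phi v m (ρ + 6 * d) with hΦ
  have hΦ5 : Phi v m (ρ + 5 * d) ≤ Φ := Phi_mono v m (by linarith)
  -- energy combined with interpolation
  set S := {p : Eu n × Eu n | p.1 ∈ ball (0 : Eu n) (ρ + 2 * d) ∧ dist p.2 p.1 < t} with hSd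
  have hS : MeasurableSet S := band_meas _ _
  set P : Eu n × Eu n → ℝ := fun p =>
    (sgnPow θ (v (p.1 + h) - v (p.2 + h)) - sgnPow θ (v p.1 - v p.2)) *
        (sgnPow β (v (p.1 + h) - v p.1) - sgnPow β (v (p.2 + h) - v p.2)) with hP
  have hP0 : ∀ p, 0 ≤ P p := fun p => by
    simp only [hP]
    rw [sgnPow_mul_nonneg hθ (by linarith : 0 < β) (by ring)]
    positivity
  have hsθ := measurable_sgnPow θ
  have hsβ := measurable_sgnPow β
  have hPm : Measurable P := by simp only [hP]; fun_prop
  set Dq := ENNReal.ofReal (d ^ (-(N + n * q))) with hDq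
  have hDN : ENNReal.ofReal (d ^ (-N)) * ENNReal.ofReal (d ^ (-(n * q))) = Dq := by
    rw [← ENNReal.ofReal_mul (by positivity), ← Real.rpow_add hd, hDq, neg_add]
  have hd_nq : 1 ≤ ENNReal.ofReal (d ^ (-(n * q))) := by
    rw [← ENNReal.ofReal_one]
    apply ENNReal.ofReal_le_ofReal
    refine Real.one_le_rpow_of_pos_of_le_one_of_nonpos hd hd1 ?_
    have : 0 ≤ n * q := by positivity
    linarith
  have hDq1 : 1 ≤ Dq := by
    rw [← hDN]
    refine one_le_mul ?_ hd_nq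
    rw [← ENNReal.ofReal_one]
    apply ENNReal.ofReal_le_ofReal
    exact Real.one_le_rpow_of_pos_of_le_one_of_nonpos hd hd1 (by linarith)
  have hE : ∫⁻ p in S, ENNReal.ofReal (P p) ≤ ENNReal.ofReal (t ^ N) *
      (C1 * (Dq * (ENNReal.ofReal (t ^ β) * ((1 + C2 * 2) * (1 + Φ))))) := by
    calc _ ≤ ∫⁻ p in S, ENNReal.ofReal (t ^ N) * ENNReal.ofReal (P p / dist p.1 p.2 ^ N) := by
          refine setLIntegral_mono' hS fun p hp => ?_
          rw [← ENNReal.ofReal_mul (by positivity)]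
          apply ENNReal.ofReal_le_ofReal
          rcases eq_or_ne p.1 p.2 with he | he
          · have : P p = 0 := by simp only [hP]; rw [he]; ring
            rw [this]; simp
          have hr : 0 < dist p.1 p.2 := dist_pos.2 he
          have hrt : dist p.1 p.2 ≤ t := by rw [dist_comm]; exact hp.2.le
          rw [mul_div_assoc', le_div_iff₀ (by positivity), mul_comm]
          have := hP0 p
          gcongr
          linarith
      _ = ENNReal.ofReal (t ^ N) * ∫⁻ p in S, ENNReal.ofReal (P p / dist p.1 p.2 ^ N) := by
          rw [lintegral_const_mul _ (by fun_prop)]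
      _ ≤ ENNReal.ofReal (t ^ N) * ∫⁻ p in ball (0 : Eu n) (ρ + 2 * d) ×ˢ ball (0 : Eu n) (ρ + 4 * d),
            ENNReal.ofReal (P p / dist p.1 p.2 ^ N) := by
          gcongr
          intro p hp
          have hp1 : ‖p.1‖ < ρ + 2 * d := by simpa using hp.1
          have hp2 : ‖p.2 - p.1‖ < t := by rw [← dist_eq_norm]; exact hp.2
          have hp3 : ‖p.2‖ ≤ ‖p.1‖ + ‖p.2 - p.1‖ := by
            have := norm_add_le p.1 (p.2 - p.1); simpa using this
          exact ⟨hp.1, by rw [mem_ball_zero_iff]; linarith⟩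
      _ ≤ ENNReal.ofReal (t ^ N) * (C1 * (ENNReal.ofReal (d ^ (-N)) * (ENNReal.ofReal (t ^ β) *
            (1 + Phi v m (ρ + 5 * d) + Wf v m (ρ + 5 * d))))) := by
          gcongr
          exact hen Ω v f H ρ d hρ hd hd1 hρd h hh hh0
      _ ≤ ENNReal.ofReal (t ^ N) * (C1 * (ENNReal.ofReal (d ^ (-N)) * (ENNReal.ofReal (t ^ β) *
            (ENNReal.ofReal (d ^ (-(n * q))) * ((1 + C2 * 2) * (1 + Φ)))))) := by
          have hW := hItp Ω v f H (ρ + 5 * d) d hd (by linarith)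
          rw [show ρ + 5 * d + d = ρ + 6 * d by ring, ← hΦ] at hW
          have hdm : ENNReal.ofReal (d ^ m) ≤ ENNReal.ofReal (d ^ (-(n * q))) := by
            refine le_trans ?_ hd_nq
            rw [← ENNReal.ofReal_one]
            apply ENNReal.ofReal_le_ofReal
            exact Real.rpow_le_one hd.le hd1 (by linarith)
          gcongr
          set e := ENNReal.ofReal (d ^ (-(n * q)))
          calc 1 + Phi v m (ρ + 5 * d) + Wf v m (ρ + 5 * d)
              ≤ (1 + Φ) + C2 * (e * Φ + e) := by
                refine add_le_add (add_le_add le_rfl hΦ5) (hW.trans ?_)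
                gcongr
            _ ≤ e * (1 + Φ) + C2 * (e * (1 + Φ) + e * (1 + Φ)) := by
                refine add_le_add (le_mul_of_one_le_left' hd_nq) ?_
                gcongr
                · exact le_add_self
                · exact le_mul_of_one_le_right' le_self_add
            _ = e * ((1 + C2 * 2) * (1 + Φ)) := by ring
      _ = _ := by rw [← hDN]; ring
  have hb1 := band_est hθ hβ H hd hh hh0 hρd hh
  have hb2 := band_est hθ hβ H hd hh hh0 hρd (k := 0) (by simpa using hd.le)
  rw [← hSd, ← hm] at hb1 hb2
  set Tn := ENNReal.ofReal (t ^ (n + m + γ / 2)) with hTn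
  have hT1 : ENNReal.ofReal (ε ^ m) * ENNReal.ofReal (t ^ (n + m)) ≤ Tn := by
    rw [← ENNReal.ofReal_mul (by positivity), hε, ← Real.rpow_mul hh0.le, ← Real.rpow_add hh0]
    apply ENNReal.ofReal_le_ofReal
    apply Real.rpow_le_rpow_of_exponent_ge hh0 ht1
    have h1 : 1 ≤ m := by linarith
    have h2 : 0 < γ / 2 := by linarith
    nlinarith
  have hT2 : ENNReal.ofReal (1 / ε) * (ENNReal.ofReal (t ^ N) * ENNReal.ofReal (t ^ β)) = Tn := by
    rw [← ENNReal.ofReal_mul (by positivity), ← ENNReal.ofReal_mul (by positivity), hε, one_div,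
      ← Real.rpow_neg hh0.le, ← Real.rpow_add hh0, ← Real.rpow_add hh0, hTn]
    congr 2
    rw [hm, hγ]; ring
  rw [iter_set (g := fun p => ENNReal.ofReal (|(v (p.1 + h) - v p.1) - (v (p.2 + h) - v p.2)| ^ m))
    (by fun_prop)]
  calc _ ≤ ∫⁻ p in S, (ENNReal.ofReal (ε ^ m) * (ENNReal.ofReal (2 ^ m) *
          (ENNReal.ofReal (|v (p.1 + h) - v (p.2 + h)| ^ m) +
            ENNReal.ofReal (|v (p.1 + 0) - v (p.2 + 0)| ^ m))) +
          ENNReal.ofReal C3 * (ENNReal.ofReal (1 / ε) * ENNReal.ofReal (P p))) := by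
        refine lintegral_mono fun p => ?_
        simp only [add_zero]
        have hPp := hP0 p
        rw [← ENNReal.ofReal_add (by positivity) (by positivity), ← ENNReal.ofReal_mul (by positivity),
          ← ENNReal.ofReal_mul (by positivity), ← ENNReal.ofReal_mul (by positivity),
          ← ENNReal.ofReal_mul (by positivity), ← ENNReal.ofReal_add (by positivity) (by positivity)]
        apply ENNReal.ofReal_le_ofReal
        have := hka ε hε0 hε1 (v (p.1 + h) - v (p.2 + h)) (v p.1 - v p.2) (v (p.1 + h) - v p.1)
          (v (p.2 + h) - v p.2) (by ring)
        rw [show (v (p.1 + h) - v p.1) - (v (p.2 + h) - v p.2) =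
          v (p.1 + h) - v (p.2 + h) - (v p.1 - v p.2) by ring]
        refine this.trans (add_le_add ?_ (le_of_eq ?_))
        · gcongr
          exact two_rpow_bound (by linarith) (abs_nonneg _) (abs_nonneg _)
        · simp only [hP]; ring
    _ = ENNReal.ofReal (ε ^ m) * (ENNReal.ofReal (2 ^ m) *
          ((∫⁻ p in S, ENNReal.ofReal (|v (p.1 + h) - v (p.2 + h)| ^ m)) +
            ∫⁻ p in S, ENNReal.ofReal (|v (p.1 + 0) - v (p.2 + 0)| ^ m))) +
          ENNReal.ofReal C3 * (ENNReal.ofReal (1 / ε) * ∫⁻ p in S, ENNReal.ofReal (P p)) := by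
        rw [lintegral_add_left (by fun_prop), lintegral_const_mul _ (by fun_prop),
          lintegral_const_mul _ (by fun_prop), lintegral_add_left (by fun_prop),
          lintegral_const_mul _ (by fun_prop), lintegral_const_mul _ (by fun_prop)]
    _ ≤ ENNReal.ofReal (ε ^ m) * (ENNReal.ofReal (2 ^ m) *
          (ENNReal.ofReal (t ^ (n + m)) * ω * Φ + ENNReal.ofReal (t ^ (n + m)) * ω * Φ)) +
          ENNReal.ofReal C3 * (ENNReal.ofReal (1 / ε) * (ENNReal.ofReal (t ^ N) *
      (C1 * (Dq * (ENNReal.ofReal (t ^ β) * ((1 + C2 * 2) * (1 + Φ))))))) := by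
        gcongr
        · exact hb1.trans (by gcongr)
        · exact hb2.trans (by gcongr)
    _ = (ENNReal.ofReal (ε ^ m) * ENNReal.ofReal (t ^ (n + m))) * (ENNReal.ofReal (2 ^ m) * (ω + ω) * Φ) +
          (ENNReal.ofReal (1 / ε) * (ENNReal.ofReal (t ^ N) * ENNReal.ofReal (t ^ β))) *
          (ENNReal.ofReal C3 * (C1 * (1 + C2 * 2)) * (Dq * (1 + Φ))) := by ring
    _ ≤ Tn * (ENNReal.ofReal (2 ^ m) * (ω + ω) * (Dq * (1 + Φ))) +
          Tn * (ENNReal.ofReal C3 * (C1 * (1 + C2 * 2)) * (Dq * (1 + Φ))) := by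
        rw [hT2]
        have : Φ ≤ Dq * (1 + Φ) := le_add_self.trans (le_mul_of_one_le_left' hDq1)
        gcongr
    _ = _ := by ring

lemma ball_avg_meas {n : ℕ} {t : ℝ} {g : Eu n × Eu n → ℝ≥0∞} (hg : Measurable g) :
    Measurable fun x : Eu n => ∫⁻ y in ball x t, g (x, y) := by
  have hS : MeasurableSet {p : Eu n × Eu n | dist p.2 p.1 < t} :=
    measurableSet_lt (f := fun p : Eu n × Eu n => dist p.2 p.1) (g := fun _ => t)
      (by fun_prop) measurable_const
  have := (hg.indicator hS).lintegral_prod_right' (ν := (volume : Measure (Eu n)))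
  convert this using 2 with x
  rw [← lintegral_indicator measurableSet_ball]
  refine lintegral_congr fun y => ?_
  by_cases hy : y ∈ ball x t
  · rw [indicator_of_mem hy, indicator_of_mem (by exact hy)]
  · rw [indicator_of_notMem hy, indicator_of_notMem (by exact hy)]

lemma second_diff_pt {n : ℕ} {m : ℝ} (hm : 0 < m) (w : Eu n → ℝ) (hw : Measurable w) (x h : Eu n)
    (hh : 0 < ‖h‖) :
    (ENNReal.ofReal ((‖h‖ / 2) ^ (n : ℝ)) * volume (ball (0 : Eu n) 1)) *
      ENNReal.ofReal (|w (x + h) - w x| ^ m) ≤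
    ENNReal.ofReal (2 ^ m) * ((∫⁻ y in ball (x + h) ‖h‖, ENNReal.ofReal (|w (x + h) - w y| ^ m)) +
      ∫⁻ y in ball x ‖h‖, ENNReal.ofReal (|w x - w y| ^ m)) := by
  set t := ‖h‖ with ht
  set z := x + (1 / 2 : ℝ) • h with hz
  have hs1 : ball z (t / 2) ⊆ ball (x + h) t := by
    apply ball_subset_ball'
    rw [hz, dist_eq_norm, show x + (1 / 2 : ℝ) • h - (x + h) = (-(1 / 2) : ℝ) • h by module, norm_smul]
    norm_num
    linarith
  have hs2 : ball z (t / 2) ⊆ ball x t := by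
    apply ball_subset_ball'
    rw [hz, dist_eq_norm, show x + (1 / 2 : ℝ) • h - x = (1 / 2 : ℝ) • h by module, norm_smul]
    norm_num
    linarith
  rw [← vol_ball z (by positivity : 0 < t / 2), mul_comm, ← setLIntegral_const]
  calc _ ≤ ∫⁻ y in ball z (t / 2), ENNReal.ofReal (2 ^ m) * (ENNReal.ofReal (|w (x + h) - w y| ^ m) +
          ENNReal.ofReal (|w x - w y| ^ m)) := by
        refine lintegral_mono fun y => ?_
        rw [← ENNReal.ofReal_add (by positivity) (by positivity), ← ENNReal.ofReal_mul (by positivity)]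
        apply ENNReal.ofReal_le_ofReal
        refine le_trans ?_ (two_rpow_bound hm (abs_nonneg _) (abs_nonneg _))
        gcongr
        have := abs_sub_le (w (x + h)) (w y) (w x)
        rwa [abs_sub_comm (w y) (w x)] at this
    _ = ENNReal.ofReal (2 ^ m) * ((∫⁻ y in ball z (t / 2), ENNReal.ofReal (|w (x + h) - w y| ^ m)) +
      ∫⁻ y in ball z (t / 2), ENNReal.ofReal (|w x - w y| ^ m)) := by
        rw [lintegral_const_mul _ (by fun_prop), lintegral_add_left (by fun_prop)]
    _ ≤ _ := by
        refine mul_le_mul_right (add_le_add ?_ ?_) _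
        · exact lintegral_mono_set hs1
        · exact lintegral_mono_set hs2

set_option maxHeartbeats 1000000 in
lemma second_diff {n : ℕ} (hn : 1 ≤ n) {θ β N : ℝ} (hθ : 0 < θ) (hβ : 1 < β)
    (hN1 : n + θ < N) (hN2 : N < n + θ + 1) : ∃ C : ℝ≥0∞, C ≠ ⊤ ∧
    ∀ (Ω : Set (Eu n)) (v f : Eu n → ℝ), Core n θ β N Ω v f → ∀ (ρ d : ℝ), 0 ≤ ρ → 0 < d → d ≤ 1 →
    ρ + 8 * d ≤ 2 → ∀ h : Eu n, ‖h‖ ≤ d → 0 < ‖h‖ →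
    ∫⁻ x in ball (0 : Eu n) (ρ + d),
      ENNReal.ofReal (|(v (x + h + h) - v (x + h)) - (v (x + h) - v x)| ^ (θ + β)) ≤
    C * (ENNReal.ofReal (d ^ (-(N + n * ((θ + β) / (θ + 1))))) *
      (ENNReal.ofReal (‖h‖ ^ ((θ + β) + (N - n - θ) / 2)) *
      (1 + Phi v (θ + β) (ρ + 6 * d)))) := by
  obtain ⟨C, hC, hsd⟩ := second_diff_a hn hθ hβ hN1 hN2
  set ω := volume (ball (0 : Eu n) 1) with hω
  have hωt : ω ≠ ⊤ := measure_ball_lt_top.ne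
  have hω0 : ω ≠ 0 := (measure_ball_pos volume 0 one_pos).ne'
  refine ⟨ENNReal.ofReal (2 ^ (θ + β)) * 2 * C * ENNReal.ofReal (2 ^ (n : ℝ)) * ω⁻¹, by finiteness, ?_⟩
  intro Ω v f H ρ d hρ hd hd1 hρd h hh hh0
  have hA := hsd Ω v f H ρ d hρ hd hd1 hρd h hh hh0
  have hv := H.hv
  set m := θ + β with hm
  set t := ‖h‖ with ht
  set w : Eu n → ℝ := fun x => v (x + h) - v x with hw
  have hwm : Measurable w := by simp only [hw]; fun_prop
  set G : Eu n → ℝ≥0∞ := fun x => ∫⁻ y in ball x t, ENNReal.ofReal (|w x - w y| ^ m) with hG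
  have hGm : Measurable G := ball_avg_meas (g := fun p => ENNReal.ofReal (|w p.1 - w p.2| ^ m)) (by fun_prop)
  set a := ENNReal.ofReal ((t / 2) ^ (n : ℝ)) * ω with ha
  have ha0 : a ≠ 0 := by
    exact mul_ne_zero (ENNReal.ofReal_pos.2 (by positivity)).ne' hω0
  have hat : a ≠ ⊤ := by finiteness
  rw [← ENNReal.mul_le_mul_iff_right ha0 hat]
  have htn : ENNReal.ofReal (t ^ (n + m + (N - n - θ) / 2)) = ENNReal.ofReal ((t / 2) ^ (n : ℝ)) *
      (ENNReal.ofReal (2 ^ (n : ℝ)) * ENNReal.ofReal (t ^ (m + (N - n - θ) / 2))) := by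
    rw [← ENNReal.ofReal_mul (by positivity), ← ENNReal.ofReal_mul (by positivity), ← mul_assoc,
      ← Real.mul_rpow (by positivity) (by positivity), div_mul_cancel₀ _ (by norm_num), ← Real.rpow_add hh0]
    congr 2; ring
  calc _ = ∫⁻ x in ball (0 : Eu n) (ρ + d), a * ENNReal.ofReal (|w (x + h) - w x| ^ m) := by
        rw [lintegral_const_mul _ (by fun_prop)]
    _ ≤ ∫⁻ x in ball (0 : Eu n) (ρ + d), ENNReal.ofReal (2 ^ m) * (G (x + h) + G x) :=
        lintegral_mono fun x => second_diff_pt (by linarith) w hwm x h hh0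
    _ = ENNReal.ofReal (2 ^ m) * ((∫⁻ x in ball (0 : Eu n) (ρ + d), G (x + h)) +
          ∫⁻ x in ball (0 : Eu n) (ρ + d), G x) := by
        rw [lintegral_const_mul _ (by fun_prop), lintegral_add_left (by fun_prop)]
    _ ≤ ENNReal.ofReal (2 ^ m) * ((∫⁻ x in ball (0 : Eu n) (ρ + 2 * d), G x) +
          ∫⁻ x in ball (0 : Eu n) (ρ + 2 * d), G x) := by
        refine mul_le_mul_right (add_le_add ?_ ?_) _
        · exact shift_ball G h (by linarith)
        · exact lintegral_mono_set (ball_subset_ball (by linarith))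
    _ ≤ ENNReal.ofReal (2 ^ m) * (2 * (C * (ENNReal.ofReal (d ^ (-(N + n * (m / (θ + 1))))) *
      (ENNReal.ofReal (t ^ (n + m + (N - n - θ) / 2)) *
      (1 + Phi v m (ρ + 6 * d)))))) := by
        rw [← two_mul]; gcongr
    _ = (ω * ω⁻¹) * (ENNReal.ofReal (2 ^ m) * (2 * (C * (ENNReal.ofReal (d ^ (-(N + n * (m / (θ + 1))))) *
      (ENNReal.ofReal (t ^ (n + m + (N - n - θ) / 2)) *
      (1 + Phi v m (ρ + 6 * d))))))) := by
        rw [ENNReal.mul_inv_cancel hω0 hωt, one_mul]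
    _ = _ := by rw [htn, ha]; ring

lemma minkowski {X : Type*} [MeasurableSpace X] {μ : Measure X} {m : ℝ} (hm : 1 ≤ m)
    {a b : X → ℝ} (ha : Measurable a) (hb : Measurable b) :
    (∫⁻ x, ENNReal.ofReal (|b x| ^ m) ∂μ) ^ (1 / m) ≤
      (∫⁻ x, ENNReal.ofReal (|a x| ^ m) ∂μ) ^ (1 / m) +
      (∫⁻ x, ENNReal.ofReal (|b x - a x| ^ m) ∂μ) ^ (1 / m) := by
  simp only [fun a : ℝ => ofReal_abs_rpow (a := a) (by linarith : 0 ≤ m)]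
  refine le_trans ?_ (ENNReal.lintegral_Lp_add_le (μ := μ) (f := fun x => ‖a x‖ₑ)
    (g := fun x => ‖b x - a x‖ₑ) (by fun_prop) (by fun_prop) hm)
  gcongr with x
  have := enorm_add_le (a x) (b x - a x)
  simpa using this

lemma telescope {X : Type*} [MeasurableSpace X] {μ : Measure X} {m : ℝ} (hm : 1 ≤ m)
    {a : ℕ → X → ℝ} {b : X → ℝ} (ha : ∀ k, Measurable (a k)) {M r : ℝ≥0∞}
    (hk : ∀ k, ∫⁻ x, ENNReal.ofReal (|a (k + 1) x - a k x| ^ m) ∂μ ≤ M * (r ^ k) ^ m)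
    (hlim : ∀ᵐ x ∂μ, Filter.Tendsto (fun k => a k x) Filter.atTop (nhds (b x))) :
    ∫⁻ x, ENNReal.ofReal (|b x| ^ m) ∂μ ≤
      2 ^ (m - 1) * ((∫⁻ x, ENNReal.ofReal (|a 0 x| ^ m) ∂μ) + M * ((1 - r)⁻¹) ^ m) := by
  have hm0 : 0 < m := by linarith
  set I : ℕ → ℝ≥0∞ := fun k => ∫⁻ x, ENNReal.ofReal (|a k x| ^ m) ∂μ with hI
  have h1 : ∀ k, I k ^ (1 / m) ≤ I 0 ^ (1 / m) + M ^ (1 / m) * ∑ j ∈ Finset.range k, r ^ j := by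
    intro k
    induction k with
    | zero => simp
    | succ k ih =>
      rw [Finset.sum_range_succ, mul_add, ← add_assoc]
      refine (minkowski hm (ha k) (ha (k + 1))).trans (add_le_add ih ?_)
      refine (ENNReal.rpow_le_rpow (hk k) (by positivity)).trans ?_
      rw [ENNReal.mul_rpow_of_nonneg _ _ (by positivity), ← ENNReal.rpow_mul, mul_one_div_cancel hm0.ne',
        ENNReal.rpow_one]
  have h2 : ∀ k, I k ≤ 2 ^ (m - 1) * (I 0 + M * ((1 - r)⁻¹) ^ m) := by
    intro k
    have h3 : I k ^ (1 / m) ≤ I 0 ^ (1 / m) + M ^ (1 / m) * (1 - r)⁻¹ := by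
      refine (h1 k).trans ?_
      gcongr
      rw [← ENNReal.tsum_geometric]
      exact ENNReal.sum_le_tsum _
    have h4 := ENNReal.rpow_le_rpow h3 hm0.le
    rw [← ENNReal.rpow_mul, one_div_mul_cancel hm0.ne', ENNReal.rpow_one] at h4
    refine h4.trans ((ENNReal.rpow_add_le_mul_rpow_add_rpow _ _ hm).trans ?_)
    rw [ENNReal.mul_rpow_of_nonneg _ _ hm0.le, ← ENNReal.rpow_mul, ← ENNReal.rpow_mul,
      one_div_mul_cancel hm0.ne', ENNReal.rpow_one, ENNReal.rpow_one]
  have h5 : ∀ᵐ x ∂μ, ENNReal.ofReal (|b x| ^ m) =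
      Filter.liminf (fun k => ENNReal.ofReal (|a k x| ^ m)) Filter.atTop := by
    filter_upwards [hlim] with x hx
    symm
    apply Filter.Tendsto.liminf_eq
    have hc : Continuous fun y : ℝ => ENNReal.ofReal (|y| ^ m) :=
      ENNReal.continuous_ofReal.comp (continuous_abs.rpow_const fun _ => Or.inr hm0.le)
    exact (hc.tendsto _).comp hx
  rw [lintegral_congr_ae h5]
  refine (lintegral_liminf_le fun k => by have := ha k; fun_prop).trans ?_
  exact Filter.liminf_le_of_frequently_le' (Filter.Frequently.of_forall h2)

set_option maxHeartbeats 1000000 in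
lemma dir_est {n : ℕ} (hn : 1 ≤ n) {θ β N : ℝ} (hθ : 0 < θ) (hβ : 1 < β)
    (hN1 : n + θ < N) (hN2 : N < n + θ + 1) : ∃ C : ℝ≥0∞, C ≠ ⊤ ∧
    ∀ (Ω : Set (Eu n)) (v f : Eu n → ℝ), Core n θ β N Ω v f → ∀ (ρ d : ℝ), 0 ≤ ρ → 0 < d → d ≤ 1 →
    ρ + 8 * d ≤ 2 → ∀ h : Eu n, ‖h‖ ≤ d → 0 < ‖h‖ →
    ∫⁻ x in ball (0 : Eu n) ρ, ENNReal.ofReal (|fderiv ℝ v x h| ^ (θ + β)) ≤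
    C * (ENNReal.ofReal (d ^ (-(N + n * ((θ + β) / (θ + 1))))) *
      (ENNReal.ofReal (‖h‖ ^ ((θ + β) + (N - n - θ) / 2)) *
      (1 + Phi v (θ + β) (ρ + 6 * d))) + ENNReal.ofReal (‖h‖ ^ (-(2 * n * ((θ + β) / (θ + 1)))))) := by
  obtain ⟨C1, hC1, hsd⟩ := second_diff hn hθ hβ hN1 hN2
  obtain ⟨C2, hC2, hItp⟩ := interp (n := n) (N := N) hθ hβ
  set m := θ + β with hm
  have hm1 : 1 ≤ m := by linarith
  set γ := N - n - θ with hγ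
  have hγ0 : 0 < γ := by linarith
  set r := ENNReal.ofReal ((2:ℝ) ^ (-(γ / (2 * m)))) with hr
  have hr1 : r < 1 := by
    rw [hr, ← ENNReal.ofReal_one]
    apply (ENNReal.ofReal_lt_ofReal_iff one_pos).2
    apply Real.rpow_lt_one_of_one_lt_of_neg (by norm_num)
    have : 0 < γ / (2 * m) := by positivity
    linarith
  have hr2 : (1 - r)⁻¹ ≠ ⊤ := by
    rw [ENNReal.inv_ne_top]
    exact (tsub_pos_of_lt hr1).ne'
  set Γ := ((1 - r)⁻¹) ^ m with hΓ
  have hΓt : Γ ≠ ⊤ := ENNReal.rpow_ne_top_of_nonneg (by linarith) hr2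
  have h2m : (2 : ℝ≥0∞) ^ (m - 1) ≠ ⊤ := ENNReal.rpow_ne_top_of_nonneg (by linarith) (by norm_num)
  refine ⟨2 ^ (m - 1) * (ENNReal.ofReal (2 ^ m) * (2 * C2) + C1 * Γ), by finiteness, ?_⟩
  intro Ω v f H ρ d hρ hd hd1 hρd h hh hh0
  have hv := H.hv
  set t := ‖h‖ with ht
  have ht1 : t ≤ 1 := hh.trans hd1
  set D := ENNReal.ofReal (d ^ (-(N + n * (m / (θ + 1))))) with hD
  have hD1 : 1 ≤ D := by
    rw [hD, ← ENNReal.ofReal_one]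
    apply ENNReal.ofReal_le_ofReal
    refine Real.one_le_rpow_of_pos_of_le_one_of_nonpos hd hd1 ?_
    have : 0 ≤ n * (m / (θ + 1)) := by positivity
    have : (0:ℝ) ≤ n := by positivity
    linarith
  set T := ENNReal.ofReal (t ^ (m + γ / 2)) with hT
  set Φ := Phi v m (ρ + 6 * d) with hΦ
  set E := ENNReal.ofReal (t ^ (-(2 * n * (m / (θ + 1))))) with hE
  -- first difference
  have hW : Wf v m (ρ + d) ≤ C2 * (D * (T * (1 + Φ)) + E) := by
    refine (hItp Ω v f H (ρ + d) (t ^ 2) (by positivity) (by nlinarith)).trans ?_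
    gcongr C2 * (?_ + ?_)
    · refine le_trans ?_ (le_mul_of_one_le_left' hD1)
      gcongr
      · rw [← Real.rpow_natCast_mul hh0.le]
        apply ENNReal.ofReal_le_ofReal
        apply Real.rpow_le_rpow_of_exponent_ge hh0 ht1
        push_cast
        linarith
      · exact (Phi_mono v m (by nlinarith)).trans le_add_self
    · apply le_of_eq
      rw [← Real.rpow_natCast_mul hh0.le, hE]
      congr 2
      push_cast
      ring
  have hfirst : ∫⁻ x in ball (0 : Eu n) ρ, ENNReal.ofReal (|v (x + h) - v x| ^ m) ≤
      ENNReal.ofReal (2 ^ m) * (2 * Wf v m (ρ + d)) := by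
    calc _ ≤ ∫⁻ x in ball (0 : Eu n) ρ, ENNReal.ofReal (2 ^ m) *
            (ENNReal.ofReal (|v (x + h)| ^ m) + ENNReal.ofReal (|v x| ^ m)) := by
          refine lintegral_mono fun x => ?_
          rw [← ENNReal.ofReal_add (by positivity) (by positivity), ← ENNReal.ofReal_mul (by positivity)]
          apply ENNReal.ofReal_le_ofReal
          refine le_trans ?_ (two_rpow_bound (by linarith) (abs_nonneg _) (abs_nonneg _))
          gcongr
          exact abs_sub _ _
      _ = ENNReal.ofReal (2 ^ m) * ((∫⁻ x in ball (0 : Eu n) ρ, ENNReal.ofReal (|v (x + h)| ^ m)) +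
            ∫⁻ x in ball (0 : Eu n) ρ, ENNReal.ofReal (|v x| ^ m)) := by
          rw [lintegral_const_mul _ (by fun_prop), lintegral_add_left (by fun_prop)]
      _ ≤ _ := by
          rw [two_mul]
          refine mul_le_mul_right (add_le_add ?_ ?_) _
          · exact shift_ball (fun x => ENNReal.ofReal (|v x| ^ m)) h (by linarith)
          · exact lintegral_mono_set (ball_subset_ball (by linarith))
  -- telescoping
  set a : ℕ → Eu n → ℝ := fun k x => (2:ℝ) ^ k * (v (x + ((2:ℝ) ^ k)⁻¹ • h) - v x) with ha
  have ham : ∀ k, Measurable (a k) := fun k => by simp only [ha]; fun_prop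
  have hstep : ∀ k, ∫⁻ x in ball (0 : Eu n) ρ, ENNReal.ofReal (|a (k + 1) x - a k x| ^ m) ≤
      (C1 * (D * (T * (1 + Φ)))) * (r ^ k) ^ m := by
    intro k
    set h' := ((2:ℝ) ^ (k + 1))⁻¹ • h with hh'
    have hnorm : ‖h'‖ = t * (2:ℝ) ^ (-((k:ℝ) + 1)) := by
      rw [hh', norm_smul, norm_inv, norm_pow, Real.rpow_neg (by norm_num)]
      norm_num
      rw [mul_comm]
      congr 2
      rw [← Real.rpow_natCast]; norm_num
    have h2k : (2:ℝ) ^ (-((k:ℝ) + 1)) ≤ 1 := Real.rpow_le_one_of_one_le_of_nonpos (by norm_num) (by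
      have : (0:ℝ) ≤ k := by positivity
      linarith)
    have h'pos : 0 < ‖h'‖ := by rw [hnorm]; positivity
    have h'le : ‖h'‖ ≤ d := by rw [hnorm]; nlinarith
    have hdbl : ((2:ℝ) ^ k)⁻¹ • h = h' + h' := by
      rw [hh', ← two_smul ℝ, smul_smul]
      congr 1
      rw [pow_succ]; field_simp
    calc _ = ∫⁻ x in ball (0 : Eu n) ρ, ENNReal.ofReal (((2:ℝ) ^ k) ^ m) *
            ENNReal.ofReal (|(v (x + h' + h') - v (x + h')) - (v (x + h') - v x)| ^ m) := by
          refine lintegral_congr fun x => ?_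
          rw [← ENNReal.ofReal_mul (by positivity), ← Real.mul_rpow (by positivity) (by positivity)]
          congr 2
          simp only [ha]
          have h2 : (2:ℝ) ^ (k + 1) * (v (x + h') - v x) - 2 ^ k * (v (x + h' + h') - v x) =
            2 ^ k * (-((v (x + h' + h') - v (x + h')) - (v (x + h') - v x))) := by rw [pow_succ]; ring
          rw [hdbl, ← hh', ← add_assoc, h2, abs_mul, abs_neg, abs_of_pos (by positivity : (0:ℝ) < 2 ^ k)]
      _ = ENNReal.ofReal (((2:ℝ) ^ k) ^ m) * ∫⁻ x in ball (0 : Eu n) ρ,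
            ENNReal.ofReal (|(v (x + h' + h') - v (x + h')) - (v (x + h') - v x)| ^ m) := by
          rw [lintegral_const_mul _ (by fun_prop)]
      _ ≤ ENNReal.ofReal (((2:ℝ) ^ k) ^ m) * (C1 * (D * (ENNReal.ofReal (‖h'‖ ^ (m + γ / 2)) * (1 + Φ)))) := by
          refine mul_le_mul_right ?_ _
          refine le_trans ?_ (hsd Ω v f H ρ d hρ hd hd1 hρd h' h'le h'pos)
          exact lintegral_mono_set (ball_subset_ball (by linarith))
      _ = (ENNReal.ofReal (((2:ℝ) ^ k) ^ m) * ENNReal.ofReal (‖h'‖ ^ (m + γ / 2))) * (C1 * (D * (1 + Φ))) := by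
          ring
      _ ≤ (T * (r ^ k) ^ m) * (C1 * (D * (1 + Φ))) := by
          refine mul_le_mul_left ?_ _
          rw [hr, ← ENNReal.ofReal_pow (by positivity), ENNReal.ofReal_rpow_of_nonneg (by positivity) (by linarith),
            hT, ← ENNReal.ofReal_mul (by positivity), ← ENNReal.ofReal_mul (by positivity), hnorm,
            Real.mul_rpow hh0.le (by positivity), mul_left_comm]
          apply ENNReal.ofReal_le_ofReal
          gcongr
          rw [← Real.rpow_natCast_mul (by norm_num), ← Real.rpow_mul (by norm_num), ← Real.rpow_mul_natCast (by norm_num),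
            ← Real.rpow_mul (by norm_num), ← Real.rpow_add (by norm_num)]
          apply Real.rpow_le_rpow_of_exponent_le (by norm_num)
          have : -(γ / (2 * m)) * k * m = - (γ / 2) * k := by field_simp
          rw [this]
          nlinarith
      _ = _ := by ring
  have htel := telescope (μ := volume.restrict (ball (0 : Eu n) ρ)) hm1 ham hstep
    (b := fun x => fderiv ℝ v x h) (by
      filter_upwards [ae_restrict_mem measurableSet_ball] with x hx
      have hxΩ : x ∈ Ω := H.sub (ball_subset_closedBall (ball_subset_ball (by linarith) hx))
      have hd : HasFDerivAt v (fderiv ℝ v x) x :=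
        ((H.cd.differentiableOn (by norm_num)).differentiableAt (H.isOpen.mem_nhds hxΩ)).hasFDerivAt
      have := hd.lim h (c := fun k : ℕ => (2:ℝ) ^ k) (l := Filter.atTop) (by
        have : (fun k : ℕ => ‖(2:ℝ) ^ k‖) = fun k => (2:ℝ) ^ k := by ext k; simp
        rw [this]
        exact tendsto_pow_atTop_atTop_of_one_lt (by norm_num))
      simpa [ha] using this)
  refine htel.trans ?_
  have h0 : ∫⁻ x in ball (0 : Eu n) ρ, ENNReal.ofReal (|a 0 x| ^ m) =
    ∫⁻ x in ball (0 : Eu n) ρ, ENNReal.ofReal (|v (x + h) - v x| ^ m) := by simp [ha]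
  rw [h0]
  calc _ ≤ 2 ^ (m - 1) * (ENNReal.ofReal (2 ^ m) * (2 * (C2 * (D * (T * (1 + Φ)) + E))) +
        C1 * (D * (T * (1 + Φ)) + E) * Γ) := by
        refine mul_le_mul_right (add_le_add (hfirst.trans ?_) ?_) _
        · gcongr
        · gcongr; exact le_self_add
    _ = _ := by ring

lemma opnorm_le_sum {n : ℕ} (L : Eu n →L[ℝ] ℝ) :
    ‖L‖ ≤ ∑ i, |L (EuclideanSpace.single i 1)| := by
  refine L.opNorm_le_bound (Finset.sum_nonneg fun _ _ => abs_nonneg _) fun x => ?_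
  have hx : x = ∑ i, x i • (EuclideanSpace.single i (1:ℝ) : Eu n) := by
    have := (EuclideanSpace.basisFun (Fin n) ℝ).sum_repr x
    simpa using this.symm
  conv_lhs => rw [hx]
  rw [map_sum, Finset.sum_mul]
  refine (norm_sum_le _ _).trans (Finset.sum_le_sum fun i _ => ?_)
  rw [map_smul, smul_eq_mul, norm_mul, mul_comm]
  have := PiLp.norm_apply_le x i
  rw [Real.norm_eq_abs (L _)]
  gcongr

set_option maxHeartbeats 1000000 in
lemma phi_est {n : ℕ} (hn : 1 ≤ n) {θ β N : ℝ} (hθ : 0 < θ) (hβ : 1 < β)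
    (hN1 : n + θ < N) (hN2 : N < n + θ + 1) : ∃ C : ℝ≥0∞, C ≠ ⊤ ∧
    ∀ (Ω : Set (Eu n)) (v f : Eu n → ℝ), Core n θ β N Ω v f → ∀ (ρ d t : ℝ), 0 ≤ ρ → 0 < d → d ≤ 1 →
    ρ + 8 * d ≤ 2 → t ≤ d → 0 < t →
    Phi v (θ + β) ρ ≤
    C * (ENNReal.ofReal (d ^ (-(N + n * ((θ + β) / (θ + 1))))) *
      (ENNReal.ofReal (t ^ ((N - n - θ) / 2)) *
      (1 + Phi v (θ + β) (ρ + 6 * d))) +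
      ENNReal.ofReal (t ^ (-((θ + β) + 2 * n * ((θ + β) / (θ + 1)))))) := by
  obtain ⟨C, hC, hdir⟩ := dir_est hn hθ hβ hN1 hN2
  set m := θ + β with hm
  refine ⟨ENNReal.ofReal ((n : ℝ) ^ (m - 1)) * (n * C), by finiteness, ?_⟩
  intro Ω v f H ρ d t hρ hd hd1 hρd htd ht0
  set D := ENNReal.ofReal (d ^ (-(N + n * (m / (θ + 1))))) with hD
  set Φ := Phi v m (ρ + 6 * d) with hΦ
  set γ := N - n - θ with hγ
  have hJ : ∀ i : Fin n, ∫⁻ x in ball (0 : Eu n) ρ,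
      ENNReal.ofReal (|fderiv ℝ v x (EuclideanSpace.single i 1)| ^ m) ≤
      C * (D * (ENNReal.ofReal (t ^ (γ / 2)) * (1 + Φ)) + ENNReal.ofReal (t ^ (-(m + 2 * n * (m / (θ + 1)))))) := by
    intro i
    set e : Eu n := EuclideanSpace.single i 1 with he
    have hnorm : ‖t • e‖ = t := by
      rw [norm_smul, he, EuclideanSpace.norm_single]; simp [abs_of_pos ht0]
    have h1 := hdir Ω v f H ρ d hρ hd hd1 hρd (t • e) (by rw [hnorm]; exact htd) (by rw [hnorm]; exact ht0)
    rw [hnorm] at h1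
    have hm0 : ENNReal.ofReal (t ^ m) ≠ 0 := (ENNReal.ofReal_pos.2 (by positivity)).ne'
    rw [← ENNReal.mul_le_mul_iff_right hm0 ENNReal.ofReal_ne_top]
    have h2 : ENNReal.ofReal (t ^ (m + γ / 2)) = ENNReal.ofReal (t ^ m) * ENNReal.ofReal (t ^ (γ / 2)) := by
      rw [← ENNReal.ofReal_mul (by positivity), ← Real.rpow_add ht0]
    have h3 : ENNReal.ofReal (t ^ (-(2 * n * (m / (θ + 1))))) =
        ENNReal.ofReal (t ^ m) * ENNReal.ofReal (t ^ (-(m + 2 * n * (m / (θ + 1))))) := by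
      rw [← ENNReal.ofReal_mul (by positivity), ← Real.rpow_add ht0]
      congr 2; ring
    rw [h2, h3] at h1
    calc _ = ∫⁻ x in ball (0 : Eu n) ρ, ENNReal.ofReal (|fderiv ℝ v x (t • e)| ^ m) := by
          rw [← lintegral_const_mul' _ _ ENNReal.ofReal_ne_top]
          refine lintegral_congr fun x => ?_
          rw [map_smul, smul_eq_mul, abs_mul, abs_of_pos ht0, Real.mul_rpow ht0.le (abs_nonneg _),
            ENNReal.ofReal_mul (by positivity)]
      _ ≤ _ := h1
      _ = _ := by ring
  have hfm := measurable_fderiv ℝ v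
  calc Phi v m ρ ≤ ∫⁻ x in ball (0 : Eu n) ρ, ENNReal.ofReal ((n : ℝ) ^ (m - 1)) *
        ∑ i : Fin n, ENNReal.ofReal (|fderiv ℝ v x (EuclideanSpace.single i 1)| ^ m) := by
        refine lintegral_mono fun x => ?_
        rw [← ENNReal.ofReal_sum_of_nonneg (fun _ _ => by positivity), ← ENNReal.ofReal_mul (by positivity)]
        apply ENNReal.ofReal_le_ofReal
        have h1 := opnorm_le_sum (fderiv ℝ v x)
        have h2 := Real.rpow_sum_le_const_mul_sum_rpow (Finset.univ : Finset (Fin n))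
          (fun i => fderiv ℝ v x (EuclideanSpace.single i 1)) (by linarith : 1 ≤ m)
        rw [Finset.card_univ, Fintype.card_fin] at h2
        refine le_trans ?_ h2
        gcongr
    _ = ENNReal.ofReal ((n : ℝ) ^ (m - 1)) * ∑ i : Fin n, ∫⁻ x in ball (0 : Eu n) ρ,
          ENNReal.ofReal (|fderiv ℝ v x (EuclideanSpace.single i 1)| ^ m) := by
        have hmi : ∀ i : Fin n, Measurable fun x => fderiv ℝ v x (EuclideanSpace.single i 1) :=
          fun i => measurable_fderiv_apply_const ℝ v _
        rw [lintegral_const_mul' _ _ ENNReal.ofReal_ne_top, lintegral_finsetSum]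
        intro i _
        have := hmi i
        fun_prop
    _ ≤ ENNReal.ofReal ((n : ℝ) ^ (m - 1)) * ∑ i : Fin n, C * (D * (ENNReal.ofReal (t ^ (γ / 2)) * (1 + Φ)) +
          ENNReal.ofReal (t ^ (-(m + 2 * n * (m / (θ + 1)))))) := by
        gcongr with i
        exact hJ i
    _ = _ := by
        rw [Finset.sum_const, Finset.card_univ, Fintype.card_fin, nsmul_eq_mul]; ring

lemma Phi_two_ne_top {n : ℕ} {θ β N : ℝ} {Ω : Set (Eu n)} {v f : Eu n → ℝ}
    (H : Core n θ β N Ω v f) {m : ℝ} (hm : 0 ≤ m) : Phi v m 2 ≠ ⊤ := by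
  obtain ⟨L, hL, -⟩ := lip_of_cd H.isOpen H.cd H.sub
  have : Phi v m 2 ≤ ENNReal.ofReal ((L:ℝ) ^ m) * volume (ball (0 : Eu n) 2) := by
    rw [← setLIntegral_const]
    refine setLIntegral_mono' measurableSet_ball fun x hx => ?_
    apply ENNReal.ofReal_le_ofReal
    have h1 := hL x (ball_subset_closedBall hx)
    have h2 : ‖fderiv ℝ v x‖ ≤ L := by exact_mod_cast h1
    gcongr
  exact ne_top_of_le_ne_top (ENNReal.mul_ne_top ENNReal.ofReal_ne_top measure_ball_lt_top.ne) this

set_option maxHeartbeats 1000000 in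
lemma core_bound {n : ℕ} (hn : 1 ≤ n) {θ β N : ℝ} (hθ : 0 < θ) (hβ : 1 < β)
    (hN1 : n + θ < N) (hN2 : N < n + θ + 1) : ∃ C : ℝ≥0∞, C ≠ ⊤ ∧
    ∀ (Ω : Set (Eu n)) (v f : Eu n → ℝ), Core n θ β N Ω v f → Phi v (θ + β) 1 ≤ C := by
  obtain ⟨C, hC, hphi⟩ := phi_est hn hθ hβ hN1 hN2
  have hn0 : (1:ℝ) ≤ n := by exact_mod_cast hn
  set m := θ + β with hm
  set γ := N - n - θ with hγ
  have hγ0 : 0 < γ := by linarith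
  set κ := N + n * (m / (θ + 1)) with hκ
  have hκ1 : 1 ≤ κ := by
    have : 0 ≤ n * (m / (θ + 1)) := by positivity
    linarith
  set κ' := m + 2 * n * (m / (θ + 1)) with hκ'
  have hκ'0 : 0 < κ' := by positivity
  set κ2 := κ * (2 / γ) * κ' with hκ2
  have hκ20 : 0 < κ2 := by positivity
  set c := C.toReal + 1 with hc
  have hc0 : 0 < c := by positivity
  have hCc : C ≤ ENNReal.ofReal c := by
    rw [← ENNReal.ofReal_toReal hC]
    exact ENNReal.ofReal_le_ofReal (by linarith)
  set η := min 1 (1 / (2 * c * 4 ^ κ2)) with hη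
  have hη0 : 0 < η := by positivity
  have hη1 : η ≤ 1 := min_le_left _ _
  have hηc : c * η * 4 ^ κ2 ≤ 1 / 2 := by
    have : η ≤ 1 / (2 * c * 4 ^ κ2) := min_le_right _ _
    rw [le_div_iff₀ (by positivity)] at this
    linarith
  set A := c * η * 2 ^ κ2 + c * (η ^ (-(2 / γ * κ')) * 8 ^ κ2) with hA
  refine ⟨2 * ENNReal.ofReal A, by finiteness, ?_⟩
  intro Ω v f H
  have hΦ2 := Phi_two_ne_top H (by linarith : 0 ≤ m)
  set S : ℝ≥0∞ := ⨆ σ ∈ Ioc (0:ℝ) 2, ENNReal.ofReal (σ ^ κ2) * Phi v m (2 - σ) with hS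
  have hSt : S ≠ ⊤ := by
    have : S ≤ ENNReal.ofReal (2 ^ κ2) * Phi v m 2 := by
      refine iSup₂_le fun σ hσ => ?_
      have h1 := hσ.1.le
      have h2 := hσ.2
      gcongr
      exact Phi_mono v m (by linarith)
    exact ne_top_of_le_ne_top (by finiteness) this
  have hmain : S ≤ S / 2 + ENNReal.ofReal A := by
    refine iSup₂_le fun σ hσ => ?_
    have hσ0 := hσ.1
    have hσ2 := hσ.2
    set d := σ / 8 with hd
    have hd0 : 0 < d := by positivity
    have hd1 : d ≤ 1 := by linarith
    set t := (η * d ^ κ) ^ (2 / γ) with ht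
    have ht0 : 0 < t := by positivity
    have htd : t ≤ d := by
      calc t ≤ (d ^ κ) ^ (2 / γ) := by
            rw [ht]
            gcongr
            exact mul_le_of_le_one_left (by positivity) hη1
        _ = d ^ (κ * (2 / γ)) := by rw [← Real.rpow_mul hd0.le]
        _ ≤ d ^ (1:ℝ) := by
            apply Real.rpow_le_rpow_of_exponent_ge hd0 hd1
            have : 1 ≤ 2 / γ := by rw [le_div_iff₀ hγ0]; linarith
            nlinarith
        _ = d := Real.rpow_one d
    have h1 := hphi Ω v f H (2 - σ) d t (by linarith) hd0 hd1 (by linarith) htd ht0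
    have h2 : ENNReal.ofReal (d ^ (-κ)) * ENNReal.ofReal (t ^ (γ / 2)) = ENNReal.ofReal η := by
      rw [← ENNReal.ofReal_mul (by positivity), ht, ← Real.rpow_mul (by positivity),
        show 2 / γ * (γ / 2) = 1 by field_simp, Real.rpow_one, Real.rpow_neg hd0.le]
      congr 1
      field_simp
    have h3 : t ^ (-κ') = η ^ (-(2 / γ * κ')) * (8 ^ κ2 * σ ^ (-κ2)) := by
      rw [ht, ← Real.rpow_mul (by positivity), Real.mul_rpow hη0.le (by positivity), ← Real.rpow_mul hd0.le, hd,
        Real.div_rpow hσ0.le (by norm_num)]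
      rw [show κ * (2 / γ * -κ') = -κ2 by rw [hκ2]; ring, show 2 / γ * -κ' = -(2 / γ * κ') by ring,
        Real.rpow_neg (by norm_num : (0:ℝ) ≤ 8), div_inv_eq_mul]
      ring
    rw [← mul_assoc, h2, h3, show 2 - σ + 6 * d = 2 - σ / 4 by rw [hd]; ring] at h1
    have hσ4 : ENNReal.ofReal (σ ^ κ2) = ENNReal.ofReal (4 ^ κ2) * ENNReal.ofReal ((σ / 4) ^ κ2) := by
      rw [← ENNReal.ofReal_mul (by positivity), ← Real.mul_rpow (by norm_num) (by positivity)]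
      congr 2; ring
    have hXS : ENNReal.ofReal ((σ / 4) ^ κ2) * Phi v m (2 - σ / 4) ≤ S :=
      le_iSup₂_of_le (σ / 4) ⟨by positivity, by linarith⟩ le_rfl
    calc ENNReal.ofReal (σ ^ κ2) * Phi v m (2 - σ)
        ≤ ENNReal.ofReal (σ ^ κ2) * (ENNReal.ofReal c * (ENNReal.ofReal η * (1 + Phi v m (2 - σ / 4)) +
            ENNReal.ofReal (η ^ (-(2 / γ * κ')) * (8 ^ κ2 * σ ^ (-κ2))))) := by
          gcongr
          exact h1.trans (by gcongr)
      _ = ENNReal.ofReal c * ENNReal.ofReal η * ENNReal.ofReal (σ ^ κ2) * Phi v m (2 - σ / 4) +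
          (ENNReal.ofReal c * ENNReal.ofReal η * ENNReal.ofReal (σ ^ κ2) +
            ENNReal.ofReal c * (ENNReal.ofReal (η ^ (-(2 / γ * κ')) * (8 ^ κ2 * σ ^ (-κ2))) *
              ENNReal.ofReal (σ ^ κ2))) := by ring
      _ ≤ S / 2 + ENNReal.ofReal A := by
          refine add_le_add ?_ ?_
          · rw [hσ4]
            calc _ = ENNReal.ofReal (c * η * 4 ^ κ2) * (ENNReal.ofReal ((σ / 4) ^ κ2) * Phi v m (2 - σ / 4)) := by
                  rw [ENNReal.ofReal_mul (by positivity), ENNReal.ofReal_mul (by positivity)]; ring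
              _ ≤ ENNReal.ofReal (1 / 2) * S := by gcongr
              _ = S / 2 := by
                  rw [ENNReal.ofReal_div_of_pos (by norm_num), ENNReal.div_eq_inv_mul, ENNReal.div_eq_inv_mul]
                  simp
          · rw [← ENNReal.ofReal_mul (by positivity), ← ENNReal.ofReal_mul (by positivity),
              ← ENNReal.ofReal_mul (by positivity), ← ENNReal.ofReal_mul (by positivity),
              ← ENNReal.ofReal_add (by positivity) (by positivity)]
            apply ENNReal.ofReal_le_ofReal
            rw [hA]
            refine add_le_add (by gcongr) (le_of_eq ?_)
            rw [Real.rpow_neg hσ0.le]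
            field_simp
  have hS2 : S ≤ 2 * ENNReal.ofReal A := by
    have h4 : S / 2 ≤ ENNReal.ofReal A := by
      have h5 : S / 2 + S / 2 ≤ S / 2 + ENNReal.ofReal A := by rw [ENNReal.add_halves]; exact hmain
      exact (ENNReal.add_le_add_iff_left (ENNReal.div_ne_top hSt (by norm_num))).1 h5
    calc S = S / 2 + S / 2 := (ENNReal.add_halves S).symm
      _ ≤ ENNReal.ofReal A + ENNReal.ofReal A := add_le_add h4 h4
      _ = _ := by ring
  refine le_trans ?_ hS2
  refine le_iSup₂_of_le (1:ℝ) ⟨by norm_num, by norm_num⟩ ?_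
  rw [Real.one_rpow, ENNReal.ofReal_one, one_mul]
  norm_num

lemma lint_affine {n : ℕ} (x₀ : Eu n) {R : ℝ} (hR : 0 < R) {F : Eu n → ℝ≥0∞} (hF : Measurable F) :
    ∫⁻ x, F (x₀ + R • x) = ENNReal.ofReal (R ^ (-(n:ℝ))) * ∫⁻ x, F x := by
  have h1 : ∫⁻ x, F (x₀ + R • x) = ∫⁻ y, F (x₀ + y) ∂(Measure.map (fun x : Eu n => R • x) volume) := by
    rw [lintegral_map (by fun_prop) (by fun_prop)]
  rw [h1, Measure.map_addHaar_smul _ hR.ne', lintegral_smul_measure, lintegral_add_left_eq_self F x₀, smul_eq_mul]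
  congr 2
  rw [Real.rpow_neg hR.le, Real.rpow_natCast, abs_of_pos (by positivity)]
  simp

lemma lint_affine_set {n : ℕ} (x₀ : Eu n) {R : ℝ} (hR : 0 < R) {F : Eu n → ℝ≥0∞} (hF : Measurable F)
    {S S' : Set (Eu n)} (hS : MeasurableSet S) (hS' : MeasurableSet S') (hSS : ∀ x, x ∈ S ↔ x₀ + R • x ∈ S') :
    ∫⁻ x in S, F (x₀ + R • x) = ENNReal.ofReal (R ^ (-(n:ℝ))) * ∫⁻ x in S', F x := by
  rw [← lintegral_indicator hS, ← lintegral_indicator hS', ← lint_affine x₀ hR (hF.indicator hS')]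
  refine lintegral_congr fun x => ?_
  by_cases hx : x ∈ S
  · rw [indicator_of_mem hx, indicator_of_mem ((hSS x).1 hx)]
  · rw [indicator_of_notMem hx, indicator_of_notMem (fun h => hx ((hSS x).2 h))]

lemma int_affine {n : ℕ} (x₀ : Eu n) {R : ℝ} (hR : 0 < R) (F : Eu n → ℝ) :
    ∫ x, F (x₀ + R • x) = R ^ (-(n:ℝ)) * ∫ x, F x := by
  rw [Measure.integral_comp_smul volume (fun x => F (x₀ + x)) R, integral_add_left_eq_self F x₀, smul_eq_mul,
    Real.rpow_neg hR.le, Real.rpow_natCast, abs_of_pos (by positivity)]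
  simp

lemma mem_ball_affine {n : ℕ} (x₀ : Eu n) {R : ℝ} (hR : 0 < R) (a : ℝ) (x : Eu n) :
    x ∈ ball (0 : Eu n) a ↔ x₀ + R • x ∈ ball x₀ (a * R) := by
  rw [mem_ball_zero_iff, mem_ball, dist_eq_norm, add_sub_cancel_left, norm_smul, Real.norm_of_nonneg hR.le,
    mul_comm, mul_lt_mul_iff_left₀ hR]

lemma sgnPow_mul_pos {θ A : ℝ} (hA : 0 < A) (a : ℝ) : sgnPow θ (A * a) = A ^ θ * sgnPow θ a := by
  simp only [sgnPow]
  rw [abs_mul, abs_of_pos hA, Real.mul_rpow hA.le (abs_nonneg _),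
    show θ = (θ - 1) + 1 by ring, Real.rpow_add hA, Real.rpow_one]
  ring_nf

lemma unit_bound {n : ℕ} (hn : 1 ≤ n) {θ β N : ℝ} (hθ : 0 < θ) (hβ : 1 < β)
    (hN1 : n + θ < N) (hN2 : N < n + θ + 1) : ∃ C : ℝ≥0∞, C ≠ ⊤ ∧
    ∀ (Ω : Set (Eu n)) (U g : Eu n → ℝ), IsOpen Ω → closedBall 0 2 ⊆ Ω → Measurable U → Measurable g →
    ContDiffOn ℝ 1 U Ω →
    (∀ (φ : Eu n → ℝ) (L : NNReal) (b : ℝ), LipschitzWith L φ → b < 2 →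
      (∀ x, b ≤ ‖x‖ → φ x = 0) →
      (∫ x, ∫ y, sgnPow θ (U x - U y) * (φ x - φ y) / dist x y ^ N) =
        ∫ x in ball (0 : Eu n) 2, g x * φ x) →
    ∀ A : ℝ, 0 < A →
    ∫⁻ x in ball (0 : Eu n) 2, ENNReal.ofReal (|g x| ^ ((θ + β) / θ)) ≤ ENNReal.ofReal (A ^ (θ + β)) →
    ∫⁻ x in ball (0 : Eu n) 2, ENNReal.ofReal (|U x| ^ (θ + 1)) ≤ ENNReal.ofReal (A ^ (θ + 1)) →
    ∫⁻ x in (ball (0 : Eu n) 2)ᶜ, ENNReal.ofReal (|U x| ^ θ / ‖x‖ ^ N) ≤ ENNReal.ofReal (A ^ θ) →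
    Phi U (θ + β) 1 ≤ C * ENNReal.ofReal (A ^ (θ + β)) := by
  obtain ⟨C, hC, hcore⟩ := core_bound hn hθ hβ hN1 hN2
  refine ⟨C, hC, ?_⟩
  intro Ω U g hΩ hsub hU hg hcd hweak A hA hgA hUA hTA
  have hAi : 0 < A⁻¹ := by positivity
  have norm1 : ∀ {k : ℝ}, ENNReal.ofReal (A⁻¹ ^ k) * ENNReal.ofReal (A ^ k) = 1 := by
    intro k
    rw [← ENNReal.ofReal_mul (by positivity), ← Real.mul_rpow hAi.le hA.le, inv_mul_cancel₀ hA.ne',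
      Real.one_rpow, ENNReal.ofReal_one]
  have hpull : ∀ (S : Set (Eu n)) (F : Eu n → ℝ≥0∞) (k : ℝ), ∫⁻ x in S, F x ≤ ENNReal.ofReal (A ^ k) →
      ∫⁻ x in S, ENNReal.ofReal (A⁻¹ ^ k) * F x ≤ 1 := by
    intro S F k h
    rw [lintegral_const_mul' _ _ ENNReal.ofReal_ne_top, ← norm1 (k := k)]
    gcongr
  have H : Core n θ β N Ω (fun x => A⁻¹ * U x) (fun x => A⁻¹ ^ θ * g x) := by
    refine ⟨hΩ, hsub, by fun_prop, by fun_prop, contDiffOn_const.mul hcd, ?_, ?_, ?_, ?_⟩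
    · refine le_trans (le_of_eq ?_) (hpull _ _ _ hgA)
      refine lintegral_congr fun x => ?_
      rw [← ENNReal.ofReal_mul (by positivity), abs_mul, abs_of_pos (by positivity),
        Real.mul_rpow (by positivity) (abs_nonneg _), ← Real.rpow_mul hAi.le, mul_div_cancel₀ _ hθ.ne']
    · refine le_trans (le_of_eq ?_) (hpull _ _ _ hUA)
      refine lintegral_congr fun x => ?_
      rw [← ENNReal.ofReal_mul (by positivity), abs_mul, abs_of_pos (by positivity),
        Real.mul_rpow (by positivity) (abs_nonneg _)]
    · refine le_trans (le_of_eq ?_) (hpull _ _ _ hTA)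
      refine lintegral_congr fun x => ?_
      rw [← ENNReal.ofReal_mul (by positivity), abs_mul, abs_of_pos (by positivity),
        Real.mul_rpow (by positivity) (abs_nonneg _), mul_div_assoc]
    · intro φ L b hφ hb hφ0
      have h1 := hweak φ L b hφ hb hφ0
      have h2 : ∀ x y : Eu n, sgnPow θ (A⁻¹ * U x - A⁻¹ * U y) * (φ x - φ y) / dist x y ^ N =
          A⁻¹ ^ θ * (sgnPow θ (U x - U y) * (φ x - φ y) / dist x y ^ N) := fun x y => by
        rw [← mul_sub, sgnPow_mul_pos hAi]; ring
      simp only [h2, integral_const_mul]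
      rw [h1, ← integral_const_mul]
      simp only [mul_assoc]
  have h3 := hcore Ω _ _ H
  have h4 : Phi U (θ + β) 1 = ENNReal.ofReal (A ^ (θ + β)) * Phi (fun x => A⁻¹ * U x) (θ + β) 1 := by
    unfold Phi
    rw [← lintegral_const_mul' _ _ ENNReal.ofReal_ne_top]
    refine setLIntegral_congr_fun measurableSet_ball fun x hx => ?_
    have hxΩ : x ∈ Ω := hsub (ball_subset_closedBall (ball_subset_ball (by norm_num) hx))
    have hd : DifferentiableAt ℝ U x :=
        (hcd.differentiableOn (by norm_num)).differentiableAt (hΩ.mem_nhds hxΩ)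
    rw [fderiv_const_mul hd, norm_smul, Real.norm_of_nonneg hAi.le, Real.mul_rpow hAi.le (norm_nonneg _),
      ENNReal.ofReal_mul (by positivity), ← mul_assoc, mul_comm (ENNReal.ofReal (A ^ _)), norm1, one_mul]
  rw [h4, mul_comm C]
  gcongr

lemma test_finite {n : ℕ} (hn : 1 ≤ n) {s p : ℝ} (hp : 1 < p) (hs0 : 0 < s) (hs : s < 1)
    {φ : Eu n → ℝ} {L : NNReal} (hφ : LipschitzWith L φ) {b : ℝ} (x₀ : Eu n)
    (hb : ∀ x, x ∉ ball x₀ b → φ x = 0) :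
    (∫⁻ x, ENNReal.ofReal (|φ x| ^ p)) < ⊤ ∧
    (∫⁻ x, ∫⁻ y, ENNReal.ofReal (|φ x - φ y| ^ p / dist x y ^ ((n:ℝ) + s * p))) < ⊤ := by
  have hp0 : 0 < p := by linarith
  have hsp : 0 < s * p := by positivity
  set N := (n:ℝ) + s * p with hN
  have hN0 : 0 < N := by positivity
  have hm : Measurable φ := hφ.continuous.measurable
  set B := ball x₀ b with hB
  obtain ⟨M, hM0, hM⟩ : ∃ M : ℝ, 0 ≤ M ∧ ∀ x, |φ x| ≤ M := by
    obtain ⟨M, hM⟩ := (isCompact_closedBall x₀ b).exists_bound_of_continuousOn hφ.continuous.continuousOn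
    refine ⟨max M 0, le_max_right _ _, fun x => ?_⟩
    by_cases hx : x ∈ B
    · exact (hM x (ball_subset_closedBall hx)).trans (le_max_left _ _)
    · rw [hb x hx]; simp
  constructor
  · calc _ ≤ ∫⁻ x in B, ENNReal.ofReal (M ^ p) := by
          rw [← lintegral_indicator measurableSet_ball]
          refine lintegral_mono fun x => ?_
          by_cases hx : x ∈ B
          · rw [indicator_of_mem hx]
            apply ENNReal.ofReal_le_ofReal
            have := hM x
            gcongr
          · rw [indicator_of_notMem hx, hb x hx]; simp [Real.zero_rpow hp0.ne']
      _ < ⊤ := by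
          rw [setLIntegral_const]
          exact ENNReal.mul_lt_top ENNReal.ofReal_lt_top measure_ball_lt_top
  set K : Eu n → ℝ≥0∞ := fun z => ENNReal.ofReal (L ^ p) * (ball (0 : Eu n) 1).indicator
    (fun z => ENNReal.ofReal (‖z‖ ^ (p - N))) z +
      ENNReal.ofReal ((2 * M) ^ p * 2 ^ N) * ENNReal.ofReal ((1 + ‖z‖) ^ (-N)) with hK
  have hKi : Measurable ((ball (0 : Eu n) 1).indicator (fun z : Eu n => ENNReal.ofReal (‖z‖ ^ (p - N)))) :=
    Measurable.indicator (by fun_prop) measurableSet_ball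
  have hKm : Measurable K := by simp only [hK]; fun_prop
  have hKf : ∫⁻ z, K z < ⊤ := by
    rw [hK, lintegral_add_left (by fun_prop), lintegral_const_mul _ hKi, lintegral_const_mul _ (by fun_prop),
      lintegral_indicator measurableSet_ball]
    have h1 := kernel_finite hn (a := p - N) (by rw [hN]; nlinarith) 1
    have h2 : ∫⁻ z : Eu n, ENNReal.ofReal ((1 + ‖z‖) ^ (-N)) < ⊤ :=
      finite_integral_one_add_norm (by simp [hN]; positivity)
    exact ENNReal.add_lt_top.2 ⟨ENNReal.mul_lt_top ENNReal.ofReal_lt_top h1,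
      ENNReal.mul_lt_top ENNReal.ofReal_lt_top h2⟩
  have hker : ∀ x y, ENNReal.ofReal (|φ x - φ y| ^ p / dist x y ^ N) ≤ K (y - x) := by
    intro x y
    have hdz : dist x y = ‖y - x‖ := by rw [dist_comm, dist_eq_norm]
    by_cases hz : y - x ∈ ball (0 : Eu n) 1
    · simp only [hK]
      rw [indicator_of_mem hz, ← ENNReal.ofReal_mul (by positivity)]
      refine le_trans ?_ le_self_add
      apply ENNReal.ofReal_le_ofReal
      rcases eq_or_ne x y with rfl | hne
      · simp only [sub_self, abs_zero, Real.zero_rpow hp0.ne', zero_div]; positivity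
      have hd : 0 < dist x y := dist_pos.2 hne
      have h1 := hφ.dist_le_mul x y
      rw [Real.dist_eq] at h1
      rw [← hdz, Real.rpow_sub hd, mul_div_assoc', ← Real.mul_rpow (by positivity) hd.le]
      gcongr
    · simp only [hK]
      refine le_trans ?_ le_add_self
      rw [← ENNReal.ofReal_mul (by positivity)]
      apply ENNReal.ofReal_le_ofReal
      have hz1 : 1 ≤ ‖y - x‖ := by simpa using hz
      have h1 : |φ x - φ y| ≤ 2 * M := by
        have := abs_sub (φ x) (φ y); have := hM x; have := hM y; linarith
      rw [hdz, Real.rpow_neg (by positivity), mul_assoc, ← div_eq_mul_inv, div_eq_mul_inv (|φ x - φ y| ^ p)]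
      gcongr ?_ ^ p * ?_
      rw [inv_eq_one_div, div_le_div_iff₀ (by positivity) (by positivity), one_mul,
        ← Real.mul_rpow (by norm_num) (by positivity)]
      gcongr
      linarith
  set I : Eu n → ℝ≥0∞ := B.indicator (fun _ => 1) with hI
  have hIm : Measurable I := Measurable.indicator measurable_const measurableSet_ball
  have hker2 : ∀ x y, ENNReal.ofReal (|φ x - φ y| ^ p / dist x y ^ N) ≤ I x * K (y - x) + I y * K (y - x) := by
    intro x y
    by_cases hx : x ∈ B
    · rw [hI, indicator_of_mem hx, one_mul]; exact (hker x y).trans le_self_add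
    by_cases hy : y ∈ B
    · rw [hI, indicator_of_mem hy, one_mul]; exact (hker x y).trans le_add_self
    · rw [hb x hx, hb y hy]; simp [Real.zero_rpow hp0.ne']
  have hI1 : ∫⁻ x, I x < ⊤ := by
    rw [hI, lintegral_indicator measurableSet_ball, setLIntegral_const]
    exact ENNReal.mul_lt_top ENNReal.one_lt_top measure_ball_lt_top
  have e1 : ∫⁻ x, ∫⁻ y, I x * K (y - x) = (∫⁻ x, I x) * ∫⁻ z, K z := by
    rw [← lintegral_mul_const _ hIm]
    refine lintegral_congr fun x => ?_
    rw [lintegral_const_mul _ (by fun_prop), lintegral_sub_right_eq_self K x]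
  have e2 : ∫⁻ x, ∫⁻ y, I y * K (y - x) = (∫⁻ x, I x) * ∫⁻ z, K z := by
    rw [lintegral_lintegral_swap (by fun_prop), ← lintegral_mul_const _ hIm]
    refine lintegral_congr fun y => ?_
    rw [lintegral_const_mul _ (by fun_prop), lintegral_sub_left_eq_self K y]
  calc _ ≤ ∫⁻ x, ∫⁻ y, (I x * K (y - x) + I y * K (y - x)) :=
        lintegral_mono fun x => lintegral_mono fun y => hker2 x y
    _ = (∫⁻ x, ∫⁻ y, I x * K (y - x)) + ∫⁻ x, ∫⁻ y, I y * K (y - x) := by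
        rw [← lintegral_add_left]
        · refine lintegral_congr fun x => ?_
          rw [lintegral_add_left (by fun_prop)]
        · apply Measurable.lintegral_prod_right' (f := fun q : Eu n × Eu n => I q.1 * K (q.2 - q.1))
          fun_prop
    _ < ⊤ := by
        rw [e1, e2]
        exact ENNReal.add_lt_top.2 ⟨ENNReal.mul_lt_top hI1 hKf, ENNReal.mul_lt_top hI1 hKf⟩

lemma weak_transfer {n : ℕ} (hn : 1 ≤ n) {s p : ℝ} (hp : 1 < p) (hs0 : 0 < s) (hs : s < 1)
    {Ω : Set (Eu n)} {u f : Eu n → ℝ} (hu : IsLocalWeakSolution n p s Ω f u) {x₀ : Eu n} {R : ℝ}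
    (hR : 0 < R) (hsub : closedBall x₀ (2 * R) ⊆ Ω) (a : ℝ)
    (φ : Eu n → ℝ) (L : NNReal) (b : ℝ) (hφ : LipschitzWith L φ) (hb : b < 2)
    (hφ0 : ∀ x, b ≤ ‖x‖ → φ x = 0) :
    (∫ x, ∫ y, sgnPow (p - 1) ((u (x₀ + R • x) - a) - (u (x₀ + R • y) - a)) * (φ x - φ y) /
      dist x y ^ ((n:ℝ) + s * p)) =
    ∫ x in ball (0 : Eu n) 2, (R ^ (s * p) * f (x₀ + R • x)) * φ x := by
  set N := (n:ℝ) + s * p with hN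
  set ψ : Eu n → ℝ := fun y => φ (R⁻¹ • (y - x₀)) with hψ
  have hψaff : ∀ x, ψ (x₀ + R • x) = φ x := fun x => by
    simp only [hψ]
    rw [add_sub_cancel_left, smul_smul, inv_mul_cancel₀ hR.ne', one_smul]
  have hψL : LipschitzWith (L * ‖R⁻¹‖₊) ψ := by
    apply LipschitzWith.of_dist_le_mul
    intro x y
    refine (hφ.dist_le_mul _ _).trans (le_of_eq ?_)
    rw [dist_smul₀, dist_sub_right, NNReal.coe_mul, coe_nnnorm, mul_assoc]
  have hψ0 : ∀ x, x ∉ ball x₀ (2 * R) → ψ x = 0 := fun x hx => by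
    apply hφ0
    rw [mem_ball, not_lt, dist_eq_norm] at hx
    rw [norm_smul, norm_inv, Real.norm_of_nonneg hR.le, inv_mul_eq_div, le_div_iff₀ hR]
    nlinarith
  obtain ⟨hf1, hf2⟩ := test_finite hn hp hs0 hs hψL x₀ hψ0
  have hw := hu.2.2.2 ψ hψL.continuous.measurable
    ⟨closedBall x₀ (2 * R), isCompact_closedBall _ _, hsub,
      ae_of_all _ fun x hx => hψ0 x fun h => hx (ball_subset_closedBall h)⟩ hf1
    (by simpa [gagliardoE] using hf2)
  set F : Eu n → Eu n → ℝ := fun x y =>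
    |u x - u y| ^ (p - 2) * (u x - u y) * (ψ x - ψ y) / dist x y ^ N with hF
  have h1 : ∀ x y : Eu n, sgnPow (p - 1) ((u (x₀ + R • x) - a) - (u (x₀ + R • y) - a)) * (φ x - φ y) /
      dist x y ^ N = R ^ N * F (x₀ + R • x) (x₀ + R • y) := fun x y => by
    simp only [hF, sgnPow]
    rw [hψaff, hψaff, dist_add_left, dist_smul₀, Real.norm_of_nonneg hR.le, Real.mul_rpow hR.le dist_nonneg,
      sub_sub_sub_cancel_right, show p - 1 - 1 = p - 2 by ring]
    rcases eq_or_ne (dist x y ^ N) 0 with h0 | h0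
    · rw [h0]; simp
    · have : R ^ N ≠ 0 := by positivity
      field_simp
  have h2 : ∫ x, ∫ y, R ^ N * F (x₀ + R • x) (x₀ + R • y) = R ^ (s * p - n) * ∫ x, ∫ y, F x y := by
    simp only [integral_const_mul]
    have h3 : ∀ x : Eu n, ∫ y, F (x₀ + R • x) (x₀ + R • y) = R ^ (-(n:ℝ)) * ∫ y, F (x₀ + R • x) y :=
      fun x => int_affine x₀ hR (F (x₀ + R • x))
    simp only [h3, integral_const_mul]
    rw [int_affine x₀ hR (fun x => ∫ y, F x y), ← mul_assoc, ← mul_assoc, ← Real.rpow_add hR, ← Real.rpow_add hR]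
    congr 2
    rw [hN]; ring
  have h4 : ∫ x in Ω, f x * ψ x = ∫ x, f x * ψ x := by
    apply setIntegral_eq_integral_of_forall_compl_eq_zero
    intro x hx
    rw [hψ0 x fun h => hx (hsub (ball_subset_closedBall h)), mul_zero]
  have h5 : ∫ x in ball (0 : Eu n) 2, (R ^ (s * p) * f (x₀ + R • x)) * φ x =
      ∫ x, (R ^ (s * p) * f (x₀ + R • x)) * φ x := by
    apply setIntegral_eq_integral_of_forall_compl_eq_zero
    intro x hx
    rw [hφ0 x, mul_zero]
    rw [mem_ball_zero_iff] at hx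
    linarith
  simp only [h1]
  rw [h2, hw, h4, h5]
  have h6 : ∀ x, (R ^ (s * p) * f (x₀ + R • x)) * φ x =
      R ^ (s * p) * (fun y => f y * ψ y) (x₀ + R • x) := fun x => by
    simp only [hψaff, mul_assoc]
  simp only [h6]
  rw [integral_const_mul, int_affine x₀ hR (fun y => f y * ψ y), ← mul_assoc, ← Real.rpow_add hR, sub_eq_add_neg]

lemma poincare {n : ℕ} {s p : ℝ} (hp : 1 < p) (hs0 : 0 < s) {u : Eu n → ℝ} (hu : Measurable u)
    {x₀ : Eu n} {r : ℝ} (hr : 0 < r) (hi : IntegrableOn u (ball x₀ r)) :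
    ∫⁻ x in ball x₀ r, ENNReal.ofReal (|u x - ⨍ y in ball x₀ r, u y| ^ p) ≤
      ENNReal.ofReal ((2 * r) ^ ((n:ℝ) + s * p)) *
        ((volume (ball x₀ r))⁻¹ * gagliardoE n s p (ball x₀ r) u) := by
  have hp0 : 0 < p := by linarith
  set N := (n:ℝ) + s * p with hN
  have hN0 : 0 < N := by positivity
  set B := ball x₀ r with hB
  have hV0 : volume B ≠ 0 := (measure_ball_pos volume x₀ hr).ne'
  have hVt : volume B ≠ ⊤ := measure_ball_lt_top.ne
  set ν : Measure (Eu n) := ((volume.restrict B) univ)⁻¹ • volume.restrict B with hν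
  have hVu : (volume.restrict B) univ = volume B := by simp
  have hν1 : ν univ = 1 := by
    rw [hν, Measure.smul_apply, hVu, smul_eq_mul, ENNReal.inv_mul_cancel hV0 hVt]
  have : IsProbabilityMeasure ν := ⟨hν1⟩
  set a := ⨍ y in B, u y with ha
  have haν : a = ∫ y, u y ∂ν := rfl
  have hiν : Integrable u ν := hi.smul_measure (by rw [hVu]; exact ENNReal.inv_ne_top.2 hV0)
  have hpt : ∀ x ∈ B, ENNReal.ofReal (|u x - a| ^ p) ≤ (volume B)⁻¹ * ∫⁻ y in B,
      ENNReal.ofReal ((2 * r) ^ N) * ENNReal.ofReal (|u x - u y| ^ p / dist x y ^ N) := by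
    intro x hx
    have h1 : u x - a = ∫ y, (u x - u y) ∂ν := by
      rw [integral_sub (integrable_const _) hiν, haν]; simp
    rw [ofReal_abs_rpow hp0.le, h1]
    calc _ ≤ (∫⁻ y, ‖u x - u y‖ₑ ∂ν) ^ p := by
          gcongr; exact enorm_integral_le_lintegral_enorm _
      _ ≤ ν univ ^ (p - 1) * ∫⁻ y, ‖u x - u y‖ₑ ^ p ∂ν := jensen_pow (by fun_prop) hp.le
      _ = (volume B)⁻¹ * ∫⁻ y in B, ‖u x - u y‖ₑ ^ p := by
          rw [hν1, ENNReal.one_rpow, one_mul, hν, lintegral_smul_measure, hVu, smul_eq_mul]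
      _ ≤ _ := by
          refine mul_le_mul_right ?_ _
          refine setLIntegral_mono' measurableSet_ball fun y hy => ?_
          rw [← ofReal_abs_rpow hp0.le, ← ENNReal.ofReal_mul (by positivity)]
          apply ENNReal.ofReal_le_ofReal
          rcases eq_or_ne x y with rfl | hne
          · simp [Real.zero_rpow hp0.ne']
          have hd : 0 < dist x y := dist_pos.2 hne
          have hd2 : dist x y ≤ 2 * r := by
            have := dist_triangle_right x y x₀
            rw [hB, mem_ball] at hx hy
            linarith
          rw [mul_div_assoc', le_div_iff₀ (by positivity), mul_comm]
          gcongr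
  refine (setLIntegral_mono' measurableSet_ball hpt).trans (le_of_eq ?_)
  simp only [lintegral_const_mul' _ _ ENNReal.ofReal_ne_top]
  rw [lintegral_const_mul' _ _ (ENNReal.inv_ne_top.2 hV0), lintegral_const_mul' _ _ ENNReal.ofReal_ne_top, gagliardoE]
  ring

lemma grad_scale {n : ℕ} {u : Eu n → ℝ} {Ω : Set (Eu n)} (hΩ : IsOpen Ω)
    (hcd : ContDiffOn ℝ 1 u Ω) {x₀ : Eu n} {R : ℝ} (hR : 0 < R)
    (hsub : closedBall x₀ (2 * R) ⊆ Ω) (a m : ℝ) (hm : 0 < m) :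
    ENNReal.ofReal (R ^ (n:ℝ)) * Phi (fun x => u (x₀ + R • x) - a) m 1 =
      ENNReal.ofReal (R ^ m) * ∫⁻ x in ball x₀ R, ENNReal.ofReal (‖gradient u x‖ ^ m) := by
  have hfm := measurable_fderiv ℝ u
  have h1 := lint_affine_set x₀ hR (F := fun x => ENNReal.ofReal (‖fderiv ℝ u x‖ ^ m)) (by fun_prop)
    measurableSet_ball measurableSet_ball (mem_ball_affine x₀ hR 1)
  rw [one_mul] at h1
  have h2 : Phi (fun x => u (x₀ + R • x) - a) m 1 = ENNReal.ofReal (R ^ m) *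
      ∫⁻ x in ball (0 : Eu n) 1, ENNReal.ofReal (‖fderiv ℝ u (x₀ + R • x)‖ ^ m) := by
    unfold Phi
    rw [← lintegral_const_mul' _ _ ENNReal.ofReal_ne_top]
    refine setLIntegral_congr_fun measurableSet_ball fun x hx => ?_
    have hxΩ : x₀ + R • x ∈ Ω := hsub (ball_subset_closedBall
      (ball_subset_ball (by linarith) ((mem_ball_affine x₀ hR 1 x).1 hx)))
    have hd : HasFDerivAt u (fderiv ℝ u (x₀ + R • x)) (x₀ + R • x) :=
      ((hcd.differentiableOn (by norm_num)).differentiableAt (hΩ.mem_nhds hxΩ)).hasFDerivAt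
    have haff : HasFDerivAt (fun x : Eu n => x₀ + R • x) (R • ContinuousLinearMap.id ℝ (Eu n)) x :=
      ((hasFDerivAt_id x).const_smul R).const_add x₀
    have h3 := ((hd.comp x haff).sub_const a).fderiv
    have h4 : fderiv ℝ (fun x => u (x₀ + R • x) - a) x = R • fderiv ℝ u (x₀ + R • x) := by
      rw [show (fun x => u (x₀ + R • x) - a) = fun x => (u ∘ fun x => x₀ + R • x) x - a from rfl, h3]
      ext z
      simp
    rw [h4, norm_smul, Real.norm_of_nonneg hR.le, Real.mul_rpow hR.le (norm_nonneg _),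
      ENNReal.ofReal_mul (by positivity)]
  have h5 : ∀ x, ‖gradient u x‖ = ‖fderiv ℝ u x‖ := fun x => by
    unfold gradient; exact LinearIsometryEquiv.norm_map _ _
  simp only [h5]
  rw [h2, h1]
  have h6 : ENNReal.ofReal (R ^ (n:ℝ)) * ENNReal.ofReal (R ^ (-(n:ℝ))) = 1 := by
    rw [← ENNReal.ofReal_mul (by positivity), ← Real.rpow_add hR]; simp
  calc _ = (ENNReal.ofReal (R ^ (n:ℝ)) * ENNReal.ofReal (R ^ (-(n:ℝ)))) * (ENNReal.ofReal (R ^ m) *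
      ∫⁻ x in ball x₀ R, ENNReal.ofReal (‖fderiv ℝ u x‖ ^ m)) := by ring
    _ = _ := by rw [h6, one_mul]

lemma tail_scale {n : ℕ} {s p : ℝ} (hp : 1 < p) (hs0 : 0 < s) {w : Eu n → ℝ} (hw : Measurable w)
    {x₀ : Eu n} {R : ℝ} (hR : 0 < R) :
    ∫⁻ x in (ball (0 : Eu n) 2)ᶜ, ENNReal.ofReal (|w (x₀ + R • x)| ^ (p - 1) / ‖x‖ ^ ((n:ℝ) + s * p)) ≤
      tailE n s p w x₀ (2 * R) ^ (p - 1) := by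
  set N := (n:ℝ) + s * p with hN
  have h1 := lint_affine_set x₀ hR (F := fun x => ENNReal.ofReal (|w x| ^ (p - 1) / dist x x₀ ^ N)) (by fun_prop)
    measurableSet_ball.compl (measurableSet_ball (x := x₀) (ε := 2 * R)).compl
    (fun x => not_congr (mem_ball_affine x₀ hR 2 x))
  have h2 : tailE n s p w x₀ (2 * R) ^ (p - 1) = ENNReal.ofReal ((2 * R) ^ (s * p)) *
      ∫⁻ x in (ball x₀ (2 * R))ᶜ, ENNReal.ofReal (|w x| ^ (p - 1) / dist x x₀ ^ N) := by
    rw [tailE, ← ENNReal.rpow_mul, one_div_mul_cancel (by linarith), ENNReal.rpow_one]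
  rw [h2]
  calc _ = ∫⁻ x in (ball (0 : Eu n) 2)ᶜ, ENNReal.ofReal (R ^ N) *
        ENNReal.ofReal (|w (x₀ + R • x)| ^ (p - 1) / dist (x₀ + R • x) x₀ ^ N) := by
        refine lintegral_congr fun x => ?_
        rw [← ENNReal.ofReal_mul (by positivity), dist_eq_norm, add_sub_cancel_left, norm_smul,
          Real.norm_of_nonneg hR.le, Real.mul_rpow hR.le (norm_nonneg _)]
        congr 1
        rcases eq_or_ne (‖x‖ ^ N) 0 with h0 | h0
        · rw [h0]; simp
        · have : R ^ N ≠ 0 := by positivity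
          field_simp
    _ = ENNReal.ofReal (R ^ N) * (ENNReal.ofReal (R ^ (-(n:ℝ))) *
          ∫⁻ x in (ball x₀ (2 * R))ᶜ, ENNReal.ofReal (|w x| ^ (p - 1) / dist x x₀ ^ N)) := by
        rw [lintegral_const_mul' _ _ ENNReal.ofReal_ne_top, h1]
    _ = ENNReal.ofReal (R ^ (s * p)) *
          ∫⁻ x in (ball x₀ (2 * R))ᶜ, ENNReal.ofReal (|w x| ^ (p - 1) / dist x x₀ ^ N) := by
        rw [← mul_assoc, ← ENNReal.ofReal_mul (by positivity), ← Real.rpow_add hR, hN]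
        congr 3; ring
    _ ≤ _ := by
        gcongr
        linarith

lemma f_scale {n : ℕ} {s p q : ℝ} (hp : 1 < p) {f : Eu n → ℝ} (hf : Measurable f)
    {x₀ : Eu n} {R : ℝ} (hR : 0 < R) :
    ∫⁻ x in ball (0 : Eu n) 2, ENNReal.ofReal (|R ^ (s * p) * f (x₀ + R • x)| ^ (p * q / (p - 1))) =
      (ENNReal.ofReal (2 ^ (n:ℝ)) * volume (ball (0 : Eu n) 1)) * (ENNReal.ofReal (R ^ (s * p * q)) *
        ((volume (ball x₀ (2 * R)))⁻¹ * ∫⁻ x in ball x₀ (2 * R),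
          ENNReal.ofReal (|R ^ s * f x| ^ (p * q / (p - 1))))) := by
  set r := p * q / (p - 1) with hr
  have hp1 : p - 1 ≠ 0 := by linarith
  have h1 := lint_affine_set x₀ hR (F := fun x => ENNReal.ofReal (|R ^ s * f x| ^ r)) (by fun_prop)
    measurableSet_ball (measurableSet_ball (x := x₀) (ε := 2 * R)) (mem_ball_affine x₀ hR 2)
  have hV0 : volume (ball x₀ (2 * R)) ≠ 0 := (measure_ball_pos volume x₀ (by positivity)).ne'
  have hVt : volume (ball x₀ (2 * R)) ≠ ⊤ := measure_ball_lt_top.ne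
  have hV : ENNReal.ofReal (2 ^ (n:ℝ)) * volume (ball (0 : Eu n) 1) =
      ENNReal.ofReal (R ^ (-(n:ℝ))) * volume (ball x₀ (2 * R)) := by
    rw [vol_ball x₀ (by positivity : 0 < 2 * R), ← mul_assoc, ← ENNReal.ofReal_mul (by positivity)]
    congr 2
    rw [Real.mul_rpow (by norm_num) hR.le, mul_left_comm, ← Real.rpow_add hR]; simp
  set I := ∫⁻ x in ball x₀ (2 * R), ENNReal.ofReal (|R ^ s * f x| ^ r) with hI
  calc _ = ∫⁻ x in ball (0 : Eu n) 2, ENNReal.ofReal (R ^ (s * p * q)) *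
        ENNReal.ofReal (|R ^ s * f (x₀ + R • x)| ^ r) := by
        refine lintegral_congr fun x => ?_
        rw [← ENNReal.ofReal_mul (by positivity), abs_mul, abs_mul, abs_of_pos (by positivity : 0 < R ^ (s * p)),
          abs_of_pos (by positivity : 0 < R ^ s), Real.mul_rpow (by positivity) (abs_nonneg _),
          Real.mul_rpow (by positivity) (abs_nonneg _), ← Real.rpow_mul hR.le, ← Real.rpow_mul hR.le, ← mul_assoc,
          ← Real.rpow_add hR]
        congr 3
        rw [hr]; field_simp; ring
    _ = ENNReal.ofReal (R ^ (s * p * q)) * (ENNReal.ofReal (R ^ (-(n:ℝ))) * I) := by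
        rw [lintegral_const_mul' _ _ ENNReal.ofReal_ne_top, h1]
    _ = (volume (ball x₀ (2 * R)) * (volume (ball x₀ (2 * R)))⁻¹) *
          (ENNReal.ofReal (R ^ (s * p * q)) * (ENNReal.ofReal (R ^ (-(n:ℝ))) * I)) := by
        rw [ENNReal.mul_inv_cancel hV0 hVt, one_mul]
    _ = _ := by rw [hV]; ring

set_option maxHeartbeats 1000000 in
lemma main_pos (n : ℕ) (hn : 1 ≤ n) (p s q : ℝ) (hp : 1 < p)
    (hs₁ : (p - 1) / p < s) (hs₂ : s < 1) (hq : 1 < q) :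
    ∃ c : ℝ, 0 < c ∧
      ∀ (Ω : Set (Eu n)) (u f : Eu n → ℝ),
        IsOpen Ω → Measurable f →
        IsLocalWeakSolution n p s Ω f u →
        ContDiffOn ℝ 1 u Ω →
        ∀ (x₀ : Eu n) (R : ℝ), 0 < R →
          closedBall x₀ (2 * R) ⊆ Ω →
          ((volume (ball x₀ R))⁻¹ *
              ∫⁻ x in ball x₀ R, ENNReal.ofReal (‖gradient u x‖ ^ (p * q))) ^ (1 / q) ≤
            ENNReal.ofReal (c * R ^ (-((1 - s) * p))) *
                ((volume (ball x₀ (2 * R)))⁻¹ * gagliardoE n s p (ball x₀ (2 * R)) u) +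
              ENNReal.ofReal (c * R ^ (-((1 - s) * p))) *
                ((volume (ball x₀ (2 * R)))⁻¹ *
                  ∫⁻ x in ball x₀ (2 * R),
                    ENNReal.ofReal (|R ^ s * f x| ^ (p * q / (p - 1)))) ^ (1 / q) +
              ENNReal.ofReal (c * R ^ (-p)) *
                tailE n s p (fun x => u x - ⨍ y in ball x₀ (2 * R), u y) x₀ (2 * R) ^ p := by
  have hp0 : 0 < p := by linarith
  have hq0 : 0 < q := by linarith
  have hs0 : 0 < s := lt_trans (div_pos (by linarith) hp0) hs₁
  have hsp : p - 1 < s * p := by rwa [div_lt_iff₀ hp0] at hs₁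
  obtain ⟨C, hC, hunit⟩ := unit_bound hn (θ := p - 1) (β := p * q - p + 1) (N := n + s * p)
    (by linarith) (by nlinarith) (by linarith) (by nlinarith)
  have e1 : p - 1 + (p * q - p + 1) = p * q := by ring
  have e2 : p - 1 + 1 = p := by ring
  simp only [e1, e2] at hunit
  set ω := volume (ball (0 : Eu n) 1) with hω
  have hωt : ω ≠ ⊤ := measure_ball_lt_top.ne
  have hω0 : ω ≠ 0 := (measure_ball_pos volume 0 one_pos).ne'
  set N := (n:ℝ) + s * p with hN
  have hN0 : 0 < N := by positivity
  have hC1t : (ω⁻¹ * C) ^ (1 / q) ≠ ⊤ :=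
    ENNReal.rpow_ne_top_of_nonneg (by positivity) (ENNReal.mul_ne_top (ENNReal.inv_ne_top.2 hω0) hC)
  set c1 := ((ω⁻¹ * C) ^ (1 / q)).toReal + 1 with hc1
  have hc10 : 0 < c1 := by positivity
  have hCc1 : (ω⁻¹ * C) ^ (1 / q) ≤ ENNReal.ofReal c1 := by
    rw [ENNReal.le_ofReal_iff_toReal_le hC1t hc10.le]; linarith
  have hK1t : (ENNReal.ofReal (2 ^ (n:ℝ)) * ω) ^ (1 / q) ≠ ⊤ :=
    ENNReal.rpow_ne_top_of_nonneg (by positivity) (ENNReal.mul_ne_top ENNReal.ofReal_ne_top hωt)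
  set k := 1 + 4 ^ N + ((ENNReal.ofReal (2 ^ (n:ℝ)) * ω) ^ (1 / q)).toReal with hk
  have hk1 : 1 ≤ k := by
    have : 0 ≤ ((ENNReal.ofReal (2 ^ (n:ℝ)) * ω) ^ (1 / q)).toReal := ENNReal.toReal_nonneg
    have : (0:ℝ) ≤ 4 ^ N := by positivity
    linarith
  have hk4 : ENNReal.ofReal (4 ^ N) ≤ ENNReal.ofReal k := by
    apply ENNReal.ofReal_le_ofReal
    have : 0 ≤ ((ENNReal.ofReal (2 ^ (n:ℝ)) * ω) ^ (1 / q)).toReal := ENNReal.toReal_nonneg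
    linarith
  have hkK : (ENNReal.ofReal (2 ^ (n:ℝ)) * ω) ^ (1 / q) ≤ ENNReal.ofReal k := by
    rw [ENNReal.le_ofReal_iff_toReal_le hK1t (by linarith)]
    have : (0:ℝ) ≤ 4 ^ N := by positivity
    linarith
  refine ⟨c1 * k, by positivity, ?_⟩
  intro Ω u f hΩ hf hu hcd x₀ R hR hsub
  have hum : Measurable u := hu.1
  set V := volume (ball x₀ (2 * R)) with hV
  set a := ⨍ y in ball x₀ (2 * R), u y with ha
  set G := V⁻¹ * gagliardoE n s p (ball x₀ (2 * R)) u with hG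
  set Y := V⁻¹ * ∫⁻ x in ball x₀ (2 * R), ENNReal.ofReal (|R ^ s * f x| ^ (p * q / (p - 1))) with hY
  set T := tailE n s p (fun x => u x - a) x₀ (2 * R) with hT
  set ρ := ENNReal.ofReal (R ^ (s * p)) with hρ
  set D := ENNReal.ofReal k * (ρ * G) + ENNReal.ofReal k * (ρ * Y ^ (1 / q)) + T ^ p with hD
  -- data bounds
  have hi : IntegrableOn u (ball x₀ (2 * R)) :=
    ((hcd.continuousOn.mono hsub).integrableOn_compact (isCompact_closedBall _ _)).mono_set ball_subset_closedBall
  have b1 : ∫⁻ x in ball (0 : Eu n) 2, ENNReal.ofReal (|u (x₀ + R • x) - a| ^ p) ≤ D := by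
    rw [lint_affine_set x₀ hR (F := fun x => ENNReal.ofReal (|u x - a| ^ p)) (by fun_prop)
      measurableSet_ball (measurableSet_ball (x := x₀) (ε := 2 * R)) (mem_ball_affine x₀ hR 2)]
    calc _ ≤ ENNReal.ofReal (R ^ (-(n:ℝ))) * (ENNReal.ofReal ((2 * (2 * R)) ^ N) * G) := by
          refine mul_le_mul_right ?_ _
          exact poincare hp hs0 hum (by positivity) hi
      _ = ENNReal.ofReal (4 ^ N) * (ρ * G) := by
          clear_value G
          rw [hρ, ← mul_assoc (ENNReal.ofReal _), ← mul_assoc (ENNReal.ofReal (4 ^ N)), ← ENNReal.ofReal_mul (by positivity),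
            ← ENNReal.ofReal_mul (by positivity)]
          congr 2
          rw [show 2 * (2 * R) = 4 * R by ring, Real.mul_rpow (by norm_num) hR.le, mul_left_comm, ← Real.rpow_add hR]
          congr 2
          rw [hN]; ring
      _ ≤ ENNReal.ofReal k * (ρ * G) := by gcongr
      _ ≤ D := le_self_add.trans le_self_add
  have b2 : ∫⁻ x in (ball (0 : Eu n) 2)ᶜ, ENNReal.ofReal (|u (x₀ + R • x) - a| ^ (p - 1) / ‖x‖ ^ N) ≤ T ^ (p - 1) :=
    tail_scale hp hs0 (w := fun x => u x - a) (by fun_prop) hR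
  have b3 : (∫⁻ x in ball (0 : Eu n) 2, ENNReal.ofReal (|R ^ (s * p) * f (x₀ + R • x)| ^ (p * q / (p - 1)))) ≤
      D ^ q := by
    rw [f_scale hp hf hR]
    calc _ = ((ENNReal.ofReal (2 ^ (n:ℝ)) * ω) ^ (1 / q) * (ρ * Y ^ (1 / q))) ^ q := by
          rw [ENNReal.mul_rpow_of_nonneg _ _ hq0.le, ENNReal.mul_rpow_of_nonneg _ _ hq0.le,
            ← ENNReal.rpow_mul, ← ENNReal.rpow_mul, one_div_mul_cancel hq0.ne', ENNReal.rpow_one, ENNReal.rpow_one,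
            hρ, ENNReal.ofReal_rpow_of_nonneg (by positivity) hq0.le, ← Real.rpow_mul hR.le]
      _ ≤ (ENNReal.ofReal k * (ρ * Y ^ (1 / q))) ^ q := by gcongr
      _ ≤ D ^ q := by
          apply ENNReal.rpow_le_rpow _ hq0.le
          exact le_add_self.trans le_self_add
  -- the estimate in terms of D
  have hgs := grad_scale hΩ hcd hR hsub a (p * q) (by positivity)
  have key : ∀ A : ℝ, 0 < A → D ≤ ENNReal.ofReal (A ^ p) →
      ((volume (ball x₀ R))⁻¹ * ∫⁻ x in ball x₀ R, ENNReal.ofReal (‖gradient u x‖ ^ (p * q))) ^ (1 / q) ≤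
        ENNReal.ofReal (c1 * R ^ (-p)) * ENNReal.ofReal (A ^ p) := by
    intro A hA hDA
    have hTA : T ^ (p - 1) ≤ ENNReal.ofReal (A ^ (p - 1)) := by
      have h1 : T ^ p ≤ ENNReal.ofReal A ^ p := by
        rw [ENNReal.ofReal_rpow_of_nonneg hA.le hp0.le]; exact le_add_self.trans hDA
      rw [← ENNReal.ofReal_rpow_of_nonneg hA.le (by linarith)]
      exact ENNReal.rpow_le_rpow ((ENNReal.rpow_le_rpow_iff hp0).1 h1) (by linarith)
    have h2 := hunit {x | x₀ + R • x ∈ Ω} (fun x => u (x₀ + R • x) - a) (fun x => R ^ (s * p) * f (x₀ + R • x))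
      (hΩ.preimage (by fun_prop)) (fun x hx => hsub (by
        rw [mem_closedBall_zero_iff] at hx
        rw [mem_closedBall, dist_eq_norm, add_sub_cancel_left, norm_smul, Real.norm_of_nonneg hR.le]
        nlinarith)) (by fun_prop) (by fun_prop)
      (by
        have h : ContDiffOn ℝ 1 (u ∘ fun x : Eu n => x₀ + R • x) {x | x₀ + R • x ∈ Ω} :=
          hcd.comp (by fun_prop) (fun x hx => hx)
        exact h.sub contDiffOn_const)
      (weak_transfer hn hp hs0 hs₂ hu hR hsub a) A hA
      (b3.trans (by
        rw [Real.rpow_mul hA.le, ← ENNReal.ofReal_rpow_of_nonneg (by positivity) hq0.le]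
        exact ENNReal.rpow_le_rpow hDA hq0.le))
      (b1.trans hDA) (b2.trans hTA)
    set J := ∫⁻ x in ball x₀ R, ENNReal.ofReal (‖gradient u x‖ ^ (p * q)) with hJ
    have h3 : (volume (ball x₀ R))⁻¹ * J ≤
        (ω⁻¹ * C) * (ENNReal.ofReal (R ^ (-(p * q))) * ENNReal.ofReal (A ^ (p * q))) := by
      have h4 : J = ENNReal.ofReal (R ^ (-(p * q))) * (ENNReal.ofReal (R ^ (n:ℝ)) *
          Phi (fun x => u (x₀ + R • x) - a) (p * q) 1) := by
        rw [hgs, ← mul_assoc, ← ENNReal.ofReal_mul (by positivity), ← Real.rpow_add hR]; simp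
      have h5 : ENNReal.ofReal (R ^ (n:ℝ)) ≠ 0 := (ENNReal.ofReal_pos.2 (by positivity)).ne'
      rw [h4, vol_ball x₀ hR, ENNReal.mul_inv (Or.inl h5) (Or.inl ENNReal.ofReal_ne_top)]
      calc _ = ((ENNReal.ofReal (R ^ (n:ℝ)))⁻¹ * ENNReal.ofReal (R ^ (n:ℝ))) * (ω⁻¹ *
            (ENNReal.ofReal (R ^ (-(p * q))) * Phi (fun x => u (x₀ + R • x) - a) (p * q) 1)) := by ring
        _ = ω⁻¹ * (ENNReal.ofReal (R ^ (-(p * q))) * Phi (fun x => u (x₀ + R • x) - a) (p * q) 1) := by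
            rw [ENNReal.inv_mul_cancel h5 ENNReal.ofReal_ne_top, one_mul]
        _ ≤ ω⁻¹ * (ENNReal.ofReal (R ^ (-(p * q))) * (C * ENNReal.ofReal (A ^ (p * q)))) := by gcongr
        _ = _ := by ring
    refine (ENNReal.rpow_le_rpow h3 (by positivity : 0 ≤ 1 / q)).trans ?_
    rw [ENNReal.mul_rpow_of_nonneg (ω⁻¹ * C) _ (by positivity), ENNReal.mul_rpow_of_nonneg (ENNReal.ofReal _) _ (by positivity),
      ENNReal.ofReal_rpow_of_nonneg (by positivity) (by positivity),
      ENNReal.ofReal_rpow_of_nonneg (by positivity) (by positivity), ← Real.rpow_mul hR.le, ← Real.rpow_mul hA.le,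
      show -(p * q) * (1 / q) = -p by field_simp, show p * q * (1 / q) = p by field_simp,
      ENNReal.ofReal_mul hc10.le, mul_assoc]
    gcongr
  have hfin : ((volume (ball x₀ R))⁻¹ * ∫⁻ x in ball x₀ R, ENNReal.ofReal (‖gradient u x‖ ^ (p * q))) ^ (1 / q) ≤
        ENNReal.ofReal (c1 * R ^ (-p)) * D := by
    have hm0 : 0 < c1 * R ^ (-p) := by positivity
    apply ENNReal.le_of_forall_pos_le_add
    intro ε hε hlt
    have hDt : D ≠ ⊤ := by
      intro h
      rw [h, ENNReal.mul_top (ENNReal.ofReal_pos.2 hm0).ne'] at hlt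
      exact lt_irrefl _ hlt
    have hε' : 0 < (ε:ℝ) / (c1 * R ^ (-p)) := div_pos hε hm0
    have hd : 0 ≤ D.toReal := ENNReal.toReal_nonneg
    set A := (D.toReal + ε / (c1 * R ^ (-p))) ^ (1 / p) with hA
    have hAp : A ^ p = D.toReal + ε / (c1 * R ^ (-p)) := by
      rw [hA, ← Real.rpow_mul (by positivity), one_div_mul_cancel hp0.ne', Real.rpow_one]
    have hAD : ENNReal.ofReal (A ^ p) = D + ENNReal.ofReal (ε / (c1 * R ^ (-p))) := by
      rw [hAp, ENNReal.ofReal_add hd hε'.le, ENNReal.ofReal_toReal hDt]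
    refine (key A (by positivity) (by rw [hAD]; exact le_self_add)).trans (le_of_eq ?_)
    rw [hAD, mul_add, ← ENNReal.ofReal_mul hm0.le, mul_div_cancel₀ _ hm0.ne', ENNReal.ofReal_coe_nnreal]
  refine hfin.trans ?_
  have hconst : ENNReal.ofReal (c1 * R ^ (-p)) * ENNReal.ofReal k * ρ =
      ENNReal.ofReal (c1 * k * R ^ (-((1 - s) * p))) := by
    rw [hρ, ← ENNReal.ofReal_mul (by positivity), ← ENNReal.ofReal_mul (by positivity)]
    congr 1
    rw [show -((1 - s) * p) = -p + s * p by ring, Real.rpow_add hR]; ring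
  calc ENNReal.ofReal (c1 * R ^ (-p)) * D =
      (ENNReal.ofReal (c1 * R ^ (-p)) * ENNReal.ofReal k * ρ) * G +
      (ENNReal.ofReal (c1 * R ^ (-p)) * ENNReal.ofReal k * ρ) * Y ^ (1 / q) +
      ENNReal.ofReal (c1 * R ^ (-p)) * T ^ p := by rw [hD]; ring
    _ ≤ _ := by
      rw [hconst]
      refine add_le_add le_rfl ?_
      gcongr
      nlinarith

theorem gradient_CZ_estimate_seminorm (n : ℕ) (p s q : ℝ) (hp : 1 < p)
    (hs₁ : (p - 1) / p < s) (hs₂ : s < 1) (hq : 1 < q) :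
    ∃ c : ℝ, 0 < c ∧
      ∀ (Ω : Set (EuclideanSpace ℝ (Fin n))) (u f : EuclideanSpace ℝ (Fin n) → ℝ),
        IsOpen Ω → Bornology.IsBounded Ω →
        MemLploc n (p * q / (p - 1)) Ω f →
        IsLocalWeakSolution n p s Ω f u →
        ContDiffOn ℝ 1 u Ω →
        ∀ (x₀ : EuclideanSpace ℝ (Fin n)) (R : ℝ), 0 < R →
          closedBall x₀ (2 * R) ⊆ Ω →
          ((volume (ball x₀ R))⁻¹ *
              ∫⁻ x in ball x₀ R, ENNReal.ofReal (‖gradient u x‖ ^ (p * q))) ^ (1 / q) ≤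
            ENNReal.ofReal (c * R ^ (-((1 - s) * p))) *
                ((volume (ball x₀ (2 * R)))⁻¹ * gagliardoE n s p (ball x₀ (2 * R)) u) +
              ENNReal.ofReal (c * R ^ (-((1 - s) * p))) *
                ((volume (ball x₀ (2 * R)))⁻¹ *
                  ∫⁻ x in ball x₀ (2 * R),
                    ENNReal.ofReal (|R ^ s * f x| ^ (p * q / (p - 1)))) ^ (1 / q) +
              ENNReal.ofReal (c * R ^ (-p)) *
                tailE n s p (fun x => u x - ⨍ y in ball x₀ (2 * R), u y) x₀ (2 * R) ^ p := by
  rcases Nat.eq_zero_or_pos n with h0 | hn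
  · subst h0
    refine ⟨1, one_pos, ?_⟩
    intro Ω u f _ _ _ _ _ x₀ R _ _
    have h1 : ∀ x, ENNReal.ofReal (‖gradient u x‖ ^ (p * q)) = 0 := by
      intro x
      rw [Subsingleton.elim (gradient u x) 0, norm_zero, Real.zero_rpow (by positivity), ENNReal.ofReal_zero]
    simp only [h1, lintegral_zero, mul_zero]
    rw [ENNReal.zero_rpow_of_pos (by positivity)]
    exact zero_le
  · obtain ⟨c, hc, h⟩ := main_pos n hn p s q hp hs₁ hs₂ hq
    exact ⟨c, hc, fun Ω u f hΩ _ hf hu hcd x₀ R hR hsub => h Ω u f hΩ hf.1 hu hcd x₀ R hR hsub⟩
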